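/- For every integer k ≥ 3 and every δ > 0, there exist c > 0, η > 0 and N₀ such that the following holds for all N ≥ N₀: if ν : Z_N → ℝ_{≥0} satisfies the k-linear forms condition within η, and f : Z_N → ℝ_{≥0} satisfies 0 ≤ f(x) ≤ ν(x) for all x ∈ Z_N and E[f(x) | x ∈ Z_N] ≥ δ, then E[f(x)·f(x+d)·f(x+2d)···f(x+(k−1)d) | x, d ∈ Z_N] ≥ c. -/

import Mathlib

open Finset

/-- The average (expectation with respect to the uniform measure) of `f` over `α`. -/
noncomputable def avg {α : Type*} [Fintype α] (f : α → ℝ) : ℝ :=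
  (∑ x, f x) / (Fintype.card α)

/-- The linear form `∑_{i} (i - j) · x_i^{(ω_i)}` in `ZMod N`, where for `i ≠ j` the
variable `x_i^{(ω_i)}` equals `x₁ i` if `ω i` and `x₀ i` otherwise (the `i = j` term has
coefficient zero). -/
noncomputable def kForm (k N : ℕ) [NeZero N] (j : Fin k)
    (x₀ x₁ : Fin k → ZMod N) (ω : {i : Fin k // i ≠ j} → Bool) : ZMod N :=
  ∑ i : Fin k, ((((i : ℕ) : ℤ) - ((j : ℕ) : ℤ) : ℤ) : ZMod N) *
    (if h : i = j then 0 else if ω ⟨i, h⟩ then x₁ i else x₀ i)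

/-- `ν : ZMod N → ℝ` satisfies the `k`-linear forms condition within `η`: for every choice
of exponents `n (j, ω) ∈ {0,1}` (indexed by `j ∈ [k]` and `ω ∈ {0,1}^{[k]∖{j}}`),
`|E[∏_{j} ∏_{ω} ν(∑_i (i-j) x_i^{(ω_i)})^{n_{j,ω}}] - 1| ≤ η`, the expectation being over
uniform independent `x₁⁽⁰⁾, x₁⁽¹⁾, …, x_k⁽⁰⁾, x_k⁽¹⁾ ∈ ZMod N`. -/
noncomputable def kLinearFormsCondition (k N : ℕ) [NeZero N] (ν : ZMod N → ℝ) (η : ℝ) :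
    Prop :=
  ∀ n : (j : Fin k) → ({i : Fin k // i ≠ j} → Bool) → Bool,
    |avg (fun x : (Fin k → ZMod N) × (Fin k → ZMod N) =>
      ∏ j : Fin k, ∏ ω : {i : Fin k // i ≠ j} → Bool,
        if n j ω then ν (kForm k N j x.1 x.2 ω) else 1) - 1| ≤ η

/-!
Szemerédi's theorem is deduced from the density Hales–Jewett theorem, proved by density increment
on subspaces following Dodos, Kanellopoulos and Tyros. The relative version transfers it to `f ≤ ν`
following Conlon, Fox and Zhao: the linear forms condition makes `ν - 1` small in a cut norm, so
that `f` is close in this norm to some `f'` with values in `[0, 1]`, and the progression averages of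
`f` and `f'` nearly agree, by replacing one factor at a time. A factor bounded only by `ν` is
compared with its dense counterpart after averaging over the coordinate its form does not see:
by the linear forms condition the average of the other factors is then essentially bounded.
-/

namespace RelativeSzemeredi

open Combinatorics
open scoped BigOperators

/-! ### Averages -/

section Avg
variable {α β : Type*} [Fintype α] [Fintype β]

lemma avg_eq_expect (f : α → ℝ) : avg f = 𝔼 x, f x :=
  (Fintype.expect_eq_sum_div_card f).symm

lemma avg_const [Nonempty α] (c : ℝ) : avg (fun _ : α => c) = c := by
  rw [avg_eq_expect, Fintype.expect_const]

lemma avg_add (f g : α → ℝ) : avg (fun x => f x + g x) = avg f + avg g := by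
  simp only [avg_eq_expect, expect_add_distrib]

lemma avg_sub (f g : α → ℝ) : avg (fun x => f x - g x) = avg f - avg g := by
  simp only [avg_eq_expect, expect_sub_distrib]

lemma avg_neg (f : α → ℝ) : avg (fun x => -f x) = -avg f := by
  simp only [avg_eq_expect, expect_neg_distrib]

lemma avg_const_mul (c : ℝ) (f : α → ℝ) : avg (fun x => c * f x) = c * avg f := by
  simp only [avg_eq_expect, mul_expect]

lemma avg_mul_const (c : ℝ) (f : α → ℝ) : avg (fun x => f x * c) = avg f * c := by
  simp only [avg_eq_expect, expect_mul]

lemma avg_sum {ι : Type*} (s : Finset ι) (f : ι → α → ℝ) :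
    avg (fun x => ∑ i ∈ s, f i x) = ∑ i ∈ s, avg (f i) := by
  simp only [avg_eq_expect, expect_sum_comm]

lemma avg_mono {f g : α → ℝ} (h : ∀ x, f x ≤ g x) : avg f ≤ avg g := by
  simpa only [avg_eq_expect] using expect_le_expect fun x _ => h x

lemma avg_nonneg {f : α → ℝ} (h : ∀ x, 0 ≤ f x) : 0 ≤ avg f := by
  simpa only [avg_eq_expect] using expect_nonneg fun x _ => h x

lemma avg_le [Nonempty α] {f : α → ℝ} {c : ℝ} (h : ∀ x, f x ≤ c) : avg f ≤ c :=
  (avg_mono h).trans_eq (avg_const c)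

lemma le_avg [Nonempty α] {f : α → ℝ} {c : ℝ} (h : ∀ x, c ≤ f x) : c ≤ avg f :=
  (avg_const c).symm.trans_le (avg_mono h)

lemma abs_avg_le_avg_abs (f : α → ℝ) : |avg f| ≤ avg fun x => |f x| := by
  simpa only [avg_eq_expect] using abs_expect_le univ f

lemma abs_avg_le [Nonempty α] {f : α → ℝ} {c : ℝ} (h : ∀ x, |f x| ≤ c) : |avg f| ≤ c :=
  (abs_avg_le_avg_abs f).trans (avg_le h)

lemma exists_avg_le [Nonempty α] (f : α → ℝ) : ∃ x, avg f ≤ f x := by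
  obtain ⟨x, -, hx⟩ := exists_le_of_le_expect univ_nonempty (avg_eq_expect f).le
  exact ⟨x, hx⟩

lemma avg_comp_equiv (e : α ≃ β) (f : β → ℝ) : avg (fun x => f (e x)) = avg f := by
  simpa only [avg_eq_expect] using Fintype.expect_equiv e _ _ fun _ => rfl

lemma avg_prod (f : α × β → ℝ) : avg f = avg fun a => avg fun b => f (a, b) := by
  simpa only [avg_eq_expect, univ_product_univ] using expect_product univ univ f

lemma avg_comm (f : α → β → ℝ) :
    (avg fun a => avg fun b => f a b) = avg fun b => avg fun a => f a b := by
  simpa only [avg_eq_expect] using expect_comm univ univ f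

lemma avg_sumElim {X : Type*} [Fintype X] [DecidableEq α] [DecidableEq β] (F : (α ⊕ β → X) → ℝ) :
    avg F = avg fun x : α → X => avg fun y : β → X => F (Sum.elim x y) := by
  rw [← avg_comp_equiv (Equiv.sumArrowEquivProdArrow α β X).symm F, avg_prod]
  rfl

lemma avg_mul_sq_le (f g : α → ℝ) :
    (avg fun x => f x * g x) ^ 2 ≤ (avg fun x => f x ^ 2) * avg fun x => g x ^ 2 := by
  simpa only [avg_eq_expect] using expect_mul_sq_le_sq_mul_sq univ f g

lemma avg_sq_le [Nonempty α] (f : α → ℝ) : avg f ^ 2 ≤ avg fun x => f x ^ 2 := by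
  simpa [avg_const] using avg_mul_sq_le f fun _ => 1

lemma avg_mul_sq_le_of_abs_le (w A B : α → ℝ) (hA : ∀ x, |A x| ≤ w x) :
    (avg fun x => A x * B x) ^ 2 ≤ avg w * avg fun x => w x * B x ^ 2 := by
  have hw : ∀ x, 0 ≤ w x := fun x => (abs_nonneg _).trans (hA x)
  have habs : |avg fun x => A x * B x| ≤ avg fun x => √(w x) * (√(w x) * |B x|) := by
    refine (abs_avg_le_avg_abs _).trans (avg_mono fun x => ?_)
    rw [abs_mul, ← mul_assoc, Real.mul_self_sqrt (hw x)]
    exact mul_le_mul_of_nonneg_right (hA x) (abs_nonneg _)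
  calc (avg fun x => A x * B x) ^ 2 = |avg fun x => A x * B x| ^ 2 := (sq_abs _).symm
    _ ≤ (avg fun x => √(w x) * (√(w x) * |B x|)) ^ 2 := by gcongr
    _ ≤ (avg fun x => √(w x) ^ 2) * avg fun x => (√(w x) * |B x|) ^ 2 := avg_mul_sq_le _ _
    _ = avg w * avg fun x => w x * B x ^ 2 := by simp only [mul_pow, sq_abs, Real.sq_sqrt (hw _)]

lemma avg_eq_avg_update [DecidableEq α] [Nonempty β] (i : α) (F : (α → β) → ℝ) :
    avg F = avg fun x => avg fun t => F (Function.update x i t) := by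
  have hsplit : ∀ G : (α → β) → ℝ, avg G = avg fun z : {j // j ≠ i} → β =>
      avg fun t : β => G ((Equiv.funSplitAt i β).symm (t, z)) := by
    intro G
    rw [← avg_comp_equiv (Equiv.funSplitAt i β).symm G, avg_prod, avg_comm]
  have hupdate : ∀ s t z, Function.update ((Equiv.funSplitAt i β).symm (s, z)) i t
      = (Equiv.funSplitAt i β).symm (t, z) := by
    intro s t z
    funext j
    rcases eq_or_ne j i with rfl | hj
    · simp [Equiv.funSplitAt, Equiv.piSplitAt]
    · simp [Equiv.funSplitAt, Equiv.piSplitAt, hj]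
  rw [hsplit F, hsplit fun x => avg fun t => F (Function.update x i t)]
  simp only [hupdate, avg_const]

end Avg

section Group
variable {G H : Type*} [AddCommGroup G] [Fintype G] [AddCommGroup H] [Fintype H]

lemma avg_add_right (a : G) (f : G → ℝ) : (avg fun x => f (x + a)) = avg f :=
  avg_comp_equiv (Equiv.addRight a) f

lemma avg_comp_addMonoidHom (φ : G →+ H) (hφ : Function.Surjective φ) (f : H → ℝ) :
    (avg fun x => f (φ x)) = avg f := by
  classical
  set c : ℝ := ((#{x | φ x = 0} : ℕ) : ℝ) with hc
  have hsum (g : H → ℝ) : ∑ x, g (φ x) = c * ∑ y, g y := by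
    rw [← sum_fiberwise univ φ, mul_sum]
    refine sum_congr rfl fun y _ => ?_
    rw [sum_congr rfl fun x hx => by rw [(mem_filter.1 hx).2], sum_const, nsmul_eq_mul, hc,
      AddMonoidHom.card_fiber_eq_of_mem_range φ (hφ y) (hφ 0)]
  have hcard : (Fintype.card G : ℝ) = c * Fintype.card H := by simpa using hsum fun _ => 1
  have hG : c * Fintype.card H ≠ 0 := hcard ▸ Nat.cast_ne_zero.2 Fintype.card_ne_zero
  rw [avg, avg, hsum, hcard, mul_div_mul_left _ _ (left_ne_zero_of_mul hG)]

lemma avg_comp_endomorphism_le (φ : G →+ G) {f : G → ℝ} (hf : ∀ x, 0 ≤ f x) :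
    (avg fun x => f (φ x)) ≤ Nat.card φ.ker * avg f := by
  classical
  have hcard : (Fintype.card G : ℝ) = Nat.card φ.ker * Fintype.card φ.range := by
    rw [← Nat.card_eq_fintype_card, ← Nat.card_eq_fintype_card, ← Nat.cast_mul,
      ← φ.ker.card_mul_index, AddSubgroup.index_ker]
  have hker : (Nat.card φ.ker : ℝ) ≠ 0 := Nat.cast_ne_zero.2 Nat.card_pos.ne'
  have hsum : ∑ y : φ.range, f y ≤ ∑ y, f y := by
    rw [← sum_subtype {y | y ∈ φ.range} (fun y => by simp) f]
    exact sum_le_univ_sum_of_nonneg hf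
  calc (avg fun x => f (φ x)) = avg fun y : φ.range => f y :=
        avg_comp_addMonoidHom φ.rangeRestrict φ.rangeRestrict_surjective fun y => f y
    _ = Nat.card φ.ker * ((∑ y : φ.range, f y) / Fintype.card G) := by
        rw [avg, hcard, ← mul_div_assoc, mul_div_mul_left _ _ hker]
    _ ≤ Nat.card φ.ker * avg f := by unfold avg; gcongr

end Group

/-! ### Densities and combinatorial subspaces -/

/-- The density of a set in a finite type, that is, its uniform probability. -/
noncomputable def density {Ω : Type*} [Fintype Ω] (A : Set Ω) : ℝ := avg (A.indicator fun _ => 1)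

section Density
variable {Ω Ω' : Type*} [Fintype Ω] [Fintype Ω']

lemma density_nonneg (A : Set Ω) : 0 ≤ density A :=
  avg_nonneg fun _ => Set.indicator_nonneg (fun _ _ => zero_le_one) _

lemma density_le_one [Nonempty Ω] (A : Set Ω) : density A ≤ 1 :=
  avg_le fun _ => Set.indicator_le_self' (fun _ _ => zero_le_one) _

lemma density_empty : density (∅ : Set Ω) = 0 := by simp [density, avg]

lemma density_mono {A B : Set Ω} (h : A ⊆ B) : density A ≤ density B :=
  avg_mono fun _ => Set.indicator_le_indicator_of_subset h (fun _ => zero_le_one) _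

lemma density_preimage_equiv (e : Ω ≃ Ω') (A : Set Ω') : density (e ⁻¹' A) = density A :=
  avg_comp_equiv e (A.indicator fun _ => 1)

lemma density_inter_add_diff (A B : Set Ω) : density (A ∩ B) + density (A \ B) = density A := by
  simp only [density, ← avg_add]
  congr 1
  funext x
  by_cases hA : x ∈ A <;> by_cases hB : x ∈ B <;> simp [hA, hB]

lemma density_compl [Nonempty Ω] (A : Set Ω) : density Aᶜ = 1 - density A := by
  have huniv : density (Set.univ : Set Ω) = 1 := by simp [density, avg_const]
  have hsplit := density_inter_add_diff Set.univ A
  rw [Set.univ_inter, ← Set.compl_eq_univ_sdiff, huniv] at hsplit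
  linarith

lemma nonempty_of_density_pos {A : Set Ω} (h : 0 < density A) : A.Nonempty := by
  rw [Set.nonempty_iff_ne_empty]
  rintro rfl
  exact h.ne' density_empty

lemma density_le_sum {κ : Type*} [Fintype κ] {A : Set Ω} {R : κ → Set Ω} (h : A ⊆ ⋃ c, R c) :
    density A ≤ ∑ c, density (R c) := by
  simp only [density, ← avg_sum]
  refine avg_mono fun x => ?_
  have hR : ∀ c ∈ univ, 0 ≤ (R c).indicator (fun _ => (1 : ℝ)) x := fun c _ =>
    Set.indicator_nonneg (fun _ _ => zero_le_one) _
  by_cases hx : x ∈ A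
  · obtain ⟨c, hc⟩ := Set.mem_iUnion.1 (h hx)
    calc A.indicator (fun _ => (1 : ℝ)) x = (R c).indicator (fun _ => (1 : ℝ)) x := by simp [hx, hc]
      _ ≤ ∑ c, (R c).indicator (fun _ => (1 : ℝ)) x := single_le_sum hR (mem_univ c)
  · rw [Set.indicator_of_notMem hx]
    exact sum_nonneg hR

lemma exists_le_density_of_subset_iUnion {κ : Type*} [Fintype κ] {A : Set Ω} {R : κ → Set Ω}
    (h : A ⊆ ⋃ c, R c) (hA : 0 < density A) :
    ∃ c, density A / (Fintype.card κ + 1) ≤ density (R c) := by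
  by_contra! hR
  have hsum : density A ≤ Fintype.card κ * (density A / (Fintype.card κ + 1)) :=
    (density_le_sum h).trans <| (sum_le_sum fun c _ => (hR c).le).trans_eq (by simp)
  rw [mul_div_assoc', le_div_iff₀ (by positivity)] at hsum
  linarith

lemma half_le_density_of_le_avg [Nonempty Ω] {f : Ω → ℝ} {δ : ℝ} (hf : ∀ x, f x ≤ 1) (hδ : 0 ≤ δ)
    (h : δ ≤ avg f) : δ / 2 ≤ density {x | δ / 2 ≤ f x} := by
  have hle : avg f ≤ avg fun x => δ / 2 + Set.indicator {x | δ / 2 ≤ f x} (fun _ => 1) x := by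
    refine avg_mono fun x => ?_
    by_cases hx : δ / 2 ≤ f x
    · simp only [Set.indicator, Set.mem_ofPred_eq, hx, if_true]
      linarith [hf x]
    · simp only [Set.indicator, Set.mem_ofPred_eq, hx, if_false]
      linarith
  rw [avg_add, avg_const] at hle
  change _ ≤ δ / 2 + density _ at hle
  linarith

lemma avg_density_comm (A : Ω → Set Ω') :
    (avg fun x => density (A x)) = avg fun y => density {x | y ∈ A x} :=
  avg_comm _

variable {ι κ X : Type*} [Fintype ι] [Fintype κ] [DecidableEq ι] [DecidableEq κ] [Fintype X]

lemma density_eq_avg_right (A : Set (ι ⊕ κ → X)) :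
    density A = avg fun x : ι → X => density {y : κ → X | Sum.elim x y ∈ A} :=
  avg_sumElim _

lemma density_eq_avg_left (A : Set (ι ⊕ κ → X)) :
    density A = avg fun y : κ → X => density {x : ι → X | Sum.elim x y ∈ A} := by
  rw [density_eq_avg_right]
  exact avg_density_comm _

end Density

section Subspace
variable {η θ α ι κ : Type*}

/-- Composition of combinatorial subspaces. -/
def subspaceComp (V : Subspace η α ι) (W : Subspace θ α η) : Subspace θ α ι where
  idxFun i := (V.idxFun i).elim Sum.inl W.idxFun
  proper e := by
    obtain ⟨j, hj⟩ := W.proper e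
    obtain ⟨i, hi⟩ := V.proper j
    exact ⟨i, by simp [hi, hj]⟩

lemma subspaceComp_apply (V : Subspace η α ι) (W : Subspace θ α η) (x : θ → α) :
    subspaceComp V W x = V (W x) := by
  funext i
  simp only [Subspace.apply_def, subspaceComp]
  cases V.idxFun i <;> simp [Subspace.apply_def]

/-- The image of a combinatorial line under a combinatorial subspace. -/
def subspaceLine (V : Subspace η α ι) (l : Line α η) : Line α ι where
  idxFun i := (V.idxFun i).elim some l.idxFun
  proper := by
    obtain ⟨j, hj⟩ := l.proper
    obtain ⟨i, hi⟩ := V.proper j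
    exact ⟨i, by simp [hi, hj]⟩

lemma subspaceLine_apply (V : Subspace η α ι) (l : Line α η) (a : α) :
    subspaceLine V l a = V (l a) := by
  funext i
  simp only [Subspace.apply_def, Line.coe_apply, subspaceLine]
  cases V.idxFun i <;> simp

/-- The subspace of words on `ι ⊕ κ` whose right part is `y`. -/
def leftSlice (y : κ → α) : Subspace ι α (ι ⊕ κ) where
  idxFun := Sum.elim Sum.inr fun j => Sum.inl (y j)
  proper e := ⟨Sum.inl e, rfl⟩

lemma leftSlice_apply (y : κ → α) (x : ι → α) :
    (leftSlice y : Subspace ι α (ι ⊕ κ)) x = Sum.elim x y := by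
  funext i; cases i <;> rfl

/-- The subspace of words on `ι ⊕ κ` whose left part is `x`. -/
def rightSlice (x : ι → α) : Subspace κ α (ι ⊕ κ) where
  idxFun := Sum.elim (fun j => Sum.inl (x j)) Sum.inr
  proper e := ⟨Sum.inr e, rfl⟩

lemma rightSlice_apply (x : ι → α) (y : κ → α) :
    (rightSlice x : Subspace κ α (ι ⊕ κ)) y = Sum.elim x y := by
  funext i; cases i <;> rfl

/-- The full subspace of `ι → α`, with its directions renamed along an equivalence. -/
def fullSubspace (e : ι ≃ κ) : Subspace κ α ι where
  idxFun i := Sum.inr (e i)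
  proper j := ⟨e.symm j, by simp⟩

/-- The product of a line and a subspace; the line becomes direction `0`. -/
def lineProd {m : ℕ} (l : Line α ι) (W : Subspace (Fin m) α κ) :
    Subspace (Fin (m + 1)) α (ι ⊕ κ) where
  idxFun := Sum.elim (fun i => (l.idxFun i).elim (Sum.inr 0) Sum.inl)
    fun j => (W.idxFun j).map id Fin.succ
  proper := by
    refine Fin.cases ?_ fun j => ?_
    · obtain ⟨i, hi⟩ := l.proper
      exact ⟨Sum.inl i, by simp [hi]⟩
    · obtain ⟨i, hi⟩ := W.proper j
      exact ⟨Sum.inr i, by simp [hi]⟩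

lemma lineProd_apply {m : ℕ} (l : Line α ι) (W : Subspace (Fin m) α κ) (x : Fin (m + 1) → α) :
    lineProd l W x = Sum.elim (l (x 0)) (W fun j => x j.succ) := by
  funext i
  rcases i with i | j
  · simp only [Subspace.apply_def, lineProd, Sum.elim_inl, Line.coe_apply]
    cases l.idxFun i <;> simp
  · simp only [lineProd, Subspace.apply_def, Sum.elim_inr]
    cases W.idxFun j <;> simp

instance [Finite α] [Finite ι] : Finite (Line α ι) :=
  Finite.of_injective (fun l => l.idxFun) fun _ _ h => Line.ext h

instance [Finite α] [Finite ι] [Finite η] : Finite (Subspace η α ι) :=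
  Finite.of_injective (fun V => V.idxFun) fun _ _ h => Subspace.ext h

lemma nonempty_equiv_sum [Fintype ι] {n : ℕ} (h : n ≤ Fintype.card ι) :
    Nonempty (ι ≃ Fin n ⊕ Fin (Fintype.card ι - n)) :=
  ⟨Fintype.equivOfCardEq (by simp; omega)⟩

lemma density_fullSubspace [Fintype ι] [DecidableEq ι] [Fintype κ] [DecidableEq κ] [Fintype α]
    (e : ι ≃ κ) (A : Set (ι → α)) :
    density {x : κ → α | (fullSubspace e : Subspace κ α ι) x ∈ A} = density A :=
  density_preimage_equiv (Equiv.arrowCongr e.symm (Equiv.refl α)) A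

/-- A set of words is line-free if it contains no combinatorial line. -/
def LineFree (A : Set (ι → α)) : Prop := ∀ l : Line α ι, ∃ a, l a ∉ A

lemma LineFree.preimage {A : Set (ι → α)} (h : LineFree A) (V : Subspace η α ι) :
    LineFree {x | V x ∈ A} := fun l =>
  (h (subspaceLine V l)).imp fun a ha => by rwa [subspaceLine_apply] at ha

end Subspace

/-- The density Hales–Jewett theorem for the alphabet `α` and the density `δ`. -/
def DHJAt (α : Type) [Fintype α] (δ : ℝ) : Prop :=
  ∃ n₀ : ℕ, ∀ (ι : Type) [Fintype ι] [DecidableEq ι], n₀ ≤ Fintype.card ι →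
    ∀ A : Set (ι → α), LineFree A → density A < δ

/-- The density Hales–Jewett theorem for the alphabet `α`. -/
def DHJ (α : Type) [Fintype α] : Prop := ∀ δ : ℝ, 0 < δ → DHJAt α δ

section Multidimensional
variable {α : Type} [Fintype α] [Nonempty α]

lemma exists_line_le_density {ι Y : Type*} [Fintype ι] [DecidableEq ι] [Fintype Y] [Nonempty Y]
    [Fintype (Line α ι)] {δ : ℝ} (hδ : 0 < δ)
    (hι : ∀ A : Set (ι → α), LineFree A → density A < δ / 2)
    {A : (ι → α) → Set Y} (hA : δ ≤ avg fun x => density (A x)) :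
    ∃ l : Line α ι, δ / 2 / (Fintype.card (Line α ι) + 1) ≤ density {y | ∀ a, y ∈ A (l a)} := by
  set D : Set Y := {y | δ / 2 ≤ density {x | y ∈ A x}}
  have hD : δ / 2 ≤ density D :=
    half_le_density_of_le_avg (fun _ => density_le_one _) hδ.le (hA.trans_eq (avg_density_comm A))
  have hcover : D ⊆ ⋃ l : Line α ι, {y | ∀ a, y ∈ A (l a)} := by
    intro y hy
    by_contra hno
    simp only [Set.mem_iUnion, Set.mem_ofPred_eq, not_exists, not_forall] at hno
    exact (hι {x | y ∈ A x} hno).not_ge hy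
  obtain ⟨l, hl⟩ := exists_le_density_of_subset_iUnion hcover ((half_pos hδ).trans_le hD)
  exact ⟨l, (by gcongr : δ / 2 / _ ≤ _).trans hl⟩

lemma DHJ.exists_subspace (h : DHJ α) (m : ℕ) : ∀ δ : ℝ, 0 < δ →
    ∃ n₀ : ℕ, ∀ (ι : Type) [Fintype ι] [DecidableEq ι], n₀ ≤ Fintype.card ι →
      ∀ A : Set (ι → α), δ ≤ density A → ∃ V : Subspace (Fin m) α ι, ∀ x, V x ∈ A := by
  classical
  induction m with
  | zero =>
    refine fun δ hδ => ⟨0, fun ι _ _ _ A hA => ?_⟩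
    obtain ⟨p, hp⟩ := nonempty_of_density_pos (hδ.trans_le hA)
    exact ⟨⟨fun i => Sum.inl (p i), fun e => e.elim0⟩, fun _ => hp⟩
  | succ m ih =>
    intro δ hδ
    obtain ⟨n₁, hn₁⟩ := h (δ / 2) (by positivity)
    have := Fintype.ofFinite (Line α (Fin n₁))
    obtain ⟨n₂, hn₂⟩ := ih (δ / 2 / (Fintype.card (Line α (Fin n₁)) + 1)) (by positivity)
    refine ⟨n₁ + n₂, fun ι _ _ hι A hA => ?_⟩
    obtain ⟨e⟩ := nonempty_equiv_sum (n := n₁) (le_of_add_le_left hι)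
    rw [← density_fullSubspace e, density_eq_avg_right] at hA
    obtain ⟨l, hl⟩ := exists_line_le_density hδ (hn₁ (Fin n₁) (Fintype.card_fin n₁).ge) hA
    obtain ⟨W, hW⟩ := hn₂ (Fin (Fintype.card ι - n₁)) (by rw [Fintype.card_fin]; omega) _ hl
    refine ⟨subspaceComp (fullSubspace e) (lineProd l W), fun x => ?_⟩
    rw [subspaceComp_apply, lineProd_apply]
    exact hW (fun j => x j.succ) (x 0)

end Multidimensional

/-! ### Insensitive sets -/

/-- A set of words over `Option β` is `i`-insensitive if membership does not change when letters
`none` are changed to `some i` or vice versa. -/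
def Insensitive {β ι : Type*} (i : β) (D : Set (ι → Option β)) : Prop :=
  ∀ x y : ι → Option β, (∀ j, (x j).getD i = (y j).getD i) → x ∈ D → y ∈ D

section Insensitive
variable {β η ι : Type*} {i : β} {D : Set (ι → Option β)}

lemma Insensitive.mem_iff (h : Insensitive i D) {x y : ι → Option β}
    (hxy : ∀ j, (x j).getD i = (y j).getD i) : x ∈ D ↔ y ∈ D :=
  ⟨h x y hxy, h y x fun j => (hxy j).symm⟩

lemma Insensitive.compl (h : Insensitive i D) : Insensitive i Dᶜ :=
  fun _ _ hxy hx hy => hx ((h.mem_iff hxy).2 hy)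

lemma Insensitive.preimage (h : Insensitive i D) (V : Subspace η (Option β) ι) :
    Insensitive i {x | V x ∈ D} := by
  refine fun x y hxy hx => h _ _ (fun j => ?_) hx
  simp only [Subspace.apply_def]
  cases V.idxFun j <;> simp [hxy]

/-- The word over `Option β` that agrees with `y` at the positions satisfying `p` and is `none`
elsewhere. -/
def padNone (p : ι → Prop) [DecidablePred p] (y : {j // p j} → β) (j : ι) : Option β :=
  if h : p j then some (y ⟨j, h⟩) else none

lemma Insensitive.exists_subspace_of_padNone (hD : Insensitive i D) (p : ι → Prop)
    [DecidablePred p] (V : Subspace η β {j // p j}) (hV : ∀ x, padNone p (V x) ∈ D) :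
    ∃ W : Subspace η (Option β) ι, ∀ x, W x ∈ D := by
  refine ⟨⟨fun j => if h : p j then (V.idxFun ⟨j, h⟩).map some id else Sum.inl none, fun e => ?_⟩,
    fun x => hD _ _ (fun j => ?_) (hV fun e => (x e).getD i)⟩
  · obtain ⟨⟨j, hj⟩, hje⟩ := V.proper e
    exact ⟨j, by simp [hj, hje]⟩
  · by_cases hj : p j
    · simp only [Subspace.apply_def, padNone, hj, dif_pos]
      cases V.idxFun ⟨j, hj⟩ <;> simp
    · simp [Subspace.apply_def, padNone, hj]

end Insensitive

section RandomPattern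

lemma avg_pi_prod {ι X : Type*} [Fintype ι] [DecidableEq ι] [Fintype X] (f : X → ℝ) :
    avg (fun x : ι → X => ∏ j, f (x j)) = avg f ^ Fintype.card ι := by
  have h := prod_univ_sum (fun _ : ι => (univ : Finset X)) fun _ x => f x
  rw [Fintype.piFinset_univ, prod_const, card_univ] at h
  rw [avg, avg, div_pow, h, Fintype.card_fun, Nat.cast_pow]

lemma avg_comp_restrict {ι X : Type*} [Fintype ι] [DecidableEq ι] [Fintype X] [Nonempty X]
    (p : ι → Prop) [DecidablePred p] (F : ({j // p j} → X) → ℝ) :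
    avg (fun x : ι → X => F fun j => x j) = avg F := by
  rw [← avg_comp_equiv (Equiv.piEquivPiSubtypeProd p fun _ => X).symm, avg_prod]
  congr 1
  funext y
  rw [← avg_const (α := {j // ¬ p j} → X) (F y)]
  congr! 3 with z
  funext j
  simp [Equiv.piEquivPiSubtypeProd, j.2]

variable {β : Type*} [Fintype β] [Nonempty β]

/-- A uniform word over `Option β` can be sampled by choosing a uniform pattern of `none`s and
then filling the remaining positions with independent uniform letters. -/
lemma avg_eq_avg_padNone {ι : Type*} [Fintype ι] [DecidableEq ι] (F : (ι → Option β) → ℝ) :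
    avg F = avg fun u : ι → Option β => avg fun y : {j // (u j).isSome} → β =>
      F (padNone (fun j => (u j).isSome) y) := by
  let swap : Option β × β ≃ Option β × β := Function.Involutive.toPerm
    (fun p => (p.1.map fun _ => p.2, p.1.getD p.2)) (by rintro ⟨_ | a, b⟩ <;> rfl)
  let pairs := Equiv.arrowProdEquivProdArrow ι (fun _ => Option β) fun _ => β
  let e := pairs.symm.trans ((Equiv.arrowCongr (Equiv.refl ι) swap).trans pairs)
  have hpad (u : ι → Option β) (x : ι → β) :
      padNone (fun j => (u j).isSome) (fun j => x j) = fun j => (u j).map fun _ => x j := by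
    funext j
    rcases hj : u j with _ | b <;> simp [padNone, hj]
  calc avg F = avg fun q : (ι → Option β) × (ι → β) => F q.1 := by simp only [avg_prod, avg_const]
    _ = avg fun q : (ι → Option β) × (ι → β) => F (e q).1 := (avg_comp_equiv e _).symm
    _ = avg fun u : ι → Option β => avg fun x : ι → β =>
        F (padNone (fun j => (u j).isSome) fun j => x j) := by simp only [hpad]; exact avg_prod _
    _ = _ := by
      congr! 2 with u
      exact avg_comp_restrict (fun j => (u j).isSome = true)
        fun y => F (padNone (fun j => (u j).isSome) y)

lemma exists_density_card_isSome_lt (β : Type*) [Fintype β] [Nonempty β] (M : ℕ) {ε : ℝ}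
    (hε : 0 < ε) :
    ∃ n₀ : ℕ, ∀ (ι : Type) [Fintype ι] [DecidableEq ι], n₀ ≤ Fintype.card ι →
      density {u : ι → Option β | Fintype.card {j // (u j).isSome} < M} < ε := by
  set w : Option β → ℝ := fun a => if a.isSome then 1 / 2 else 1 with hw
  have hw0 : ∀ a, 0 < w a := fun a => by simp only [hw]; split_ifs <;> norm_num
  have hq0 : 0 ≤ avg w := avg_nonneg fun a => (hw0 a).le
  have hq1 : avg w < 1 := by
    have hβ : (0 : ℝ) < Fintype.card β := Nat.cast_pos.2 Fintype.card_pos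
    rw [avg, div_lt_one (by positivity), Fintype.sum_option, Fintype.card_option]
    simp [hw]
    linarith
  obtain ⟨n₀, hn₀⟩ := exists_pow_lt_of_lt_one (show 0 < ε / 2 ^ M by positivity) hq1
  refine ⟨n₀, fun ι _ _ hι => ?_⟩
  have hmarkov (u : ι → Option β) :
      Set.indicator {u : ι → Option β | Fintype.card {j // (u j).isSome} < M} (fun _ => 1) u
        ≤ (2 : ℝ) ^ M * ∏ j, w (u j) := by
    refine Set.indicator_apply_le' (fun hu => ?_) fun _ =>
      mul_nonneg (by positivity) (prod_nonneg fun j _ => (hw0 _).le)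
    rw [Set.mem_ofPred_eq, Fintype.card_subtype] at hu
    rw [hw, prod_ite, prod_const, prod_const_one, mul_one, one_div, inv_pow, ← div_eq_mul_inv,
      le_div_iff₀ (by positivity), one_mul]
    exact pow_le_pow_right₀ one_le_two hu.le
  calc density {u : ι → Option β | Fintype.card {j // (u j).isSome} < M}
      ≤ avg fun u : ι → Option β => 2 ^ M * ∏ j, w (u j) := avg_mono hmarkov
    _ = 2 ^ M * avg w ^ Fintype.card ι := by rw [avg_const_mul, avg_pi_prod]
    _ ≤ 2 ^ M * avg w ^ n₀ := by gcongr 2 ^ M * ?_; exact pow_le_pow_of_le_one hq0 hq1.le hι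
    _ < 2 ^ M * (ε / 2 ^ M) := by gcongr
    _ = ε := by field_simp

end RandomPattern

lemma DHJ.exists_subspace_of_insensitive {β : Type} [Fintype β] [Nonempty β] (h : DHJ β) (m : ℕ)
    {ε : ℝ} (hε : 0 < ε) :
    ∃ n₀ : ℕ, ∀ (ι : Type) [Fintype ι] [DecidableEq ι], n₀ ≤ Fintype.card ι →
      ∀ (i : β) (D : Set (ι → Option β)), Insensitive i D → ε ≤ density D →
        ∃ V : Subspace (Fin m) (Option β) ι, ∀ x, V x ∈ D := by
  obtain ⟨M, hM⟩ := h.exists_subspace m (ε / 2) (by positivity)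
  obtain ⟨n₀, hn₀⟩ := exists_density_card_isSome_lt β M (half_pos hε)
  refine ⟨n₀, fun ι _ _ hι i D hD hεD => ?_⟩
  let fill (u : ι → Option β) : Set ({j // (u j).isSome} → β) :=
    {y | padNone (fun j => (u j).isSome) y ∈ D}
  let few : Set (ι → Option β) := {u | Fintype.card {j // (u j).isSome} < M}
  have hfill : density D = avg fun u => density (fill u) := avg_eq_avg_padNone _
  obtain ⟨u, hu, huD⟩ : ∃ u ∉ few, ε / 2 ≤ density (fill u) := by
    by_contra! hcon
    have hle : density D ≤ avg fun u => ε / 2 + few.indicator (fun _ => (1 : ℝ)) u := by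
      rw [hfill]
      refine avg_mono fun u => ?_
      by_cases hu : u ∈ few
      · rw [Set.indicator_of_mem hu]
        linarith [density_le_one (fill u)]
      · rw [Set.indicator_of_notMem hu]
        linarith [hcon u hu]
    rw [avg_add, avg_const] at hle
    have hfew : avg (few.indicator fun _ => (1 : ℝ)) < ε / 2 := hn₀ ι hι
    linarith
  obtain ⟨V, hV⟩ := hM {j // (u j).isSome} (not_lt.1 hu) _ huD
  exact hD.exists_subspace_of_padNone _ V hV

/-! ### Density on intersections of insensitive sets -/

section Subspace
variable {η θ α ι : Type*}

lemma subspace_injective (V : Subspace η α ι) : Function.Injective fun x : η → α => V x := by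
  intro x y hxy
  funext e
  obtain ⟨i, hi⟩ := V.proper e
  simpa [Subspace.apply_def, hi] using congrFun hxy i

/-- `g` has nonpositive mean on every `m`-dimensional combinatorial subspace contained in `D`. -/
def NonposOnSubspaces [Fintype α] (m : ℕ) (D : Set (ι → α)) (g : (ι → α) → ℝ) : Prop :=
  ∀ V : Subspace (Fin m) α ι, (∀ x, V x ∈ D) → avg (fun x => g (V x)) ≤ 0

lemma NonposOnSubspaces.preimage [Fintype α] {m : ℕ} {D : Set (ι → α)}
    {g : (ι → α) → ℝ} (h : NonposOnSubspaces m D g) (U : Subspace η α ι) {E : Set (η → α)}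
    (hE : ∀ x ∈ E, U x ∈ D) : NonposOnSubspaces m E fun x => g (U x) := by
  intro V hV
  simpa only [subspaceComp_apply] using
    h (subspaceComp U V) fun x => by rw [subspaceComp_apply]; exact hE _ (hV x)

variable [Fintype η] [DecidableEq η] [Fintype α] [Fintype ι] [DecidableEq ι]

lemma avg_indicator_range_subspace [Nonempty α] (V : Subspace η α ι) (g : (ι → α) → ℝ) :
    avg ((Set.range fun x : η → α => V x).indicator g) =
      (Fintype.card α : ℝ) ^ Fintype.card η / (Fintype.card α : ℝ) ^ Fintype.card ι *
        avg fun x : η → α => g (V x) := by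
  classical
  have : (Fintype.card α : ℝ) ≠ 0 := Nat.cast_ne_zero.2 Fintype.card_ne_zero
  have hsum : ∑ x, (Set.range fun x : η → α => V x).indicator g x = ∑ x : η → α, g (V x) := by
    rw [← sum_image (s := univ) (g := fun x : η → α => V x) (f := g)
        fun x _ y _ h => subspace_injective V h,
      ← sum_indicator_subset g (subset_univ (univ.image fun x : η → α => V x)), coe_image,
      coe_univ, Set.image_univ]
  rw [avg, avg, Fintype.card_fun, Fintype.card_fun, hsum]
  push_cast
  field_simp

end Subspace

lemma Insensitive.leftSlice_eq {β ι κ : Type*} {i : β} {D : Set (ι ⊕ κ → Option β)}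
    (hD : Insensitive i D) {y y' : κ → Option β} (h : ∀ j, (y j).getD i = (y' j).getD i) :
    {x : ι → Option β | Sum.elim x y ∈ D} = {x | Sum.elim x y' ∈ D} := by
  ext x
  exact hD.mem_iff fun j => by cases j <;> simp [h]

section Exhaustion
variable {β : Type} [Fintype β] {m : ℕ} {ε c q : ℝ} {i : β}

/-- The conclusion of the exhaustion argument on words indexed by `ι`: if `g ≤ 1` has nonpositive
mean on all `m`-dimensional subspaces inside an `i`-insensitive set `D`, then the integral of `g`
over `D` is at most `ε + q (density D - ε)`. -/
def ExhaustionBound (i : β) (m : ℕ) (ε q : ℝ) (ι : Type) [Fintype ι] [DecidableEq ι] : Prop :=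
  ∀ (D : Set (ι → Option β)) (g : (ι → Option β) → ℝ), Insensitive i D → (∀ x, g x ≤ 1) →
    NonposOnSubspaces m D g → avg (D.indicator g) ≤ ε + q * (density D - ε)

lemma exhaustionBound_one (i : β) (m : ℕ) (ε : ℝ) (ι : Type) [Fintype ι] [DecidableEq ι] :
    ExhaustionBound i m ε 1 ι := by
  intro D g _ hg _
  have hle : avg (D.indicator g) ≤ density D :=
    avg_mono fun x => Set.indicator_le_indicator (hg x)
  linarith

variable {ι κ : Type} [Fintype ι] [DecidableEq ι] [Fintype κ] [DecidableEq κ]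

lemma ExhaustionBound.of_equiv (h : ExhaustionBound i m ε q κ) (e : ι ≃ κ) :
    ExhaustionBound i m ε q ι := by
  intro D g hD hg hgD
  rw [← density_fullSubspace e,
    ← avg_comp_equiv (Equiv.arrowCongr e.symm (Equiv.refl (Option β))) (D.indicator g)]
  exact h _ _ (hD.preimage (fullSubspace e)) (fun x => hg _)
    (hgD.preimage (fullSubspace e) fun _ hx => hx)

/-- A dense insensitive set contains a subspace, over which the integral is nonpositive; removing
it decreases the excess of the density over `ε` by a constant factor. -/
lemma exists_removable_subset
    (hsub : ∀ D : Set (ι → Option β), Insensitive i D → ε ≤ density D →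
      ∃ V : Subspace (Fin m) (Option β) ι, ∀ x, V x ∈ D)
    (hε : 0 < ε) (hc0 : 0 ≤ c)
    (hc : c = (Fintype.card (Option β) : ℝ) ^ m / (Fintype.card (Option β) : ℝ) ^ Fintype.card ι)
    (E : Set (ι → Option β)) :
    ∃ R ⊆ E, (Insensitive i E → density (E \ R) - ε ≤ (1 - c) * (density E - ε)) ∧
      ∀ g, NonposOnSubspaces m E g → avg (R.indicator g) ≤ 0 := by
  by_cases hE : Insensitive i E ∧ ε ≤ density E
  · obtain ⟨V, hV⟩ := hsub E hE.1 hE.2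
    have hVE : (Set.range fun x => V x) ⊆ E := Set.range_subset_iff.2 hV
    refine ⟨Set.range fun x => V x, hVE, fun _ => ?_, fun g hg => ?_⟩
    · have hV' : density (Set.range fun x => V x) = c := by
        rw [density, avg_indicator_range_subspace, avg_const, hc, Fintype.card_fin, mul_one]
      have hsplit := density_inter_add_diff E (Set.range fun x => V x)
      rw [Set.inter_eq_right.2 hVE, hV'] at hsplit
      have : c * (density E - ε) ≤ c * 1 := by
        gcongr
        linarith [density_le_one E]
      linarith
    · rw [avg_indicator_range_subspace]
      exact mul_nonpos_of_nonneg_of_nonpos (by positivity) (hg V hV)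
  · refine ⟨∅, E.empty_subset, fun h => ?_, fun g _ => by simp [avg]⟩
    have hlt : density E < ε := not_le.1 fun h' => hE ⟨h, h'⟩
    rw [Set.sdiff_empty]
    nlinarith

/-- One removal on the left coordinates, followed by the bound on the right coordinates. -/
lemma ExhaustionBound.sum (hκ : ExhaustionBound i m ε q κ) (hq : 0 ≤ q)
    (hrem : ∀ E : Set (ι → Option β), ∃ R ⊆ E,
      (Insensitive i E → density (E \ R) - ε ≤ (1 - c) * (density E - ε)) ∧
        ∀ g, NonposOnSubspaces m E g → avg (R.indicator g) ≤ 0) :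
    ExhaustionBound i m ε (q * (1 - c)) (ι ⊕ κ) := by
  intro D g hD hg hgD
  choose R hRsub hRdensity hRavg using hrem
  set slice : (κ → Option β) → Set (ι → Option β) := fun y => {x | Sum.elim x y ∈ D}
  set rest : (ι → Option β) → Set (κ → Option β) := fun x => {y | x ∈ slice y \ R (slice y)}
  have hslice (y) : Insensitive i (slice y) := by
    simpa only [leftSlice_apply] using hD.preimage (leftSlice y)
  have hremoved (y) : avg ((R (slice y)).indicator fun x => g (Sum.elim x y)) ≤ 0 := by
    refine hRavg _ _ ?_
    simpa only [leftSlice_apply] using hgD.preimage (leftSlice y) (E := slice y)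
      fun x hx => by rw [leftSlice_apply]; exact hx
  have hrest (x) : avg ((rest x).indicator fun y => g (Sum.elim x y)) ≤
      ε + q * (density (rest x) - ε) := by
    refine hκ _ _ (fun y y' h hy => ?_) (fun y => hg _) ?_
    · simpa only [rest, slice, Set.mem_ofPred_eq, hD.leftSlice_eq h] using hy
    · simpa only [rightSlice_apply] using hgD.preimage (rightSlice x) (E := rest x)
        fun y hy => by rw [rightSlice_apply]; exact hy.1
  have hsplit (x y) : D.indicator g (Sum.elim x y) =
      (R (slice y)).indicator (fun x => g (Sum.elim x y)) x +
        (rest x).indicator (fun y => g (Sum.elim x y)) y := by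
    have hsub : x ∈ R (slice y) → Sum.elim x y ∈ D := fun h => hRsub _ h
    by_cases hD : Sum.elim x y ∈ D <;> by_cases hR : x ∈ R (slice y) <;>
      simp_all [Set.indicator, rest, slice]
  have hcomm : avg (fun x => density (rest x)) = avg fun y => density (slice y \ R (slice y)) :=
    avg_density_comm _
  calc avg (D.indicator g)
      = avg (fun y => avg ((R (slice y)).indicator fun x => g (Sum.elim x y))) +
          avg fun x => avg ((rest x).indicator fun y => g (Sum.elim x y)) := by
        simp only [avg_sumElim, hsplit, avg_add]
        rw [avg_comm]
    _ ≤ avg (fun _ : κ → Option β => (0 : ℝ)) + avg fun x => ε + q * (density (rest x) - ε) :=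
        add_le_add (avg_mono hremoved) (avg_mono hrest)
    _ = ε + q * avg fun y => density (slice y \ R (slice y)) - ε := by
        simp only [avg_add, avg_const_mul, avg_sub, avg_const, hcomm, zero_add]
    _ ≤ ε + q * avg fun y => (1 - c) * (density (slice y) - ε) := by
        gcongr
        exact avg_mono fun y => hRdensity _ (hslice y)
    _ = ε + q * (1 - c) * (density D - ε) := by
        rw [avg_const_mul, avg_sub, avg_const, density_eq_avg_left D, mul_assoc]

lemma exhaustionBound_pow {M : ℕ} (hc1 : c ≤ 1)
    (hrem : ∀ E : Set (Fin M → Option β), ∃ R ⊆ E,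
      (Insensitive i E → density (E \ R) - ε ≤ (1 - c) * (density E - ε)) ∧
        ∀ g, NonposOnSubspaces m E g → avg (R.indicator g) ≤ 0) (T : ℕ) :
    ∀ (ι : Type) [Fintype ι] [DecidableEq ι], T * M ≤ Fintype.card ι →
      ExhaustionBound i m ε ((1 - c) ^ T) ι := by
  induction T with
  | zero =>
    intro ι _ _ _
    rw [pow_zero]
    exact exhaustionBound_one i m ε ι
  | succ T ih =>
    intro ι _ _ hι
    rw [Nat.succ_mul] at hι
    obtain ⟨e⟩ := nonempty_equiv_sum (n := M) (le_of_add_le_right hι)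
    rw [pow_succ]
    refine ExhaustionBound.of_equiv (.sum (ih _ ?_) (by bound) hrem) e
    rw [Fintype.card_fin]
    omega

end Exhaustion

/-- `E` is an intersection of sets that are insensitive to the letters in the list. -/
def IsInsensitiveInter {β ι : Type*} : List β → Set (ι → Option β) → Prop
  | [], E => E = Set.univ
  | i :: L, E => ∃ D E', Insensitive i D ∧ IsInsensitiveInter L E' ∧ E = D ∩ E'

lemma IsInsensitiveInter.preimage {β η ι : Type*} (V : Subspace η (Option β) ι) {L : List β}
    {E : Set (ι → Option β)} (h : IsInsensitiveInter L E) :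
    IsInsensitiveInter L {x | V x ∈ E} := by
  induction L generalizing E with
  | nil => simp_all [IsInsensitiveInter]
  | cons i L ih =>
    obtain ⟨D, E', hD, hE', rfl⟩ := h
    exact ⟨_, _, hD.preimage V, ih hE', rfl⟩

lemma density_le_of_forall_subspace {α ι : Type*} [Fintype α] [Nonempty α] [Fintype ι]
    [DecidableEq ι] {m : ℕ} (hm : m ≤ Fintype.card ι) {A : Set (ι → α)} {ρ : ℝ}
    (hA : ∀ V : Subspace (Fin m) α ι, density {x | V x ∈ A} ≤ ρ) : density A ≤ ρ := by
  obtain ⟨e⟩ := nonempty_equiv_sum hm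
  rw [← density_fullSubspace e, density_eq_avg_left]
  refine avg_le fun y => ?_
  simpa only [subspaceComp_apply, leftSlice_apply, Set.mem_ofPred_eq] using
    hA (subspaceComp (fullSubspace e) (leftSlice y))

section InsensitiveInter
variable {β : Type} [Fintype β] [Nonempty β]

lemma DHJ.avg_indicator_le (h : DHJ β) (m : ℕ) {ε : ℝ} (hε : 0 < ε) :
    ∃ n₀ : ℕ, ∀ (ι : Type) [Fintype ι] [DecidableEq ι], n₀ ≤ Fintype.card ι →
      ∀ (i : β) (D : Set (ι → Option β)), Insensitive i D → ∀ g : (ι → Option β) → ℝ,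
        (∀ x, g x ≤ 1) → NonposOnSubspaces m D g → avg (D.indicator g) ≤ ε := by
  obtain ⟨M₀, hM₀⟩ := h.exists_subspace_of_insensitive m (half_pos hε)
  set M := max M₀ m
  set K : ℝ := (Fintype.card (Option β) : ℝ) with hK
  have hK1 : 1 ≤ K := Nat.one_le_cast.2 Fintype.card_pos
  set c : ℝ := K ^ m / K ^ M with hc
  have hc0 : 0 < c := by positivity
  have hc1 : c ≤ 1 := div_le_one_of_le₀ (pow_le_pow_right₀ hK1 (le_max_right _ _)) (by positivity)
  obtain ⟨T, hT⟩ := exists_pow_lt_of_lt_one (half_pos hε) (sub_lt_self 1 hc0)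
  refine ⟨T * M, fun ι _ _ hι i D hD g hg hgD => ?_⟩
  have hrem := exists_removable_subset (ι := Fin M)
    (hM₀ (Fin M) ((le_max_left _ _).trans_eq (Fintype.card_fin M).symm) i) (half_pos hε) hc0.le
    (by rw [hc, hK, Fintype.card_fin])
  have hbound := exhaustionBound_pow hc1 hrem T ι hι D g hD hg hgD
  have hpow : (1 - c) ^ T * (density D - ε / 2) ≤ (1 - c) ^ T * 1 := by
    gcongr
    linarith [density_le_one D]
  linarith

lemma DHJ.density_inter_le (h : DHJ β) (m : ℕ) {ρ : ℝ} (hρ : 0 ≤ ρ) (L : List β) :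
    ∀ ε : ℝ, 0 < ε →
    ∃ n₀ : ℕ, ∀ (ι : Type) [Fintype ι] [DecidableEq ι], n₀ ≤ Fintype.card ι →
      ∀ E : Set (ι → Option β), IsInsensitiveInter L E → ∀ A : Set (ι → Option β),
      (∀ V : Subspace (Fin m) (Option β) ι, density {x | V x ∈ A} ≤ ρ) →
      density (A ∩ E) ≤ ρ * density E + ε := by
  induction L with
  | nil =>
    refine fun ε hε => ⟨m, fun ι _ _ hι E hE A hA => ?_⟩
    obtain rfl : E = Set.univ := hE
    have huniv : density (Set.univ : Set (ι → Option β)) = 1 := by simp [density, avg_const]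
    rw [Set.inter_univ, huniv]
    linarith [density_le_of_forall_subspace hι hA]
  | cons i L ih =>
    intro ε hε
    obtain ⟨m', hm'⟩ := ih (ε / 2) (half_pos hε)
    obtain ⟨n₀, hn₀⟩ := h.avg_indicator_le m' (half_pos hε)
    refine ⟨n₀, fun ι _ _ hι E hE A hA => ?_⟩
    obtain ⟨D, E', hD, hE', rfl⟩ := hE
    set g : (ι → Option β) → ℝ := fun x =>
      (A ∩ E').indicator (fun _ => 1) x - ρ * E'.indicator (fun _ => 1) x - ε / 2 with hg
    have hg1 (x) : g x ≤ 1 := by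
      by_cases hxA : x ∈ A <;> by_cases hxE : x ∈ E' <;> simp [hg, hxA, hxE] <;> linarith
    have hgsub : NonposOnSubspaces m' D g := by
      intro V _
      have hV := hm' (Fin m') (Fintype.card_fin m').ge _ (hE'.preimage V) {x | V x ∈ A} fun U => by
        simpa only [Set.mem_ofPred_eq, subspaceComp_apply] using hA (subspaceComp V U)
      have havg : avg (fun x => g (V x)) =
          density ({x | V x ∈ A} ∩ {x | V x ∈ E'}) - ρ * density {x | V x ∈ E'} - ε / 2 := by
        simp only [hg, avg_sub, avg_const_mul, avg_const]
        rfl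
      linarith
    have havg : avg (D.indicator g) =
        density (A ∩ (D ∩ E')) - ρ * density (D ∩ E') - ε / 2 * density D := by
      simp only [density, ← avg_const_mul, ← avg_sub]
      congr 1
      funext x
      by_cases hxA : x ∈ A <;> by_cases hxD : x ∈ D <;> by_cases hxE : x ∈ E' <;>
        simp [hg, hxA, hxD, hxE]
    nlinarith [hn₀ ι hι i D hD g hg1 hgsub, density_le_one D]

lemma DHJ.density_diff_le (h : DHJ β) (m : ℕ) {ρ : ℝ} (hρ : 0 ≤ ρ) (L : List β) :
    ∀ ε : ℝ, 0 < ε →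
    ∃ n₀ : ℕ, ∀ (ι : Type) [Fintype ι] [DecidableEq ι], n₀ ≤ Fintype.card ι →
      ∀ E : Set (ι → Option β), IsInsensitiveInter L E → ∀ A : Set (ι → Option β),
      (∀ V : Subspace (Fin m) (Option β) ι, density {x | V x ∈ A} ≤ ρ) →
      density (A \ E) ≤ ρ * density Eᶜ + ε := by
  induction L with
  | nil =>
    refine fun ε hε => ⟨0, fun ι _ _ _ E hE A _ => ?_⟩
    obtain rfl : E = Set.univ := hE
    rw [Set.sdiff_univ, density_empty, Set.compl_univ, density_empty]
    linarith
  | cons i L ih =>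
    intro ε hε
    obtain ⟨n₁, hn₁⟩ := ih (ε / 2) (half_pos hε)
    obtain ⟨n₂, hn₂⟩ := h.density_inter_le m hρ (i :: L) (ε / 2) (half_pos hε)
    refine ⟨max n₁ n₂, fun ι _ _ hι E hE A hA => ?_⟩
    obtain ⟨D, E', hD, hE', rfl⟩ := hE
    have hdiff := hn₁ ι ((le_max_left _ _).trans hι) E' hE' A hA
    have hinter := hn₂ ι ((le_max_right _ _).trans hι) (Dᶜ ∩ E') ⟨Dᶜ, E', hD.compl, hE', rfl⟩ A hA
    have hA' : density (A \ (D ∩ E')) = density (A \ E') + density (A ∩ (Dᶜ ∩ E')) := by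
      rw [← density_inter_add_diff (A \ (D ∩ E')) E', add_comm]
      congr 2 <;> ext x <;> simp <;> tauto
    have hcompl : density (D ∩ E')ᶜ = density E'ᶜ + density (Dᶜ ∩ E') := by
      rw [← density_inter_add_diff (D ∩ E')ᶜ E', add_comm]
      congr 2 <;> ext x <;> simp <;> tauto
    rw [hA', hcompl]
    linarith

end InsensitiveInter

/-! ### The Graham–Rothschild theorem for lines -/

section WildcardLift
variable {η θ β ι : Type*} {m n r : ℕ}

/-- A subspace over `β`, acting on words over `Option β`; the letter `none` plays the role of a
wildcard. -/
def wildcardLift (σ : Subspace η β ι) : Subspace η (Option β) ι where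
  idxFun i := (σ.idxFun i).map some id
  proper e := by
    obtain ⟨i, hi⟩ := σ.proper e
    exact ⟨i, by simp [hi]⟩

lemma wildcardLift_subspaceComp (σ : Subspace η β ι) (τ : Subspace θ β η) (w : θ → Option β) :
    wildcardLift (subspaceComp σ τ) w = wildcardLift σ (wildcardLift τ w) := by
  funext i
  simp only [Subspace.apply_def, wildcardLift, subspaceComp]
  cases σ.idxFun i <;> simp [Subspace.apply_def]

lemma wildcardLift_some (σ : Subspace η β ι) (x : η → β) :
    (wildcardLift σ fun e => some (x e)) = fun i => some (σ x i) := by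
  funext i
  simp only [Subspace.apply_def, wildcardLift]
  cases σ.idxFun i <;> simp

/-- The subspace whose first coordinate is a new direction, followed by the subspace `σ`. -/
def consSubspace (σ : Subspace (Fin m) β (Fin n)) : Subspace (Fin (m + 1)) β (Fin (n + 1)) where
  idxFun := Fin.cons (Sum.inr 0) fun i => (σ.idxFun i).map id Fin.succ
  proper e := by
    refine Fin.cases ⟨0, rfl⟩ (fun e => ?_) e
    obtain ⟨i, hi⟩ := σ.proper e
    exact ⟨i.succ, by simp [hi]⟩

lemma wildcardLift_consSubspace (σ : Subspace (Fin m) β (Fin n)) (w : Fin (m + 1) → Option β) :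
    wildcardLift (consSubspace σ) w =
      (Fin.cons (w 0) (wildcardLift σ (Fin.tail w)) : Fin (n + 1) → Option β) := by
  funext i
  refine Fin.cases ?_ (fun i => ?_) i
  · simp [Subspace.apply_def, wildcardLift, consSubspace]
  · simp only [Subspace.apply_def, wildcardLift, consSubspace, Fin.cons_succ]
    cases σ.idxFun i <;> simp [Fin.tail]

/-- The subspace over `β` obtained from a subspace `W` over `Option β` by adding a new first
coordinate and merging the constant wildcards of `W` with its direction. -/
def mergeWildcards (W : Subspace (Fin n) (Option β) (Fin r)) :
    Subspace (Fin (n + 1)) β (Fin (r + 1)) where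
  idxFun := Fin.cons (Sum.inr 0) fun i =>
    (W.idxFun i).elim (fun a => a.elim (Sum.inr 0) Sum.inl) fun e => Sum.inr e.succ
  proper e := by
    refine Fin.cases ⟨0, rfl⟩ (fun e => ?_) e
    obtain ⟨i, hi⟩ := W.proper e
    exact ⟨i.succ, by simp [hi]⟩

lemma wildcardLift_mergeWildcards (W : Subspace (Fin n) (Option β) (Fin r))
    (z : Fin n → Option β) :
    wildcardLift (mergeWildcards W) (Fin.cons none z) =
      (Fin.cons none (W z) : Fin (r + 1) → Option β) := by
  funext i
  refine Fin.cases ?_ (fun i => ?_) i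
  · simp [Subspace.apply_def, wildcardLift, mergeWildcards]
  · simp only [Subspace.apply_def, wildcardLift, mergeWildcards, Fin.cons_succ]
    rcases W.idxFun i with (_ | a) | e <;> simp

/-- The concatenation of a one-dimensional subspace, giving direction `0`, and the subspace
`σ`. -/
def appendSubspace (l : Subspace (Fin 1) β (Fin r)) (σ : Subspace (Fin m) β (Fin n)) :
    Subspace (Fin (m + 1)) β (Fin (r + n)) where
  idxFun := Fin.append (fun i => (l.idxFun i).map id fun _ => 0)
    fun i => (σ.idxFun i).map id Fin.succ
  proper e := by
    refine Fin.cases ?_ (fun e => ?_) e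
    · obtain ⟨i, hi⟩ := l.proper 0
      exact ⟨Fin.castAdd _ i, by simp [hi]⟩
    · obtain ⟨i, hi⟩ := σ.proper e
      exact ⟨Fin.natAdd _ i, by simp [hi]⟩

lemma wildcardLift_appendSubspace (l : Subspace (Fin 1) β (Fin r))
    (σ : Subspace (Fin m) β (Fin n)) (w : Fin (m + 1) → Option β) :
    wildcardLift (appendSubspace l σ) w =
      Fin.append (wildcardLift l fun _ => w 0) (wildcardLift σ (Fin.tail w)) := by
  funext i
  induction i using Fin.addCases with
  | left i =>
    simp only [Subspace.apply_def, wildcardLift, appendSubspace, Fin.append_left]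
    cases l.idxFun i <;> simp
  | right i =>
    simp only [Subspace.apply_def, wildcardLift, appendSubspace, Fin.append_right]
    cases σ.idxFun i <;> simp [Fin.tail]

end WildcardLift

/-- A colouring of words with wildcards is prefix-determined if the colour of a word depends only
on any prefix that ends with a wildcard. -/
def PrefixDetermined {β κ : Type*} {n : ℕ} (C : (Fin n → Option β) → κ) : Prop :=
  ∀ (w w' : Fin n → Option β) (j : Fin n), w j = none → (∀ i ≤ j, w i = w' i) → C w = C w'

lemma exists_prefixDetermined (β : Type) [Finite β] (m : ℕ) : ∀ (κ : Type) [Finite κ],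
    ∃ M : ℕ, ∀ C : (Fin M → Option β) → κ, ∃ σ : Subspace (Fin m) β (Fin M),
      PrefixDetermined fun w => C (wildcardLift σ w) := by
  induction m with
  | zero => exact fun κ _ => ⟨0, fun C => ⟨⟨Fin.elim0, fun e => e.elim0⟩, fun w w' j => j.elim0⟩⟩
  | succ m ih =>
    intro κ _
    obtain ⟨M, hM⟩ := ih (β → κ)
    obtain ⟨R, hR⟩ := Subspace.exists_mono_in_high_dimension_fin (Option β) κ (Fin M)
    refine ⟨R + 1, fun C => ?_⟩
    obtain ⟨W, c, hW⟩ := hR fun z => C (Fin.cons none z)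
    obtain ⟨σ, hσ⟩ := hM fun z b => C (wildcardLift (mergeWildcards W) (Fin.cons (some b) z))
    refine ⟨subspaceComp (mergeWildcards W) (consSubspace σ), fun w w' j hj hw => ?_⟩
    simp only [wildcardLift_subspaceComp, wildcardLift_consSubspace, ← hw 0 (Fin.zero_le _)]
    rcases hw0 : w 0 with _ | b
    · simp only [wildcardLift_mergeWildcards, hW]
    · induction j using Fin.cases with
      | zero => simp [hw0] at hj
      | succ j =>
        exact congrFun (hσ (Fin.tail w) (Fin.tail w') j hj
          fun i hi => hw i.succ (Fin.succ_le_succ_iff.2 hi)) b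

/-- The colour of a word depends only on the position of its first wildcard. -/
def FirstWildcardDetermined {β κ : Type*} {n : ℕ} (C : (Fin n → Option β) → κ)
    (c : Fin n → κ) : Prop :=
  ∀ (w : Fin n → Option β) (j : Fin n), w j = none → (∀ i < j, w i ≠ none) → C w = c j

lemma PrefixDetermined.append_some {β κ : Type*} {n m : ℕ} {C : (Fin (n + m) → Option β) → κ}
    (hC : PrefixDetermined C) :
    PrefixDetermined fun (z : Fin m → Option β) (u : Fin n → β) =>
      C (Fin.append (fun i => some (u i)) z) := by
  refine fun w w' j hj hw => funext fun u => hC _ _ (Fin.natAdd n j) (by simpa using hj) ?_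
  intro i hi
  induction i using Fin.addCases with
  | left i => simp
  | right i => simpa using hw i (by simpa using hi)

lemma PrefixDetermined.append_eq {β κ : Type*} {n m : ℕ} {C : (Fin (n + m) → Option β) → κ}
    (hC : PrefixDetermined C) {u : Fin n → Option β} {i : Fin n} (hi : u i = none)
    (z z' : Fin m → Option β) : C (Fin.append u z) = C (Fin.append u z') := by
  refine hC _ _ (Fin.castAdd m i) (by simpa using hi) fun j hj => ?_
  induction j using Fin.addCases with
  | left j => simp
  | right j =>
    have : n + (j : ℕ) ≤ i := hj
    omega

lemma PrefixDetermined.exists_firstWildcardDetermined (β : Type) [Finite β] (m : ℕ) :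
    ∀ (κ : Type) [Finite κ], ∃ M : ℕ, ∀ C : (Fin M → Option β) → κ, PrefixDetermined C →
      ∃ (σ : Subspace (Fin m) β (Fin M)) (c : Fin m → κ),
        FirstWildcardDetermined (fun w => C (wildcardLift σ w)) c := by
  induction m with
  | zero =>
    exact fun κ _ => ⟨0, fun C _ => ⟨⟨Fin.elim0, fun e => e.elim0⟩, Fin.elim0, fun w j => j.elim0⟩⟩
  | succ m ih =>
    intro κ _
    obtain ⟨n, hn⟩ := Subspace.exists_mono_in_high_dimension_fin β (Fin m → κ) (Fin 1)
    obtain ⟨M, hM⟩ := ih ((Fin n → β) → κ)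
    refine ⟨n + M, fun C hC => ?_⟩
    obtain ⟨σ, c, hc⟩ := hM _ hC.append_some
    obtain ⟨l, d, hl⟩ := hn fun u j => c j u
    let ρ := wildcardLift (appendSubspace l σ)
    refine ⟨appendSubspace l σ, Fin.cons (C (ρ fun _ => none)) d, fun w j hj hlt => ?_⟩
    induction j using Fin.cases with
    | zero =>
      obtain ⟨i, hi⟩ := l.proper 0
      simp only [ρ, Fin.cons_zero, wildcardLift_appendSubspace, hj]
      exact hC.append_eq (i := i) (by simp [Subspace.apply_def, wildcardLift, hi]) _ _
    | succ j =>
      obtain ⟨b, hb⟩ := Option.ne_none_iff_exists'.1 (hlt 0 (Fin.succ_pos j))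
      have hσ := hc (Fin.tail w) j hj fun i hi => hlt i.succ (Fin.succ_lt_succ_iff.2 hi)
      simp only [Fin.cons_succ, wildcardLift_appendSubspace, hb, wildcardLift_some]
      exact (congrFun hσ (l fun _ => b)).trans (congrFun (hl fun _ => b) j)

/-- The subspace of words that are constantly `b` outside `S`. -/
def coordinateSubspace {β : Type*} {m n : ℕ} {S : Finset (Fin n)} (e : S ≃ Fin m) (b : β) :
    Subspace (Fin m) β (Fin n) where
  idxFun i := if h : i ∈ S then Sum.inr (e ⟨i, h⟩) else Sum.inl b
  proper j := ⟨e.symm j, by simp⟩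

lemma FirstWildcardDetermined.exists_mono {β κ : Type*} {m n : ℕ} {C : (Fin n → Option β) → κ}
    {c : Fin n → κ} (hC : FirstWildcardDetermined C c) {a : κ} {S : Finset (Fin n)}
    (hS : ∀ i ∈ S, c i = a) (e : S ≃ Fin m) (b : β) {w : Fin m → Option β} {j : Fin m}
    (hj : w j = none) : C (wildcardLift (coordinateSubspace e b) w) = a := by
  classical
  set w' := wildcardLift (coordinateSubspace e b) w with hw'
  have hnone : ({i | w' i = none} : Finset (Fin n)).Nonempty :=
    ⟨e.symm j, by simp [hw', Subspace.apply_def, wildcardLift, coordinateSubspace, hj]⟩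
  obtain ⟨i, hi, hmin⟩ := exists_min_image _ id hnone
  rw [mem_filter_univ] at hi
  have hiS : i ∈ S := by
    by_contra hiS
    simp [hw', Subspace.apply_def, wildcardLift, coordinateSubspace, hiS] at hi
  rw [hC w' i hi fun i' hlt hnone' => hlt.not_ge (hmin i' (by simpa using hnone')), hS i hiS]

/-- The Graham–Rothschild theorem for combinatorial lines: a line over `β` is encoded as a word
over `Option β` with at least one `none`. -/
lemma exists_subspace_mono_lines (β : Type) [Finite β] [Nonempty β] (m : ℕ) (κ : Type) [Finite κ] :
    ∃ M : ℕ, ∀ C : (Fin M → Option β) → κ, ∃ (σ : Subspace (Fin m) β (Fin M)) (c : κ),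
      ∀ w : Fin m → Option β, (∃ j, w j = none) → C (wildcardLift σ w) = c := by
  classical
  have := Fintype.ofFinite κ
  rcases isEmpty_or_nonempty κ with hκ | hκ
  · exact ⟨0, fun C => hκ.elim (C Fin.elim0)⟩
  obtain ⟨M₁, hM₁⟩ :=
    PrefixDetermined.exists_firstWildcardDetermined β (Fintype.card κ * m) κ
  obtain ⟨M, hM⟩ := exists_prefixDetermined β M₁ κ
  refine ⟨M, fun C => ?_⟩
  obtain ⟨σ, hσ⟩ := hM C
  obtain ⟨τ, c, hc⟩ := hM₁ _ hσ
  obtain ⟨a, -, ha⟩ := exists_le_card_fiber_of_mul_le_card_of_maps_to (s := univ)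
    (f := c) (n := m) (fun _ _ => mem_univ _) (univ_nonempty (α := κ)) (by simp)
  obtain ⟨S, hS, hSm⟩ := exists_subset_card_eq ha
  let ρ := coordinateSubspace (S.equivFinOfCardEq hSm) (Classical.arbitrary β)
  refine ⟨subspaceComp (subspaceComp σ τ) ρ, a, fun w ⟨j, hj⟩ => ?_⟩
  rw [wildcardLift_subspaceComp, wildcardLift_subspaceComp]
  exact hc.exists_mono (fun i hi => (mem_filter.1 (hS hi)).2) _ _ hj

/-! ### The density Hales–Jewett theorem -/

section FillWildcards
variable {β η ι : Type*}

/-- Substitute the letter `b` for the wildcard `none`. -/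
def fillWildcards (w : ι → Option β) (b : β) : ι → Option β := fun j => some ((w j).getD b)

lemma fillWildcards_wildcardLift (σ : Subspace η β ι) (w : η → Option β) (b : β) :
    fillWildcards (wildcardLift σ w) b = wildcardLift σ (fillWildcards w b) := by
  funext i
  simp only [fillWildcards, Subspace.apply_def, wildcardLift]
  cases σ.idxFun i <;> simp [fillWildcards]

/-- The words all of whose fillings lie in `A`. -/
def fillingsIn (A : Set (ι → Option β)) : Set (ι → Option β) := {w | ∀ b, fillWildcards w b ∈ A}

lemma LineFree.inter_fillingsIn_subset {A : Set (ι → Option β)} (hA : LineFree A) :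
    A ∩ fillingsIn A ⊆ {w | ∀ j, w j ≠ none} := by
  rintro w ⟨hwA, hwfill⟩ j hj
  let l : Line (Option β) ι := ⟨fun i => (w i).map some, j, by simp [hj]⟩
  obtain ⟨a, ha⟩ := hA l
  have hnone : l none = w := by
    funext i
    simp only [l, Line.coe_apply]
    cases w i <;> simp
  have hsome (b : β) : l (some b) = fillWildcards w b := by
    funext i
    simp only [l, Line.coe_apply, fillWildcards]
    cases w i <;> simp
  cases a with
  | none => exact ha (by rwa [hnone])
  | some b => exact ha (by rw [hsome]; exact hwfill b)

lemma isInsensitiveInter_fillingsIn [Fintype β] (A : Set (ι → Option β)) :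
    IsInsensitiveInter (univ : Finset β).toList (fillingsIn A) := by
  have hlist (L : List β) : IsInsensitiveInter L {w | ∀ b ∈ L, fillWildcards w b ∈ A} := by
    induction L with
    | nil => simp [IsInsensitiveInter]
    | cons b L ih =>
      refine ⟨{w | fillWildcards w b ∈ A}, _, fun w w' hww' hw => ?_, ih, by ext w; simp⟩
      have hfill : fillWildcards w b = fillWildcards w' b := by
        funext j
        simp [fillWildcards, hww']
      rwa [Set.mem_ofPred_eq, ← hfill]
  simpa [fillingsIn] using hlist (univ : Finset β).toList

end FillWildcards

lemma exists_density_ne_none_lt (β : Type) [Fintype β] {ε : ℝ} (hε : 0 < ε) :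
    ∃ n₀ : ℕ, ∀ (ι : Type) [Fintype ι] [DecidableEq ι], n₀ ≤ Fintype.card ι →
      density {w : ι → Option β | ∀ j, w j ≠ none} < ε := by
  set q : ℝ := avg fun a : Option β => if a.isSome then (1 : ℝ) else 0 with hq
  have hq0 : 0 ≤ q := avg_nonneg fun a => by split_ifs <;> norm_num
  have hq1 : q < 1 := by
    rw [hq, avg, div_lt_one (by positivity), Fintype.sum_option, Fintype.card_option]
    simp
  obtain ⟨n₀, hn₀⟩ := exists_pow_lt_of_lt_one hε hq1
  refine ⟨n₀, fun ι _ _ hι => ?_⟩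
  have hpow : density {w : ι → Option β | ∀ j, w j ≠ none} = q ^ Fintype.card ι := by
    rw [hq, ← avg_pi_prod, density]
    congr! 2 with w
    rw [prod_ite_zero, Set.indicator_apply]
    simp [Option.isSome_iff_ne_none]
  rw [hpow]
  exact (pow_le_pow_of_le_one hq0 hq1.le hι).trans_lt hn₀

section CriticalDensity
variable {α : Type} [Fintype α] {δ δ' ε : ℝ}

lemma DHJAt.mono (h : DHJAt α δ) (hδ : δ ≤ δ') : DHJAt α δ' := by
  obtain ⟨n, hn⟩ := h
  exact ⟨n, fun ι _ _ hι A hA => (hn ι hι A hA).trans_le hδ⟩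

/-- The positive threshold above which the density Hales–Jewett theorem holds and below which it
fails. -/
structure IsCriticalDensity (α : Type) [Fintype α] (δ : ℝ) : Prop where
  pos : 0 < δ
  dhjAt_add : ∀ ε : ℝ, 0 < ε → DHJAt α (δ + ε)
  not_dhjAt_sub : ∀ ε : ℝ, 0 < ε → ¬ DHJAt α (δ - ε)

lemma exists_isCriticalDensity [Nonempty α] (h : ¬ DHJ α) : ∃ δ, IsCriticalDensity α δ := by
  simp only [DHJ, not_forall] at h
  obtain ⟨δ₀, hδ₀, hfail⟩ := h
  set S : Set ℝ := {δ | DHJAt α δ}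
  have hS : S.Nonempty := ⟨2, 0, fun ι _ _ _ A _ => (density_le_one A).trans_lt one_lt_two⟩
  have hlower : ∀ δ ∈ S, δ₀ ≤ δ := fun δ hδ => le_of_not_ge fun hle => hfail (DHJAt.mono hδ hle)
  refine ⟨sInf S, hδ₀.trans_le (le_csInf hS hlower), fun ε hε => ?_, fun ε hε hmem => ?_⟩
  · obtain ⟨δ, hδ, hlt⟩ := exists_lt_of_csInf_lt hS (lt_add_of_pos_right (sInf S) hε)
    exact DHJAt.mono hδ hlt.le
  · exact (sub_lt_self _ hε).not_ge (csInf_le ⟨δ₀, hlower⟩ hmem)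

lemma sub_card_mul_le_of_le_avg {Ω : Type*} [Fintype Ω] {f : Ω → ℝ} {a b : ℝ}
    (hb : ∀ x, f x ≤ b) (ha : a ≤ avg f) (x : Ω) : b - Fintype.card Ω * (b - a) ≤ f x := by
  have hcard : (0 : ℝ) < Fintype.card Ω := Nat.cast_pos.2 (Fintype.card_pos_iff.2 ⟨x⟩)
  rw [avg, le_div_iff₀ hcard] at ha
  have hsingle : b - f x ≤ ∑ y, (b - f y) :=
    single_le_sum (f := fun y => b - f y) (fun y _ => sub_nonneg.2 (hb y)) (mem_univ x)
  rw [sum_sub_distrib, sum_const, card_univ, nsmul_eq_mul] at hsingle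
  linarith

/-- A line-free set of density close to the critical density `δ` has no slice of density much
larger than `δ`, and hence none of density much smaller than `δ`. -/
lemma IsCriticalDensity.exists_lineFree [Nonempty α] (h : IsCriticalDensity α δ) (M : ℕ)
    (hε : 0 < ε) :
    ∃ (r : ℕ) (A : Set (Fin M ⊕ Fin r → α)), LineFree A ∧
      ∀ t : Fin M → α, δ - ε ≤ density {y : Fin r → α | Sum.elim t y ∈ A} := by
  set K : ℝ := (Fintype.card (Fin M → α) : ℝ) with hK
  have hK0 : 0 < K := Nat.cast_pos.2 Fintype.card_pos
  set τ := ε / (2 * K) with hτ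
  have hτ0 : 0 < τ := by positivity
  obtain ⟨n, hn⟩ := h.dhjAt_add τ hτ0
  have hfail := h.not_dhjAt_sub τ hτ0
  simp only [DHJAt, not_exists, not_forall, not_lt] at hfail
  obtain ⟨ι, _, _, hι, A, hA, hAδ⟩ := hfail (M + n)
  obtain ⟨e⟩ := nonempty_equiv_sum (n := M) (le_of_add_le_left hι)
  rw [← density_fullSubspace e, density_eq_avg_right] at hAδ
  have hA' := hA.preimage (fullSubspace e)
  refine ⟨Fintype.card ι - M, _, hA', fun t => ?_⟩
  have hlow := sub_card_mul_le_of_le_avg (b := δ + τ) (fun t => ?_) hAδ t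
  · have hKτ : K * (δ + τ - (δ - τ)) = ε := by rw [hτ]; field_simp; ring
    rw [← hK, hKτ] at hlow
    exact (by linarith : δ - ε ≤ δ + τ - ε).trans hlow
  · refine (hn _ (by rw [Fintype.card_fin]; omega) _ ?_).le
    have hfree := hA'.preimage (rightSlice t)
    simp only [rightSlice_apply] at hfree
    exact hfree

end CriticalDensity

section Increment
variable {β : Type} [Fintype β] [Nonempty β] {δ ε θ : ℝ}

lemma exists_word_le_density_forall_mem {m n : ℕ} {Y : Type*} [Fintype Y] [Nonempty Y]
    [Fintype (Line β (Fin m))] (hδ : 0 < δ)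
    (hm : ∀ A : Set (Fin m → β), LineFree A → density A < δ / 2) (hmn : m ≤ n)
    {A : (Fin n → Option β) → Set Y} (hA : ∀ w, δ ≤ density (A w)) :
    ∃ w : Fin n → Option β, (∃ j, w j = none) ∧
      δ / 2 / (Fintype.card (Line β (Fin m)) + 1) ≤
        density {y | ∀ b, y ∈ A (fillWildcards w b)} := by
  obtain ⟨S, -, hS⟩ := exists_subset_card_eq (hmn.trans_eq (card_fin n).symm)
  set σ := coordinateSubspace (S.equivFinOfCardEq hS) (Classical.arbitrary β) with hσ
  obtain ⟨l, hl⟩ := exists_line_le_density hδ hm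
    (A := fun x => A (wildcardLift σ fun j => some (x j))) (le_avg fun x => hA _)
  obtain ⟨j, hj⟩ := l.proper
  refine ⟨wildcardLift σ l.idxFun, ⟨(S.equivFinOfCardEq hS).symm j, ?_⟩, ?_⟩
  · simp [hσ, Subspace.apply_def, wildcardLift, coordinateSubspace, hj]
  · simp only [fillWildcards_wildcardLift]
    exact hl

/-- By the theorem for `β` some line over `β` has a substantial common intersection; by the
Graham–Rothschild theorem we may assume that all of them do. -/
lemma DHJ.exists_lineFree_family (h : DHJ β) (hδ : IsCriticalDensity (Option β) δ) :
    ∃ θ > 0, ∃ m₀, ∀ m ≥ m₀, ∀ ε > 0, ∃ (Y : Type) (_ : Fintype Y) (_ : Nonempty Y)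
      (A : (Fin m → Option β) → Set Y), (∀ y, LineFree {w | y ∈ A w}) ∧
        (∀ w, δ - ε ≤ density (A w)) ∧
        ∀ w, (∃ j, w j = none) → θ ≤ density {y | ∀ b, y ∈ A (fillWildcards w b)} := by
  have hδ0 := hδ.pos
  obtain ⟨m₀, hm₀⟩ := h (δ / 2 / 2) (by positivity)
  have := Fintype.ofFinite (Line β (Fin m₀))
  refine ⟨δ / 2 / 2 / (Fintype.card (Line β (Fin m₀)) + 1), by positivity, m₀,
    fun m hm ε hε => ?_⟩
  set θ : ℝ := δ / 2 / 2 / (Fintype.card (Line β (Fin m₀)) + 1)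
  obtain ⟨M, hM⟩ := exists_subspace_mono_lines β m Prop
  obtain ⟨r, A, hA, hAδ⟩ := hδ.exists_lineFree M (lt_min hε (half_pos hδ0))
  obtain ⟨σ, c, hc⟩ :=
    hM fun t => θ ≤ density {y : Fin r → Option β | ∀ b, Sum.elim (fillWildcards t b) y ∈ A}
  set B : (Fin m → Option β) → Set (Fin r → Option β) :=
    fun w => {y | Sum.elim (wildcardLift σ w) y ∈ A}
  have hB (w) : δ - min ε (δ / 2) ≤ density (B w) := hAδ _
  simp only [fillWildcards_wildcardLift] at hc
  obtain ⟨w₀, hw₀, hw₀θ⟩ := exists_word_le_density_forall_mem (half_pos hδ0)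
    (hm₀ (Fin m₀) (Fintype.card_fin m₀).ge) hm (A := B)
    fun w => by linarith [hB w, min_le_right ε (δ / 2)]
  refine ⟨Fin r → Option β, inferInstance, inferInstance, B, fun y => ?_,
    fun w => by linarith [hB w, min_le_left ε (δ / 2)], fun w hw => ?_⟩
  · have hfree := (hA.preimage (leftSlice y)).preimage (wildcardLift σ)
    simp only [leftSlice_apply] at hfree
    exact hfree
  · exact ((hc w hw).trans (hc w₀ hw₀).symm).mpr hw₀θ

lemma exists_le_and_le_of_le_avg {Ω : Type*} [Fintype Ω] [Nonempty Ω] {f g : Ω → ℝ} {a : ℝ}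
    (hε : 0 < ε) (hf : ∀ x, f x ≤ a + ε * θ / 16) (hg : ∀ x, g x ≤ 1)
    (havgf : a - ε * θ / 16 ≤ avg f) (hθ : 0 < θ) (havgg : θ / 2 ≤ avg g) :
    ∃ x, a - ε ≤ f x ∧ θ / 4 ≤ g x := by
  obtain ⟨x, hx⟩ := exists_avg_le fun x => f x + ε / 2 * g x
  rw [avg_add, avg_const_mul] at hx
  refine ⟨x, ?_, ?_⟩
  · nlinarith [hg x, avg_le hg]
  · by_contra! hlt
    nlinarith [hf x, mul_pos hε hθ]

lemma DHJ.exists_lineFree_fillingsIn (h : DHJ β) (hδ : IsCriticalDensity (Option β) δ) :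
    ∃ θ > 0, ∀ ε > 0, ∃ m₀, ∀ m ≥ m₀, ∃ A : Set (Fin m → Option β), LineFree A ∧
      δ - ε ≤ density A ∧ θ / 4 ≤ density (fillingsIn A) := by
  obtain ⟨θ, hθ, m₁, hm₁⟩ := h.exists_lineFree_family hδ
  refine ⟨θ, hθ, fun ε hε => ?_⟩
  obtain ⟨m₂, hm₂⟩ := hδ.dhjAt_add (ε * θ / 16) (by positivity)
  obtain ⟨m₃, hm₃⟩ := exists_density_ne_none_lt β (half_pos one_pos)
  refine ⟨max m₁ (max m₂ m₃), fun m hm => ?_⟩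
  simp only [ge_iff_le, max_le_iff] at hm
  obtain ⟨Y, _, _, A, hfree, hA, hfill⟩ := hm₁ m hm.1 (ε * θ / 16) (by positivity)
  have havgA : δ - ε * θ / 16 ≤ avg fun y => density {w | y ∈ A w} := by
    rw [← avg_density_comm]
    exact le_avg hA
  have havgfill : θ / 2 ≤ avg fun y => density (fillingsIn {w | y ∈ A w}) := by
    set full : Set (Fin m → Option β) := {w | ∀ j, w j ≠ none}
    have hfull : density full < 1 / 2 := hm₃ (Fin m) (hm.2.2.trans_eq (Fintype.card_fin m).symm)
    calc θ / 2 ≤ θ * (1 - density full) := by nlinarith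
      _ = avg fun w => θ * (1 - full.indicator (fun _ => 1) w) := by
        rw [avg_const_mul, avg_sub, avg_const, density]
      _ ≤ avg fun w => density {y | ∀ b, y ∈ A (fillWildcards w b)} := by
        refine avg_mono fun w => ?_
        by_cases hw : w ∈ full
        · simpa [hw] using density_nonneg _
        · rw [Set.indicator_of_notMem hw, sub_zero, mul_one]
          exact hfill w (by simpa [full] using hw)
      _ = avg fun y => density (fillingsIn {w | y ∈ A w}) := avg_density_comm _
  obtain ⟨y, hyA, hyfill⟩ := exists_le_and_le_of_le_avg hε
    (fun y => (hm₂ (Fin m) (hm.2.1.trans_eq (Fintype.card_fin m).symm) _ (hfree y)).le)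
    (fun y => density_le_one (fillingsIn {w | y ∈ A w})) havgA hθ havgfill
  exact ⟨_, hfree y, hyA, hyfill⟩

/-- A nearly extremal line-free set `A` essentially avoids `fillingsIn A`, an intersection of
insensitive sets; as its density on the complement is at most about `δ`, it falls short of the
critical density `δ`. -/
lemma DHJ.option (h : DHJ β) : DHJ (Option β) := by
  by_contra hfail
  obtain ⟨δ, hδ⟩ := exists_isCriticalDensity hfail
  have hδ0 := hδ.pos
  obtain ⟨θ, hθ, hA⟩ := h.exists_lineFree_fillingsIn hδ
  set ε := δ * θ / 20 with hε
  have hε0 : 0 < ε := by positivity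
  obtain ⟨m₀, hm₀⟩ := hA ε hε0
  obtain ⟨m₁, hm₁⟩ := hδ.dhjAt_add ε hε0
  obtain ⟨m₂, hm₂⟩ :=
    h.density_diff_le m₁ (add_pos hδ0 hε0).le (univ : Finset β).toList ε hε0
  obtain ⟨m₃, hm₃⟩ := exists_density_ne_none_lt β hε0
  set m := max m₀ (max m₂ m₃) with hm
  obtain ⟨A, hfree, hAδ, hfill⟩ := hm₀ m (le_max_left _ _)
  have hinter : density (A ∩ fillingsIn A) ≤ ε :=
    (density_mono hfree.inter_fillingsIn_subset).trans
      (hm₃ (Fin m) (by simp [hm])).le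
  have hdiff : density (A \ fillingsIn A) ≤ (δ + ε) * (1 - density (fillingsIn A)) + ε := by
    rw [← density_compl]
    exact hm₂ (Fin m) (by simp [hm]) _ (isInsensitiveInter_fillingsIn A) A fun V =>
      (hm₁ (Fin m₁) (Fintype.card_fin m₁).ge _ (hfree.preimage V)).le
  have hsplit := density_inter_add_diff A (fillingsIn A)
  nlinarith [mul_pos hδ0 hθ]

end Increment

/-! ### Szemerédi's theorem -/

section Alphabet
variable {α β : Type} [Fintype α] [Fintype β]

lemma DHJ.congr (e : α ≃ β) (h : DHJ α) : DHJ β := fun δ hδ => by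
  obtain ⟨n, hn⟩ := h δ hδ
  refine ⟨n, fun ι _ _ hι A hA => ?_⟩
  rw [← density_preimage_equiv (Equiv.arrowCongr (Equiv.refl ι) e)]
  refine hn ι hι _ fun l => ?_
  obtain ⟨b, hb⟩ := hA (l.map e)
  obtain ⟨a, rfl⟩ := e.surjective b
  rw [Line.map_apply] at hb
  exact ⟨a, hb⟩

lemma DHJ.of_unique [Unique α] : DHJ α := fun δ hδ => by
  refine ⟨1, fun ι _ _ hι A hA => ?_⟩
  obtain ⟨j⟩ := Fintype.card_pos_iff.1 hι
  obtain ⟨a, ha⟩ := hA ⟨fun _ => none, j, rfl⟩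
  have hempty : A = ∅ :=
    Set.eq_empty_of_forall_notMem fun x hx => ha (by rwa [Subsingleton.elim x] at hx)
  rwa [hempty, density_empty]

end Alphabet

lemma dhj_fin_succ (k : ℕ) : DHJ (Fin (k + 1)) := by
  induction k with
  | zero => exact DHJ.of_unique (α := Fin 1)
  | succ k ih => exact ih.option.congr (finSuccEquiv (k + 1)).symm

section Progressions
variable {N : ℕ} [NeZero N]

/-- The average of `f x * f (x + d) * ⋯ * f (x + (k - 1) * d)` over all `x` and `d`. -/
noncomputable def progressionAvg (k : ℕ) (f : ZMod N → ℝ) : ℝ :=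
  avg fun p : ZMod N × ZMod N => ∏ i ∈ range k, f (p.1 + (i : ZMod N) * p.2)

lemma card_ker_nsmul_le {r : ℕ} (hr : 0 < r) :
    Nat.card (nsmulAddMonoidHom (α := ZMod N) r).ker ≤ r := by
  refine le_trans (le_of_eq ?_) (IsAddCyclic.card_nsmul_eq_zero_le (α := ZMod N) hr)
  rw [Nat.card_eq_fintype_card, Fintype.card_subtype]
  simp [AddMonoidHom.mem_ker]

lemma avg_comp_nsmul_le {r : ℕ} (hr : 0 < r) {g : ZMod N → ℝ} (hg : ∀ x, 0 ≤ g x) :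
    (avg fun d => g (r • d)) ≤ r * avg g :=
  (avg_comp_endomorphism_le (nsmulAddMonoidHom r) hg).trans <| by
    have := avg_nonneg hg
    have := card_ker_nsmul_le (N := N) hr
    gcongr

/-- The digit sum maps lines to progressions whose step is `lineStep`. -/
def digitSum {k n : ℕ} (w : Fin n → Fin k) : ℕ := ∑ j, (w j : ℕ)

/-- The number of wildcards of a combinatorial line. -/
def lineStep {α : Type*} {n : ℕ} (l : Line α (Fin n)) : ℕ := #{j | l.idxFun j = none}

lemma lineStep_pos {α : Type*} {n : ℕ} (l : Line α (Fin n)) : 0 < lineStep l :=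
  card_pos.2 (l.proper.imp fun j hj => by simp [hj])

lemma lineStep_le {α : Type*} {n : ℕ} (l : Line α (Fin n)) : lineStep l ≤ n :=
  (card_le_univ _).trans_eq (card_fin n)

lemma digitSum_line {k n : ℕ} (l : Line (Fin (k + 1)) (Fin n)) (i : Fin (k + 1)) :
    digitSum (l i) = digitSum (l 0) + i * lineStep l := by
  rw [digitSum, digitSum, lineStep, card_filter, mul_sum, ← sum_add_distrib]
  refine sum_congr rfl fun j _ => ?_
  rw [Line.coe_apply, Line.coe_apply]
  cases l.idxFun j <;> simp

lemma avg_prod_progression_comp_nsmul_le (k s : ℕ) {r : ℕ} (hr : 0 < r) {f : ZMod N → ℝ}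
    (hf : ∀ x, 0 ≤ f x) :
    (avg fun p : ZMod N × ZMod N =>
      ∏ i ∈ range k, f (p.1 + ((s + i * r : ℕ) : ZMod N) * p.2)) ≤ r * progressionAvg k f := by
  set g : ZMod N → ℝ := fun d => avg fun x => ∏ i ∈ range k, f (x + i * d) with hg
  have hg0 : ∀ d, 0 ≤ g d := fun d => avg_nonneg fun x => prod_nonneg fun i _ => hf _
  calc (avg fun p : ZMod N × ZMod N =>
        ∏ i ∈ range k, f (p.1 + ((s + i * r : ℕ) : ZMod N) * p.2))
      = avg fun d => g (r • d) := by
        rw [avg_prod, avg_comm]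
        congr! 2 with d
        refine Eq.trans ?_ (avg_add_right (s * d) fun x => ∏ i ∈ range k, f (x + i * (r • d)))
        congr! 4 with x i
        push_cast
        rw [nsmul_eq_mul]
        ring
    _ ≤ r * avg g := avg_comp_nsmul_le hr hg0
    _ = r * progressionAvg k f := by rw [progressionAvg, avg_prod, avg_comm]

lemma half_le_density_shift {f : ZMod N → ℝ} {δ : ℝ} (hf : ∀ x, f x ≤ 1) (hδ : 0 ≤ δ)
    (h : δ ≤ avg f) (s : ℕ) :
    δ / 2 ≤ density {p : ZMod N × ZMod N | δ / 2 ≤ f (p.1 + (s : ZMod N) * p.2)} := by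
  have hshift : (avg fun p : ZMod N × ZMod N => f (p.1 + (s : ZMod N) * p.2)) = avg f := by
    rw [avg_prod, avg_comm]
    simp only [avg_add_right, avg_const]
  exact half_le_density_of_le_avg (fun p => hf _) hδ (h.trans_eq hshift.symm)

lemma pow_mul_density_line_le {k n : ℕ} (l : Line (Fin (k + 1)) (Fin n)) {f : ZMod N → ℝ}
    (hf : ∀ x, 0 ≤ f x) {ε : ℝ} (hε : 0 ≤ ε) :
    ε ^ (k + 1) *
        density {p : ZMod N × ZMod N | ∀ i, ε ≤ f (p.1 + (digitSum (l i) : ZMod N) * p.2)} ≤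
      n * progressionAvg (k + 1) f := by
  set D : Set (ZMod N × ZMod N) := {p | ∀ i, ε ≤ f (p.1 + (digitSum (l i) : ZMod N) * p.2)}
  have hΛ : 0 ≤ progressionAvg (k + 1) f := avg_nonneg fun p => prod_nonneg fun i _ => hf _
  calc ε ^ (k + 1) * density D = avg fun p => ε ^ (k + 1) * D.indicator (fun _ => 1) p :=
        (avg_const_mul _ _).symm
    _ ≤ avg fun p : ZMod N × ZMod N => ∏ i ∈ range (k + 1),
          f (p.1 + ((digitSum (l 0) + i * lineStep l : ℕ) : ZMod N) * p.2) := by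
        refine avg_mono fun p => ?_
        by_cases hp : p ∈ D
        · rw [Set.indicator_of_mem hp, mul_one]
          refine le_of_eq_of_le (by rw [prod_const, card_range])
            (prod_le_prod (f := fun _ => ε) (fun _ _ => hε) fun i hi => ?_)
          exact (hp ⟨i, mem_range.1 hi⟩).trans_eq (by rw [digitSum_line])
        · rw [Set.indicator_of_notMem hp, mul_zero]
          exact prod_nonneg fun i _ => hf _
    _ ≤ lineStep l * progressionAvg (k + 1) f :=
        avg_prod_progression_comp_nsmul_le _ _ (lineStep_pos l) hf
    _ ≤ n * progressionAvg (k + 1) f := by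
        have := lineStep_le l
        gcongr

/-- For fixed `p`, the map sending `w` to `p.1 + digitSum w * p.2` turns combinatorial lines into
arithmetic progressions, so a line along which `f` is large for many `p` yields many of them. -/
theorem szemeredi {k : ℕ} (hk : 1 ≤ k) {δ : ℝ} (hδ : 0 < δ) :
    ∃ c : ℝ, 0 < c ∧ ∀ N : ℕ, ∀ [NeZero N], ∀ f : ZMod N → ℝ, (∀ x, 0 ≤ f x ∧ f x ≤ 1) →
      δ ≤ avg f → c ≤ progressionAvg k f := by
  obtain ⟨k, rfl⟩ := Nat.exists_eq_add_of_le' hk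
  obtain ⟨n, hn⟩ := dhj_fin_succ k (δ / 2 / 2) (by positivity)
  have := Fintype.ofFinite (Line (Fin (k + 1)) (Fin n))
  set θ : ℝ := δ / 2 / 2 / (Fintype.card (Line (Fin (k + 1)) (Fin n)) + 1)
  refine ⟨(δ / 2) ^ (k + 1) * θ / (n + 1), by positivity, fun N _ f hf hfδ => ?_⟩
  obtain ⟨l, hl⟩ := exists_line_le_density (half_pos hδ) (hn (Fin n) (Fintype.card_fin n).ge)
    (A := fun w => {p : ZMod N × ZMod N | δ / 2 ≤ f (p.1 + (digitSum w : ZMod N) * p.2)})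
    (le_avg fun w => half_le_density_shift (fun x => (hf x).2) hδ.le hfδ _)
  have hΛ : 0 ≤ progressionAvg (k + 1) f := avg_nonneg fun p => prod_nonneg fun i _ => (hf _).1
  rw [div_le_iff₀' (by positivity)]
  calc (δ / 2) ^ (k + 1) * θ ≤ (δ / 2) ^ (k + 1) * density _ :=
        mul_le_mul_of_nonneg_left hl (by positivity)
    _ ≤ n * progressionAvg (k + 1) f :=
        pow_mul_density_line_le l (fun x => (hf x).1) (half_pos hδ).le
    _ ≤ (n + 1) * progressionAvg (k + 1) f := by linarith

end Progressions

/-! ### The weighted Gowers–Cauchy–Schwarz inequality -/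

section GowersCauchySchwarz

section Piecewise
variable {ι X : Type*} [DecidableEq ι] {U : Finset ι} {i : ι}

lemma piecewise_update_right (hi : i ∉ U) (x₀ x₁ : ι → X) (t : X) :
    U.piecewise x₁ (Function.update x₀ i t) = Function.update (U.piecewise x₁ x₀) i t := by
  rw [update_piecewise_of_notMem _ _ _ hi]

lemma piecewise_update_left (hi : i ∉ U) (x₀ x₁ : ι → X) (t : X) :
    U.piecewise (Function.update x₁ i t) x₀ = U.piecewise x₁ x₀ :=
  U.piecewise_congr (fun _ hj => Function.update_of_ne (ne_of_mem_of_not_mem hj hi) _ _)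
    fun _ _ => rfl

lemma piecewise_insert_right (hi : i ∉ U) (x₀ x₁ : ι → X) :
    (insert i U).piecewise x₁ x₀ = U.piecewise x₁ (Function.update x₀ i (x₁ i)) := by
  rw [piecewise_update_right hi, piecewise_insert]

lemma apply_update_of_dependsOn {f : (ι → X) → ℝ} (hf : DependsOn f {i}ᶜ) (x : ι → X) (t : X) :
    f (Function.update x i t) = f x :=
  hf fun _ hj => Function.update_of_ne hj _ _

lemma dependsOn_compl_singleton {f : (ι → X) → ℝ}
    (hf : ∀ x t, f (Function.update x i t) = f x) : DependsOn f {i}ᶜ := fun x y hxy => by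
  have : Function.update x i (y i) = y := by
    funext j
    obtain rfl | hj := eq_or_ne j i
    · exact Function.update_self ..
    · rw [Function.update_of_ne hj, hxy j hj]
  rw [← hf x (y i), this]

end Piecewise

section CubeProd
variable {ι X : Type*} [DecidableEq ι]

/-- The product of `f` over the `2 ^ #T` vertices of the cube spanned by `x₀` and `x₁` in the
directions of `T`; the coordinates outside `T` are those of `x₀`. -/
noncomputable def cubeProd (T : Finset ι) (f : (ι → X) → ℝ) (x₀ x₁ : ι → X) : ℝ :=
  ∏ U ∈ T.powerset, f (U.piecewise x₁ x₀)

variable {T : Finset ι} {i : ι} {f g : (ι → X) → ℝ}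

lemma cubeProd_empty (f : (ι → X) → ℝ) (x₀ x₁ : ι → X) : cubeProd ∅ f x₀ x₁ = f x₀ := by
  simp [cubeProd]

lemma cubeProd_mul (T : Finset ι) (f g : (ι → X) → ℝ) (x₀ x₁ : ι → X) :
    cubeProd T (fun x => f x * g x) x₀ x₁ = cubeProd T f x₀ x₁ * cubeProd T g x₀ x₁ :=
  prod_mul_distrib

lemma cubeProd_insert (hi : i ∉ T) (f : (ι → X) → ℝ) (x₀ x₁ : ι → X) :
    cubeProd (insert i T) f x₀ x₁ =
      cubeProd T f x₀ x₁ * cubeProd T f (Function.update x₀ i (x₁ i)) x₁ := by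
  rw [cubeProd, prod_powerset_insert hi]
  exact congrArg _ (prod_congr rfl fun U hU => by
    rw [piecewise_insert_right (notMem_mono (mem_powerset.1 hU) hi)])

lemma dependsOn_cubeProd_right (hi : i ∉ T) (f : (ι → X) → ℝ) (x₀ : ι → X) :
    DependsOn (fun x₁ => cubeProd T f x₀ x₁) {i}ᶜ :=
  dependsOn_compl_singleton fun x₁ t => prod_congr rfl fun U hU => by
    rw [piecewise_update_left (notMem_mono (mem_powerset.1 hU) hi)]

lemma dependsOn_cubeProd_left (hi : i ∉ T) (hf : DependsOn f {i}ᶜ) (x₁ : ι → X) :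
    DependsOn (fun x₀ => cubeProd T f x₀ x₁) {i}ᶜ :=
  dependsOn_compl_singleton fun x₀ t => prod_congr rfl fun U hU => by
    rw [piecewise_update_right (notMem_mono (mem_powerset.1 hU) hi), apply_update_of_dependsOn hf]

lemma abs_cubeProd_le (h : ∀ x, |f x| ≤ g x) (x₀ x₁ : ι → X) :
    |cubeProd T f x₀ x₁| ≤ cubeProd T g x₀ x₁ := by
  rw [cubeProd, abs_prod]
  exact prod_le_prod (fun _ _ => abs_nonneg _) fun U _ => h _

lemma prod_cubeProd_erase_insert (hi : i ∉ T) (b : ι → (ι → X) → ℝ) (x₀ x₁ : ι → X) :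
    ∏ j ∈ insert i T, cubeProd ((insert i T).erase j) (b j) x₀ x₁ =
      cubeProd T (b i) x₀ x₁ * ((∏ j ∈ T, cubeProd (T.erase j) (b j) x₀ x₁) *
        ∏ j ∈ T, cubeProd (T.erase j) (b j) (Function.update x₀ i (x₁ i)) x₁) := by
  rw [prod_insert hi, erase_insert hi, ← prod_mul_distrib]
  refine congrArg _ (prod_congr rfl fun j hj => ?_)
  rw [erase_insert_of_ne (ne_of_mem_of_not_mem hj hi).symm,
    cubeProd_insert fun h => hi (mem_of_mem_erase h)]

end CubeProd

variable {ι X P : Type*} [Fintype ι] [DecidableEq ι] [Fintype X] [Nonempty X] [Fintype P]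

lemma avg_eq_avg_update_left (i : ι) (F : P × (ι → X) × (ι → X) → ℝ) :
    avg F = avg fun q : P × (ι → X) × (ι → X) => avg fun t =>
      F (q.1, Function.update q.2.1 i t, q.2.2) := by
  simp_rw [avg_prod]
  congr! 2 with p
  rw [avg_eq_avg_update i]
  congr! 2 with x₀
  exact avg_comm _

lemma avg_eq_avg_update_right (i : ι) (F : P × (ι → X) × (ι → X) → ℝ) :
    avg F = avg fun q : P × (ι → X) × (ι → X) => avg fun t =>
      F (q.1, q.2.1, Function.update q.2.2 i t) := by
  simp_rw [avg_prod]
  congr! 4 with p x₀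
  exact avg_eq_avg_update i _

/-- Squaring an average over the coordinate `i` of `x₀`: the second copy of that variable is stored
in the coordinate `i` of `x₁`, on which `w` and `R` do not depend. -/
lemma avg_mul_avg_update_sq (i : ι) {w R : P × (ι → X) × (ι → X) → ℝ}
    (hw₀ : ∀ p x₁, DependsOn (fun x₀ => w (p, x₀, x₁)) {i}ᶜ)
    (hw₁ : ∀ p x₀, DependsOn (fun x₁ => w (p, x₀, x₁)) {i}ᶜ)
    (hR₁ : ∀ p x₀, DependsOn (fun x₁ => R (p, x₀, x₁)) {i}ᶜ) :
    (avg fun q => w q * (avg fun t => R (q.1, Function.update q.2.1 i t, q.2.2)) ^ 2) =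
      avg fun q => w q * (R q * R (q.1, Function.update q.2.1 i (q.2.2 i), q.2.2)) := by
  symm
  rw [avg_eq_avg_update_left i]
  simp only [Function.update_idem]
  simp_rw [fun p x₁ => apply_update_of_dependsOn (hw₀ p x₁)]
  rw [avg_eq_avg_update_right i]
  simp only [Function.update_self]
  simp_rw [fun p x₀ => apply_update_of_dependsOn (hw₁ p x₀),
    fun p x₀ => apply_update_of_dependsOn (hR₁ p x₀), avg_const_mul, avg_mul_const, avg_const_mul,
    sq]

lemma avg_mul_sq_le_of_dependsOn (i : ι) {w A R : P × (ι → X) × (ι → X) → ℝ}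
    (hA : ∀ q, |A q| ≤ w q)
    (hA₀ : ∀ p x₁, DependsOn (fun x₀ => A (p, x₀, x₁)) {i}ᶜ)
    (hw₀ : ∀ p x₁, DependsOn (fun x₀ => w (p, x₀, x₁)) {i}ᶜ)
    (hw₁ : ∀ p x₀, DependsOn (fun x₁ => w (p, x₀, x₁)) {i}ᶜ)
    (hR₁ : ∀ p x₀, DependsOn (fun x₁ => R (p, x₀, x₁)) {i}ᶜ) :
    (avg fun q => A q * R q) ^ 2 ≤ avg w *
      |avg fun q => w q * (R q * R (q.1, Function.update q.2.1 i (q.2.2 i), q.2.2))| := by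
  have hAR : (avg fun q => A q * R q) =
      avg fun q => A q * avg fun t => R (q.1, Function.update q.2.1 i t, q.2.2) := by
    rw [avg_eq_avg_update_left i]
    simp_rw [fun p x₁ => apply_update_of_dependsOn (hA₀ p x₁), avg_const_mul]
  rw [hAR, ← avg_mul_avg_update_sq i hw₀ hw₁ hR₁, abs_of_nonneg (avg_nonneg fun q =>
    mul_nonneg ((abs_nonneg _).trans (hA q)) (sq_nonneg _))]
  exact avg_mul_sq_le_of_abs_le _ _ _ hA

lemma sq_avg_cubeProd_mul_le {i : ι} {J : Finset ι} (hi : i ∉ J) {a : P → (ι → X) → ℝ}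
    (b : ι → P → (ι → X) → ℝ) (F : P → (ι → X) → ℝ) (hab : ∀ p x, |a p x| ≤ b i p x)
    (ha : ∀ p, DependsOn (a p) {i}ᶜ) (hb : ∀ p, DependsOn (b i p) {i}ᶜ) :
    (avg fun q : P × (ι → X) × (ι → X) => cubeProd J (a q.1) q.2.1 q.2.2 *
        (cubeProd J (F q.1) q.2.1 q.2.2 *
          ∏ j ∈ J, cubeProd (J.erase j) (b j q.1) q.2.1 q.2.2)) ^ 2 ≤
      (avg fun q : P × (ι → X) × (ι → X) => cubeProd J (b i q.1) q.2.1 q.2.2) *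
        |avg fun q : P × (ι → X) × (ι → X) => cubeProd (insert i J) (F q.1) q.2.1 q.2.2 *
          ∏ j ∈ insert i J, cubeProd ((insert i J).erase j) (b j q.1) q.2.1 q.2.2| := by
  set R : P × (ι → X) × (ι → X) → ℝ := fun q => cubeProd J (F q.1) q.2.1 q.2.2 *
    ∏ j ∈ J, cubeProd (J.erase j) (b j q.1) q.2.1 q.2.2 with hR
  have hR₁ (p x₀) : DependsOn (fun x₁ => R (p, x₀, x₁)) {i}ᶜ := fun x y hxy =>
    congrArg₂ _ (dependsOn_cubeProd_right hi (F p) x₀ hxy) (prod_congr rfl fun j _ =>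
      dependsOn_cubeProd_right (fun h => hi (mem_of_mem_erase h)) (b j p) x₀ hxy)
  refine (avg_mul_sq_le_of_dependsOn i (fun q => abs_cubeProd_le (hab q.1) _ _)
    (fun p => dependsOn_cubeProd_left hi (ha p)) (fun p => dependsOn_cubeProd_left hi (hb p))
    (fun p x₀ => dependsOn_cubeProd_right hi (b i p) x₀) hR₁).trans_eq ?_
  congr! 4 with q
  rw [cubeProd_insert hi, prod_cubeProd_erase_insert hi]
  simp only [hR]
  ring

/-- If `a i` is bounded by `b i` and neither depends on the coordinate `i`, then the factors `a i`,
`i ∈ J`, can be eliminated by doubling the coordinates in `J`, at the price of inserting the weights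
`b i` at the doubled points. -/
lemma gowers_cauchy_schwarz (J : Finset ι) (b : ι → P → (ι → X) → ℝ) {C : ℝ}
    (hb : ∀ i ∈ J, ∀ p, DependsOn (b i p) {i}ᶜ)
    (hC : ∀ i ∈ J, ∀ T ⊆ J.erase i,
      (avg fun q : P × (ι → X) × (ι → X) => cubeProd T (b i q.1) q.2.1 q.2.2) ≤ C)
    (F : P → (ι → X) → ℝ) (a : ι → P → (ι → X) → ℝ) (hab : ∀ i ∈ J, ∀ p x, |a i p x| ≤ b i p x)
    (ha : ∀ i ∈ J, ∀ p, DependsOn (a i p) {i}ᶜ) :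
    |avg fun q : P × (ι → X) => F q.1 q.2 * ∏ i ∈ J, a i q.1 q.2| ^ (2 ^ #J) ≤
      C ^ (2 ^ #J - 1) * |avg fun q : P × (ι → X) × (ι → X) =>
        cubeProd J (F q.1) q.2.1 q.2.2 *
          ∏ j ∈ J, cubeProd (J.erase j) (b j q.1) q.2.1 q.2.2| := by
  induction J using Finset.induction_on generalizing F with
  | empty => simp [cubeProd_empty, avg_prod, avg_const]
  | insert i J hi ih =>
    simp only [forall_mem_insert] at hb hab ha
    have hdoubled := ih hb.2 (fun j hj T hT => hC j (mem_insert_of_mem hj) T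
      (hT.trans (erase_subset_erase _ (subset_insert _ _))))
      (fun p x => a i p x * F p x) hab.2 ha.2
    have hfactor (p x) : F p x * ∏ j ∈ insert i J, a j p x =
        a i p x * (F p x * ∏ j ∈ J, a j p x) := by rw [prod_insert hi, mul_left_comm]
    simp only [cubeProd_mul, mul_assoc, ← hfactor] at hdoubled
    have hbC := hC i (mem_insert_self i J) J (erase_insert hi).ge
    have hstep := (sq_avg_cubeProd_mul_le hi b F hab.1 ha.1 hb.1).trans
      (mul_le_mul_of_nonneg_right hbC (abs_nonneg _))
    have hexp : 2 ^ #J * 2 - 1 = (2 ^ #J - 1) * 2 + 1 := by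
      have : 1 ≤ 2 ^ #J := Nat.one_le_two_pow
      omega
    rw [card_insert_of_notMem hi, pow_succ, pow_mul, hexp, pow_succ C, pow_mul, mul_assoc]
    refine (pow_le_pow_left₀ (pow_nonneg (abs_nonneg _) _) hdoubled 2).trans ?_
    rw [mul_pow, sq_abs]
    exact mul_le_mul_of_nonneg_left hstep (sq_nonneg _)

end GowersCauchySchwarz

/-! ### The linear forms condition -/

section LinearFormsCondition

lemma abs_avg_prod_sub_one_mul_prod_le {Ω σ : Type*} [Fintype Ω] [DecidableEq σ] (v : σ → Ω → ℝ)
    {η : ℝ} {A B : Finset σ} (hA : A.Nonempty) (hAB : Disjoint A B)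
    (h : ∀ S ⊆ A ∪ B, |(avg fun x => ∏ p ∈ S, v p x) - 1| ≤ η) :
    |avg fun x => (∏ p ∈ A, (v p x - 1)) * ∏ p ∈ B, v p x| ≤ 2 ^ #A * η := by
  induction hA using Finset.Nonempty.cons_induction generalizing B with
  | singleton a =>
    have ha : a ∉ B := disjoint_singleton_left.1 hAB
    have hsplit : (avg fun x => (∏ p ∈ {a}, (v p x - 1)) * ∏ p ∈ B, v p x) =
        (avg fun x => ∏ p ∈ insert a B, v p x) - avg fun x => ∏ p ∈ B, v p x := by
      rw [← avg_sub]
      simp only [prod_singleton, prod_insert ha, sub_mul, one_mul]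
    have hinsert := abs_le.1 (h (insert a B) (insert_eq a B).le)
    have hB := abs_le.1 (h B subset_union_right)
    rw [hsplit, card_singleton, abs_le]
    constructor <;> linarith [hinsert.1, hinsert.2, hB.1, hB.2]
  | cons a A haA _ ih =>
    rw [cons_eq_insert, disjoint_insert_left] at hAB
    rw [cons_eq_insert, insert_union] at h
    have hinsert := abs_le.1 (ih (B := insert a B) (disjoint_insert_right.2 ⟨haA, hAB.2⟩)
      (by rwa [union_insert]))
    have hB := abs_le.1 (ih hAB.2 fun S hS => h S (hS.trans (subset_insert _ _)))
    have hsplit : (avg fun x => (∏ p ∈ insert a A, (v p x - 1)) * ∏ p ∈ B, v p x) =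
        (avg fun x => (∏ p ∈ A, (v p x - 1)) * ∏ p ∈ insert a B, v p x) -
          avg fun x => (∏ p ∈ A, (v p x - 1)) * ∏ p ∈ B, v p x := by
      rw [← avg_sub]
      congr! 2 with x
      rw [prod_insert haA, prod_insert hAB.1]
      ring
    rw [cons_eq_insert, hsplit, card_insert_of_notMem haA, pow_succ, abs_le]
    constructor <;> linarith [hinsert.1, hinsert.2, hB.1, hB.2]

variable {k N : ℕ}

/-- The linear form `x ↦ ∑ i, (i - j) * x i`, that is, `kForm` without the choice of a copy for each
variable. Its value does not depend on the coordinate `j`. -/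
def linearForm (j : Fin k) : (Fin k → ZMod N) →ₗ[ZMod N] ZMod N :=
  ∑ i : Fin k, (((i : ℕ) - (j : ℕ) : ℤ) : ZMod N) • LinearMap.proj i

lemma linearForm_apply (j : Fin k) (x : Fin k → ZMod N) :
    linearForm j x = ∑ i : Fin k, (((i : ℕ) - (j : ℕ) : ℤ) : ZMod N) * x i := by
  simp only [linearForm, LinearMap.sum_apply, LinearMap.smul_apply, LinearMap.proj_apply,
    smul_eq_mul]

lemma linearForm_update (j i : Fin k) (x : Fin k → ZMod N) (t : ZMod N) :
    linearForm j (Function.update x i t) =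
      linearForm j x + (((i : ℕ) - (j : ℕ) : ℤ) : ZMod N) * (t - x i) := by
  rw [← sub_eq_iff_eq_add', linearForm_apply, linearForm_apply, ← sum_sub_distrib,
    sum_eq_single i (fun l _ hl => by rw [Function.update_of_ne hl, sub_self]) (by simp),
    Function.update_self, mul_sub]

lemma dependsOn_comp_linearForm (j : Fin k) (h : ZMod N → ℝ) :
    DependsOn (fun x => h (linearForm j x)) {j}ᶜ :=
  dependsOn_compl_singleton fun x t => by
    rw [linearForm_update, sub_self, Int.cast_zero, zero_mul, add_zero]

/-- The set of variables whose second copy is selected by `ω`. -/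
def secondCopies {j : Fin k} (ω : {i : Fin k // i ≠ j} → Bool) : Finset (Fin k) :=
  ({i | ω i} : Finset {i : Fin k // i ≠ j}).map (Function.Embedding.subtype _)

lemma coe_mem_secondCopies {j : Fin k} {ω : {i : Fin k // i ≠ j} → Bool}
    {i : {i : Fin k // i ≠ j}} : i.1 ∈ secondCopies ω ↔ ω i := by
  simp [secondCopies, i.2]

lemma secondCopies_injective (j : Fin k) :
    Function.Injective (secondCopies (j := j)) := fun ω ω' h => by
  funext i
  rw [Bool.eq_iff_iff, ← coe_mem_secondCopies, h, coe_mem_secondCopies]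

lemma exists_secondCopies_eq {j : Fin k} {U : Finset (Fin k)} (hU : j ∉ U) :
    ∃ ω : {i : Fin k // i ≠ j} → Bool, secondCopies ω = U := by
  refine ⟨fun i => decide (i.1 ∈ U), ?_⟩
  ext i
  obtain rfl | hi := eq_or_ne i j
  · simp [secondCopies, hU]
  · simpa using coe_mem_secondCopies (ω := fun i => decide (i.1 ∈ U)) (i := ⟨i, hi⟩)

lemma kForm_eq_linearForm [NeZero N] (j : Fin k) (x₀ x₁ : Fin k → ZMod N)
    (ω : {i : Fin k // i ≠ j} → Bool) :
    kForm k N j x₀ x₁ ω = linearForm j ((secondCopies ω).piecewise x₁ x₀) := by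
  rw [kForm, linearForm_apply]
  refine sum_congr rfl fun i _ => ?_
  split_ifs with hij hω
  · rw [hij, sub_self, Int.cast_zero, zero_mul, zero_mul]
  · rw [piecewise_eq_of_mem _ _ _ (coe_mem_secondCopies.2 hω)]
  · rw [piecewise_eq_of_notMem _ _ _ (coe_mem_secondCopies.not.2 hω)]

lemma prod_ite_secondCopies_mem (S : Finset (Fin k × Finset (Fin k))) (hS : ∀ p ∈ S, p.1 ∉ p.2)
    (v : Fin k → Finset (Fin k) → ℝ) :
    (∏ j, ∏ ω : {i : Fin k // i ≠ j} → Bool,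
      if (j, secondCopies ω) ∈ S then v j (secondCopies ω) else 1) = ∏ p ∈ S, v p.1 p.2 := by
  rw [prod_sigma', ← prod_filter]
  refine prod_nbij (fun p => (p.1, secondCopies p.2)) (fun p hp => (mem_filter.1 hp).2) ?_ ?_
    fun _ _ => rfl
  · rintro ⟨j, ω⟩ - ⟨j', ω'⟩ - h
    obtain ⟨hj, h⟩ := Prod.mk.inj h
    dsimp only at hj h
    subst hj
    rw [secondCopies_injective j h]
  · rintro ⟨j, U⟩ hp
    obtain ⟨ω, rfl⟩ : ∃ ω : {i : Fin k // i ≠ j} → Bool, secondCopies ω = U :=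
      exists_secondCopies_eq (hS _ hp)
    exact ⟨⟨j, ω⟩, mem_coe.2 (mem_filter.2 ⟨by simp, hp⟩), rfl⟩

variable [NeZero N] {ν : ZMod N → ℝ} {η : ℝ}

lemma abs_avg_prod_linearForm_sub_one_le (h : kLinearFormsCondition k N ν η)
    (S : Finset (Fin k × Finset (Fin k))) (hS : ∀ p ∈ S, p.1 ∉ p.2) :
    |(avg fun x : (Fin k → ZMod N) × (Fin k → ZMod N) =>
      ∏ p ∈ S, ν (linearForm p.1 (p.2.piecewise x.2 x.1))) - 1| ≤ η := by
  convert h fun j ω => decide ((j, secondCopies ω) ∈ S) using 4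
  funext x
  simp only [decide_eq_true_eq, kForm_eq_linearForm]
  exact (prod_ite_secondCopies_mem S hS fun j U => ν (linearForm j (U.piecewise x.2 x.1))).symm

lemma abs_avg_prod_linearForm_sub_one_mul_prod_le (h : kLinearFormsCondition k N ν η)
    {A B : Finset (Fin k × Finset (Fin k))} (hA : A.Nonempty) (hAB : Disjoint A B)
    (hS : ∀ p ∈ A ∪ B, p.1 ∉ p.2) :
    |avg fun x : (Fin k → ZMod N) × (Fin k → ZMod N) =>
      (∏ p ∈ A, (ν (linearForm p.1 (p.2.piecewise x.2 x.1)) - 1)) *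
        ∏ p ∈ B, ν (linearForm p.1 (p.2.piecewise x.2 x.1))| ≤ 2 ^ #A * η := by
  have hone : ∀ S ⊆ A ∪ B, |(avg fun x : (Fin k → ZMod N) × (Fin k → ZMod N) =>
      ∏ p ∈ S, ν (linearForm p.1 (p.2.piecewise x.2 x.1))) - 1| ≤ η := fun S hSAB =>
    abs_avg_prod_linearForm_sub_one_le h S fun p hp => hS p (hSAB hp)
  set v : Fin k × Finset (Fin k) → (Fin k → ZMod N) × (Fin k → ZMod N) → ℝ :=
    fun p x => ν (linearForm p.1 (p.2.piecewise x.2 x.1))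
  exact abs_avg_prod_sub_one_mul_prod_le v hA hAB hone

end LinearFormsCondition

/-! ### The box norm and the cut norm -/

section BoxNorm
lemma sum_mul_piecewise {κ R : Type*} [Fintype κ] [DecidableEq κ] [Ring R]
    (c x₀ x₁ : κ → R) (U : Finset κ) :
    ∑ i, c i * U.piecewise x₁ x₀ i = ∑ i, c i * x₀ i + ∑ i ∈ U, c i * (x₁ - x₀) i := by
  rw [← sub_eq_iff_eq_add', ← sum_sub_distrib, ← sum_subset (subset_univ U)]
  · refine sum_congr rfl fun i hi => ?_
    rw [piecewise_eq_of_mem _ _ _ hi, Pi.sub_apply, mul_sub]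
  · intro i _ hi
    rw [piecewise_eq_of_notMem _ _ _ hi, sub_self]

variable {N : ℕ} [NeZero N]

lemma avg_prod_linearForm {k : ℕ} (hk : 2 ≤ k) (h : ZMod N → ℝ) :
    (avg fun x : Fin k → ZMod N => ∏ j, h (linearForm j x)) = progressionAvg k h := by
  let φ : (Fin k → ZMod N) →+ ZMod N × ZMod N := AddMonoidHom.mk'
    (fun x => (∑ i : Fin k, (i : ZMod N) * x i, -∑ i, x i)) fun x y => by
      simp [mul_add, sum_add_distrib, add_comm]
  have hφ : Function.Surjective φ := by
    rintro ⟨a, d⟩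
    refine ⟨Pi.single ⟨1, by lia⟩ a + Pi.single ⟨0, by lia⟩ (-d - a), ?_⟩
    simp [φ, mul_add, sum_add_distrib, Pi.single_apply]
  rw [progressionAvg, ← avg_comp_addMonoidHom φ hφ]
  congr! 2 with x
  rw [prod_range fun i => h ((φ x).1 + (i : ZMod N) * (φ x).2)]
  refine prod_congr rfl fun j _ => congrArg h ?_
  simp only [linearForm_apply, φ, AddMonoidHom.mk'_apply, mul_neg, mul_sum, ← sub_eq_add_neg,
    ← sum_sub_distrib]
  refine sum_congr rfl fun i _ => ?_
  push_cast
  ring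

lemma avg_mul_shift_nonneg (P : ZMod N → ℝ) (c : ZMod N) :
    0 ≤ avg fun t => avg fun y => P y * P (y + c * t) := by
  have hsq : (avg fun y => (avg fun t => P (y + c * t)) ^ 2) =
      avg fun t => avg fun s => avg fun y => P (y + c * t) * P (y + c * s) := by
    rw [avg_comm (fun t s => avg fun y => P (y + c * t) * P (y + c * s))]
    simp only [sq, ← avg_const_mul, ← avg_mul_const]
    rw [avg_comm]
    congr! 2 with s
    rw [avg_comm]
  have hshift (t) : (avg fun s => avg fun y => P (y + c * t) * P (y + c * s)) =
      avg fun s => avg fun y => P y * P (y + c * s) := by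
    rw [← avg_add_right t]
    congr! 2 with s
    rw [← avg_add_right (c * t) (fun y => P y * P (y + c * s))]
    simp only [mul_add, add_assoc, add_comm (c * s)]
  simp only [hshift, avg_const] at hsq
  exact hsq ▸ avg_nonneg fun y => sq_nonneg _

variable {κ : Type*} [Fintype κ] [DecidableEq κ]

/-- The box norm of `h` along the directions with steps `c`, raised to the power `2 ^ |κ|`. -/
noncomputable def boxAvg (c : κ → ZMod N) (h : ZMod N → ℝ) : ℝ :=
  avg fun p : ZMod N × (κ → ZMod N) => ∏ U : Finset κ, h (p.1 + ∑ i ∈ U, c i * p.2 i)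

/-- The contribution to `boxAvg c h` of the differences on the line through `d` in direction `i`. -/
noncomputable def boxLineAvg (c : κ → ZMod N) (h : ZMod N → ℝ) (i : κ) (d : κ → ZMod N) : ℝ :=
  avg fun t => avg fun y => ∏ U : Finset κ, h (y + ∑ j ∈ U, c j * Function.update d i t j)

lemma boxAvg_eq_avg_boxLineAvg (c : κ → ZMod N) (h : ZMod N → ℝ) (i : κ) :
    boxAvg c h = avg (boxLineAvg c h i) := by
  rw [boxAvg, avg_prod, avg_comm, avg_eq_avg_update i]
  rfl

lemma boxLineAvg_nonneg (c : κ → ZMod N) (h : ZMod N → ℝ) (i : κ) (d : κ → ZMod N) :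
    0 ≤ boxLineAvg c h i d := by
  set P : ZMod N → ℝ := fun y => ∏ U ∈ (univ.erase i).powerset, h (y + ∑ j ∈ U, c j * d j)
  have hsum {U : Finset κ} (hU : U ∈ (univ.erase i).powerset) (t) :
      ∑ j ∈ U, c j * Function.update d i t j = ∑ j ∈ U, c j * d j :=
    sum_congr rfl fun j hj => by
      rw [Function.update_of_ne (ne_of_mem_erase (mem_powerset.1 hU hj))]
  have hline : boxLineAvg c h i d = avg fun t => avg fun y => P y * P (y + c i * t) := by
    unfold boxLineAvg
    congr! 4 with t y
    rw [← powerset_univ, ← insert_erase (mem_univ i), prod_powerset_insert (notMem_erase _ _)]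
    congr! 1 <;> refine prod_congr rfl fun U hU => ?_
    · rw [hsum hU]
    · rw [sum_insert fun hi => notMem_erase i univ (mem_powerset.1 hU hi), hsum hU,
        Function.update_self, add_assoc]
  exact hline ▸ avg_mul_shift_nonneg P (c i)

lemma boxAvg_nonneg [Nonempty κ] (c : κ → ZMod N) (h : ZMod N → ℝ) : 0 ≤ boxAvg c h := by
  rw [boxAvg_eq_avg_boxLineAvg c h (Classical.arbitrary κ)]
  exact avg_nonneg fun d => boxLineAvg_nonneg _ _ _ _

/-- Since the differences in the direction `i₁` have nonnegative contributions, changing the step in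
the direction `i` amounts to averaging a nonnegative function over the multiples of `e`. -/
lemma boxAvg_update_mul_le (c : κ → ZMod N) (h : ZMod N → ℝ) {i i₁ : κ} (hi : i ≠ i₁) {e : ℕ}
    (he : 0 < e) : boxAvg (Function.update c i (e * c i)) h ≤ e * boxAvg c h := by
  rw [boxAvg_eq_avg_boxLineAvg _ h i₁, boxAvg_eq_avg_boxLineAvg _ h i₁, avg_eq_avg_update i,
    avg_eq_avg_update i (boxLineAvg c h i₁), ← avg_const_mul]
  refine avg_mono fun d => le_of_eq_of_le ?_ (avg_comp_nsmul_le he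
    fun t => boxLineAvg_nonneg c h i₁ (Function.update d i t))
  unfold boxLineAvg
  congr! 2 with t
  congr! 4 with s y
  refine prod_congr rfl fun U _ => congrArg h (congrArg _ (sum_congr rfl fun j _ => ?_))
  rw [Function.update_comm hi, Function.update_comm hi]
  obtain rfl | hj := eq_or_ne j i
  · simp only [Function.update_self, nsmul_eq_mul]
    ring
  · simp only [Function.update_of_ne hj]

lemma boxAvg_mul_le [Nontrivial κ] (c : κ → ZMod N) (h : ZMod N → ℝ) {e : κ → ℕ}
    (he : ∀ i, 0 < e i) :
    boxAvg (fun i => (e i : ZMod N) * c i) h ≤ (∏ i, (e i : ℝ)) * boxAvg c h := by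
  suffices ∀ s : Finset κ, boxAvg (s.piecewise (fun i => (e i : ZMod N) * c i) c) h ≤
      (∏ i ∈ s, (e i : ℝ)) * boxAvg c h by
    simpa only [piecewise_univ] using this univ
  intro s
  induction s using Finset.induction_on with
  | empty => simp
  | insert i s hi ih =>
    obtain ⟨i₁, hi₁⟩ := exists_ne i
    have hstep := boxAvg_update_mul_le (s.piecewise (fun i => (e i : ZMod N) * c i) c) h hi₁.symm
      (he i)
    rw [piecewise_eq_of_notMem _ _ _ hi] at hstep
    rw [prod_insert hi, piecewise_insert, mul_assoc]
    exact hstep.trans (mul_le_mul_of_nonneg_left ih (Nat.cast_nonneg _))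

lemma avg_cubeProd_eq_boxAvg (c : κ → ZMod N) (h : ZMod N → ℝ) :
    (avg fun q : ZMod N × (κ → ZMod N) × (κ → ZMod N) =>
      cubeProd univ (fun x => h (q.1 + ∑ i, c i * x i)) q.2.1 q.2.2) = boxAvg c h := by
  let φ : ZMod N × (κ → ZMod N) × (κ → ZMod N) →+ ZMod N × (κ → ZMod N) := AddMonoidHom.mk'
    (fun q => (q.1 + ∑ i, c i * q.2.1 i, q.2.2 - q.2.1)) fun x y => by
      ext
      · simp only [Prod.fst_add, Prod.snd_add, Pi.add_apply, mul_add, sum_add_distrib]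
        ring
      · simp only [Prod.snd_add, Prod.fst_add, Pi.add_apply, Pi.sub_apply]
        ring
  have hφ : Function.Surjective φ := fun ⟨y, d⟩ => ⟨(y, 0, d), by simp [φ]⟩
  rw [boxAvg, ← avg_comp_addMonoidHom φ hφ]
  congr! 2 with q
  rw [cubeProd, powerset_univ]
  refine prod_congr rfl fun U _ => ?_
  rw [sum_mul_piecewise, ← add_assoc]
  rfl

/-- `CutNormLE κ M h c` says that `h` has cut norm at most `c`: the function
`(y, x) ↦ h (y + M * ∑ i, x i)` correlates at most `c` with products of bounded functions each of
which ignores one of the coordinates of `x`. -/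
def CutNormLE (κ : Type*) [Fintype κ] [DecidableEq κ] (M : ℕ) (h : ZMod N → ℝ) (c : ℝ) : Prop :=
  ∀ g : κ → ZMod N → (κ → ZMod N) → ℝ, (∀ i y x, |g i y x| ≤ 1) →
    (∀ i y, DependsOn (g i y) {i}ᶜ) →
    (avg fun p : ZMod N × (κ → ZMod N) => h (p.1 + M * ∑ i, p.2 i) * ∏ i, g i p.1 p.2) ≤ c

lemma cutNormLE_of_abs_boxAvg_le {M : ℕ} {h : ZMod N → ℝ} {c : ℝ} (hc : 0 ≤ c)
    (hb : |boxAvg (fun _ : κ => (M : ZMod N)) h| ≤ c ^ (2 ^ Fintype.card κ)) :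
    CutNormLE κ M h c := fun g hg hgi => by
  have hgcs := gowers_cauchy_schwarz (P := ZMod N) (univ : Finset κ) (fun _ _ _ => 1) (C := 1)
    (fun i _ _ => (dependsOn_const 1).mono (Set.empty_subset _))
    (fun i _ T _ => by simp [cubeProd, avg_const])
    (fun y x => h (y + ∑ i, (M : ZMod N) * x i)) g (fun i _ y x => hg i y x) (fun i _ y => hgi i y)
  have hone (T : Finset κ) (x₀ x₁ : κ → ZMod N) : cubeProd T (fun _ => 1) x₀ x₁ = 1 :=
    prod_const_one
  simp only [hone, prod_const_one, mul_one, one_pow, one_mul, avg_cubeProd_eq_boxAvg,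
    card_univ] at hgcs
  simp only [mul_sum]
  exact (le_abs_self _).trans (le_of_pow_le_pow_left₀ (by positivity) hc (hgcs.trans hb))

end BoxNorm

/-! ### Cut norm estimates for the linear forms -/

section LinearFormCutNorm
variable {r N : ℕ}

lemma linearForm_piecewise {k : ℕ} (j : Fin k) (U : Finset (Fin k)) (x₀ x₁ : Fin k → ZMod N) :
    linearForm j (U.piecewise x₁ x₀) = linearForm j x₀ +
      ∑ i ∈ U, (((i : ℕ) - (j : ℕ) : ℤ) : ZMod N) * (x₁ - x₀) i := by
  simp only [linearForm_apply]
  exact sum_mul_piecewise _ _ _ _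

lemma exists_linearForm_coeff_mul_self (hr : 1 ≤ r) (s : Fin (r + 1)) :
    ∃ i : Fin (r + 1), ((i : ℕ) - (s : ℕ) : ℤ) * ((i : ℕ) - (s : ℕ) : ℤ) = 1 := by
  obtain hs | hs := Nat.eq_zero_or_pos (s : ℕ)
  · exact ⟨⟨1, by lia⟩, by simp [hs]⟩
  · exact ⟨⟨s - 1, by lia⟩, by simp [Nat.cast_sub hs]⟩

lemma exists_linearForm_coeff_mul_eq_factorial (s : Fin (r + 1)) (i : Fin r) :
    ∃ e : ℤ, ((s.succAbove i : ℕ) - (s : ℕ) : ℤ) * e = r.factorial := by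
  have hne : (s.succAbove i : ℕ) ≠ s := Fin.val_ne_of_ne (Fin.succAbove_ne s i)
  have hdvd : ((s.succAbove i : ℕ) - (s : ℕ) : ℤ) ∣ r.factorial := by
    rw [← Int.natAbs_dvd_natAbs, Int.natAbs_natCast]
    exact Nat.dvd_factorial (by lia) (by lia)
  exact hdvd.imp fun _ he => he.symm

/-- Scaling the coordinates of the shift makes all the coefficients of the form equal to `r!`. -/
lemma exists_linearForm_insertNth_eq (s : Fin (r + 1)) :
    ∃ e : Fin r → ℤ, ∀ t : Fin r → ZMod N,
      linearForm s (s.insertNth (α := fun _ => ZMod N) 0 fun i => (e i : ZMod N) * t i) =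
        r.factorial * ∑ i, t i := by
  choose e he using exists_linearForm_coeff_mul_eq_factorial s
  refine ⟨e, fun t => ?_⟩
  rw [linearForm_apply, Fin.sum_univ_succAbove _ s, Fin.insertNth_apply_same, mul_zero, zero_add,
    mul_sum]
  refine sum_congr rfl fun i _ => ?_
  rw [Fin.insertNth_apply_succAbove, ← mul_assoc, ← Int.cast_mul, he i, Int.cast_natCast]

lemma prod_univ_erase_eq_prod_succAbove (s : Fin (r + 1)) (f : Fin (r + 1) → ℝ) :
    ∏ j ∈ univ.erase s, f j = ∏ i, f (s.succAbove i) := by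
  rw [← compl_singleton, ← Fin.image_succAbove_univ,
    prod_image (Fin.succAbove_right_injective.injOn)]

variable [NeZero N]

/-- The linear forms condition applied to the cube of the form with index `0`. -/
lemma boxAvg_sub_one_le (hr : 1 ≤ r) {ν : ZMod N → ℝ} {η : ℝ}
    (h : kLinearFormsCondition (r + 1) N ν η) :
    boxAvg (fun i : Fin r => (((i : ℕ) + 1 : ℕ) : ZMod N)) (fun z => ν z - 1) ≤
      2 ^ (2 ^ r) * η := by
  have hinj : Function.Injective fun V : Finset (Fin r) =>
      ((0 : Fin (r + 1)), V.map (Fin.succEmb r)) := fun V W hVW => by simpa using hVW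
  have hcube := abs_avg_prod_linearForm_sub_one_mul_prod_le h
    (A := univ.image fun V : Finset (Fin r) => ((0 : Fin (r + 1)), V.map (Fin.succEmb r))) (B := ∅)
    (univ_nonempty.image _) (disjoint_empty_right _) (by simp [Fin.succ_ne_zero])
  rw [card_image_of_injective _ hinj, card_univ, Fintype.card_finset, Fintype.card_fin] at hcube
  simp only [prod_image hinj.injOn, prod_empty, mul_one] at hcube
  let φ : (Fin (r + 1) → ZMod N) × (Fin (r + 1) → ZMod N) →+ ZMod N × (Fin r → ZMod N) :=
    AddMonoidHom.mk' (fun q => (linearForm 0 q.1, fun i => (q.2 - q.1) i.succ)) fun x y => by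
      ext i
      · simp
      · simp [add_sub_add_comm]
  have hφ : Function.Surjective φ := by
    rintro ⟨y, d⟩
    refine ⟨(Pi.single ⟨1, by lia⟩ y, Pi.single ⟨1, by lia⟩ y + Fin.cons 0 d), Prod.ext ?_ ?_⟩
    · simp [φ, linearForm_apply, Pi.single_apply]
    · simp [φ]
  refine (le_of_eq ?_).trans ((le_abs_self _).trans hcube)
  rw [boxAvg, ← avg_comp_addMonoidHom φ hφ]
  congr! 3 with q V
  simp [φ, linearForm_piecewise]

/-- Scaling the directions turns the steps `1, …, r` of the previous estimate into `r!`. -/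
lemma exists_forall_cutNormLE_sub_one {r : ℕ} (hr : 2 ≤ r) {c : ℝ} (hc : 0 < c) :
    ∃ ρ : ℝ, 0 < ρ ∧ ∀ (N : ℕ) [NeZero N] (ν : ZMod N → ℝ) (η : ℝ), η ≤ ρ →
      kLinearFormsCondition (r + 1) N ν η →
        CutNormLE (Fin r) r.factorial (fun z => ν z - 1) c := by
  have : Nontrivial (Fin r) := Fin.nontrivial_iff_two_le.2 hr
  let e : Fin r → ℕ := fun i => r.factorial / (i + 1)
  have he : ∀ i : Fin r, e i * (i + 1) = r.factorial := fun i =>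
    Nat.div_mul_cancel (Nat.dvd_factorial (Nat.succ_pos _) i.2)
  have he₀ : ∀ i, 0 < e i := fun i =>
    Nat.div_pos (Nat.le_of_dvd (Nat.factorial_pos r) (Nat.dvd_factorial (Nat.succ_pos _) i.2))
      (Nat.succ_pos _)
  have hK : 0 < ∏ i, (e i : ℝ) := prod_pos fun i _ => Nat.cast_pos.2 (he₀ i)
  refine ⟨c ^ (2 ^ r) / ((∏ i, (e i : ℝ)) * 2 ^ (2 ^ r)), by positivity,
    fun N _ ν η hη hν => ?_⟩
  refine cutNormLE_of_abs_boxAvg_le hc.le ?_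
  have hscale := boxAvg_mul_le (fun i : Fin r => (((i : ℕ) + 1 : ℕ) : ZMod N))
    (fun z => ν z - 1) he₀
  simp only [← Nat.cast_mul, he] at hscale
  rw [abs_of_nonneg (boxAvg_nonneg _ _), Fintype.card_fin]
  calc _ ≤ _ := hscale
    _ ≤ (∏ i, (e i : ℝ)) * (2 ^ (2 ^ r) * η) :=
        mul_le_mul_of_nonneg_left (boxAvg_sub_one_le (by lia) hν) hK.le
    _ ≤ (∏ i, (e i : ℝ)) * (2 ^ (2 ^ r) * (c ^ (2 ^ r) / ((∏ i, (e i : ℝ)) * 2 ^ (2 ^ r)))) := by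
        gcongr
    _ = _ := by field_simp

/-- A coordinate with coefficient `±1` parametrizes the values of the form. -/
lemma exists_linearForm_section {k : ℕ} (s i : Fin k)
    (hi : ((i : ℕ) - (s : ℕ) : ℤ) * ((i : ℕ) - (s : ℕ) : ℤ) = 1) :
    ∃ z : (Fin k → ZMod N) → ZMod N → Fin k → ZMod N, (∀ x y, linearForm s (z x y) = y) ∧
      ∀ F : (Fin k → ZMod N) → ℝ, avg F = avg fun x => avg fun y => F (z x y) := by
  obtain ⟨u, hu⟩ : ∃ u : ZMod N, u = (((i : ℕ) - (s : ℕ) : ℤ) : ZMod N) := ⟨_, rfl⟩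
  have huu : u * u = 1 := by rw [hu, ← Int.cast_mul, hi, Int.cast_one]
  refine ⟨fun x y => Function.update x i (x i + u * (y - linearForm s x)), fun x y => ?_,
    fun F => ?_⟩
  · rw [linearForm_update, ← hu, add_sub_cancel_left, ← mul_assoc, huu, one_mul, add_sub_cancel]
  · rw [avg_eq_avg_update i F]
    congr! 2 with x
    exact (avg_comp_equiv (((Equiv.subRight (linearForm s x)).trans
      (Units.mulLeft ⟨u, u, huu, huu⟩)).trans (Equiv.addLeft (x i))) _).symm

lemma avg_mul_prod_le_of_cutNormLE (hr : 1 ≤ r) (s : Fin (r + 1)) {h : ZMod N → ℝ} {c : ℝ}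
    (hN : CutNormLE (Fin r) r.factorial h c) (g : Fin (r + 1) → (Fin (r + 1) → ZMod N) → ℝ)
    (hg : ∀ j x, |g j x| ≤ 1) (hgi : ∀ j, DependsOn (g j) {j}ᶜ) :
    (avg fun x : Fin (r + 1) → ZMod N => h (linearForm s x) * ∏ j ∈ univ.erase s, g j x) ≤ c := by
  obtain ⟨i₀, hi₀⟩ := exists_linearForm_coeff_mul_self hr s
  obtain ⟨z, hz, hfiber⟩ := exists_linearForm_section (N := N) s i₀ hi₀
  obtain ⟨e, he⟩ := exists_linearForm_insertNth_eq (N := N) s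
  set shift : (Fin r → ZMod N) → Fin (r + 1) → ZMod N := fun t =>
    s.insertNth (α := fun _ => ZMod N) 0 fun i => (e i : ZMod N) * t i with hshift
  have hshift_eq {t t' : Fin r → ZMod N} {i : Fin r}
      (htt : ∀ j ∈ ({i}ᶜ : Set (Fin r)), t j = t' j) :
      ∀ j ∈ ({s.succAbove i}ᶜ : Set (Fin (r + 1))), shift t j = shift t' j := by
    intro j hj
    induction j using s.succAboveCases with
    | x => simp only [hshift, Fin.insertNth_apply_same]
    | p j =>
      simp only [hshift, Fin.insertNth_apply_succAbove]
      rw [htt j fun hji => hj (congrArg _ hji)]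
  set H : (Fin (r + 1) → ZMod N) → ℝ := fun x =>
    h (linearForm s x) * ∏ i, g (s.succAbove i) x with hH
  have hshift_avg : avg H = avg fun x => avg fun p : ZMod N × (Fin r → ZMod N) =>
      H (z x p.1 + shift p.2) := by
    calc avg H = avg fun t => avg fun x => H (x + shift t) := by
          simp only [avg_add_right, avg_const]
      _ = avg fun x => avg fun t => H (x + shift t) := avg_comm _
      _ = _ := by simp only [hfiber fun x => avg fun t => H (x + shift t), avg_prod]
  simp only [prod_univ_erase_eq_prod_succAbove]
  refine hshift_avg.trans_le (avg_le fun x => ?_)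
  simp only [hH, map_add, hz, he, hshift]
  refine hN (fun i y t => g (s.succAbove i) (z x y + shift t)) (fun i y t => hg _ _)
    fun i y t t' htt => hgi _ fun j hj => ?_
  rw [Pi.add_apply, Pi.add_apply, hshift_eq htt j hj]

end LinearFormCutNorm

/-! ### The dense model theorem -/

section Minimax
variable {X : Type*} [Fintype X]

lemma abs_avg_mul_polynomial_eval_le (p : Polynomial ℝ) {h φ : X → ℝ} {c : ℝ}
    (hφ : ∀ n : ℕ, |avg fun z => h z * φ z ^ n| ≤ c) :
    |avg fun z => h z * p.eval (φ z)| ≤ (∑ n ∈ range (p.natDegree + 1), |p.coeff n|) * c := by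
  calc |avg fun z => h z * p.eval (φ z)|
      = |∑ n ∈ range (p.natDegree + 1), p.coeff n * avg fun z => h z * φ z ^ n| := by
        simp only [← avg_const_mul, ← avg_sum, Polynomial.eval_eq_sum_range, mul_sum,
          mul_left_comm]
    _ ≤ ∑ n ∈ range (p.natDegree + 1), |p.coeff n * avg fun z => h z * φ z ^ n| :=
        abs_sum_le_sum_abs _ _
    _ ≤ _ := by
        rw [sum_mul]
        refine sum_le_sum fun n _ => ?_
        rw [abs_mul]
        exact mul_le_mul_of_nonneg_left (hφ n) (abs_nonneg _)

lemma avg_sub_one_mul_le [Nonempty X] {ν ψ : X → ℝ} {t : ℝ} (hν : ∀ z, 0 ≤ ν z)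
    (hψ : ∀ z, |ψ z| ≤ t) : (avg fun z => (ν z - 1) * ψ z) ≤ (avg ν + 1) * t := by
  have hconst : (avg fun z => (ν z + 1) * t) = (avg ν + 1) * t := by
    rw [avg_mul_const, avg_add, avg_const]
  rw [← hconst]
  refine avg_mono fun z => (le_abs_self _).trans ?_
  rw [abs_mul]
  have hz : |ν z - 1| ≤ ν z + 1 := abs_le.2 ⟨by linarith [hν z], by linarith⟩
  exact mul_le_mul hz (hψ z) (abs_nonneg _) (by linarith [hν z])

/-- The positive part is uniformly approximated on `[-1, 1]` by a polynomial. -/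
lemma exists_forall_avg_sub_one_mul_posPart_le {ε : ℝ} (hε : 0 < ε) :
    ∃ c : ℝ, 0 < c ∧ ∀ (X : Type*) [Fintype X] [Nonempty X] (ν φ : X → ℝ), (∀ z, 0 ≤ ν z) →
      (∀ z, |φ z| ≤ 1) → (∀ n : ℕ, |avg fun z => (ν z - 1) * φ z ^ n| ≤ c) →
      (avg fun z => (ν z - 1) * max (φ z) 0) ≤ ε := by
  obtain ⟨p, hp⟩ := exists_polynomial_near_of_continuousOn (-1) 1 (fun t : ℝ => max t 0)
    (by fun_prop) (ε / 8) (by positivity)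
  set K : ℝ := ∑ n ∈ range (p.natDegree + 1), |p.coeff n|
  have : 0 ≤ K := sum_nonneg fun _ _ => abs_nonneg _
  refine ⟨min 1 (ε / 4 / (K + 1)), by positivity, fun X _ _ ν φ hν hφ hpow => ?_⟩
  have havg : avg ν ≤ 2 := by
    have hν₁ := (le_abs_self _).trans ((hpow 0).trans (min_le_left _ _))
    simp only [pow_zero, mul_one] at hν₁
    rw [avg_sub, avg_const] at hν₁
    linarith
  have hpoly : (avg fun z => (ν z - 1) * p.eval (φ z)) ≤ ε / 4 := by
    calc _ ≤ K * min 1 (ε / 4 / (K + 1)) :=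
          (le_abs_self _).trans (abs_avg_mul_polynomial_eval_le p hpow)
      _ ≤ (K + 1) * (ε / 4 / (K + 1)) := by
          gcongr
          · linarith
          · exact min_le_right _ _
      _ = ε / 4 := mul_div_cancel₀ _ (by positivity)
  have herror : (avg fun z => (ν z - 1) * (max (φ z) 0 - p.eval (φ z))) ≤
      (avg ν + 1) * (ε / 8) :=
    avg_sub_one_mul_le hν fun z =>
      (abs_sub_comm _ _).trans_le (hp (φ z) (abs_le.1 (hφ z))).le
  calc (avg fun z => (ν z - 1) * max (φ z) 0)
      = (avg fun z => (ν z - 1) * p.eval (φ z)) +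
          avg fun z => (ν z - 1) * (max (φ z) 0 - p.eval (φ z)) := by
        rw [← avg_add]
        congr! 2 with z
        ring
    _ ≤ ε / 4 + (2 + 1) * (ε / 8) := by gcongr; exact herror.trans (by gcongr)
    _ ≤ ε := by linarith

lemma continuous_avg_mul (h : X → ℝ) : Continuous fun φ : X → ℝ => avg fun z => h z * φ z := by
  unfold avg
  fun_prop

/-- By the minimax theorem it suffices to find a model for each `φ` separately, and the indicator
of `{φ > 0}` is one. -/
lemma exists_model_of_avg_mul_posPart_le {ε : ℝ} {Φ : Set (X → ℝ)} (hconvex : Convex ℝ Φ)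
    (hcompact : IsCompact Φ) (hne : Φ.Nonempty) {ν f : X → ℝ} (hf : ∀ z, 0 ≤ f z ∧ f z ≤ ν z)
    (hΦ : ∀ φ ∈ Φ, (avg fun z => (ν z - 1) * max (φ z) 0) ≤ ε) :
    ∃ f' : X → ℝ, (∀ z, 0 ≤ f' z ∧ f' z ≤ 1) ∧
      ∀ φ ∈ Φ, (avg fun z => (f z - f' z) * φ z) ≤ ε := by
  have haffine_left (φ : X → ℝ) :
      ConvexOn ℝ (Set.Icc (0 : X → ℝ) 1) fun g => avg fun z => (f z - g z) * φ z := by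
    refine ⟨convex_Icc 0 1, fun g _ g' _ s t _ _ hst => le_of_eq ?_⟩
    simp only [smul_eq_mul, ← avg_const_mul, ← avg_add, Pi.add_apply, Pi.smul_apply]
    congr! 2 with z
    linear_combination (-(f z) * φ z) * hst
  have hlinear_right (g : X → ℝ) : ConcaveOn ℝ Φ fun φ => avg fun z => (f z - g z) * φ z := by
    refine ⟨hconvex, fun φ _ ψ _ s t _ _ _ => le_of_eq ?_⟩
    simp only [smul_eq_mul, ← avg_const_mul, ← avg_add, Pi.add_apply, Pi.smul_apply]
    congr! 2 with z
    ring
  obtain ⟨f', hf', φ, hφ, hsaddle⟩ := Sion.exists_isSaddlePointOn (X := Set.Icc (0 : X → ℝ) 1)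
    (Y := Φ) (f := fun g φ => avg fun z => (f z - g z) * φ z)
    ⟨0, Set.left_mem_Icc.2 zero_le_one⟩ (convex_Icc 0 1) isCompact_Icc
    (fun φ _ => Continuous.lowerSemicontinuous (by unfold avg; fun_prop)
      |>.lowerSemicontinuousOn _)
    (fun φ _ => (haffine_left φ).quasiconvexOn) hconvex hne hcompact
    (fun g _ => (continuous_avg_mul _).upperSemicontinuous.upperSemicontinuousOn _)
    (fun g _ => (hlinear_right g).quasiconcaveOn)
  refine ⟨f', fun z => ⟨hf'.1 z, hf'.2 z⟩, fun ψ hψ => ?_⟩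
  have hindicator : (fun z => if 0 < φ z then (1 : ℝ) else 0) ∈ Set.Icc (0 : X → ℝ) 1 := by
    constructor <;> intro z <;> dsimp only [Pi.zero_apply, Pi.one_apply] <;> split_ifs <;> norm_num
  refine (hsaddle _ hindicator ψ hψ).trans (le_trans (avg_mono fun z => ?_) (hΦ φ hφ))
  beta_reduce
  obtain hz | hz := lt_or_ge 0 (φ z)
  · rw [if_pos hz, max_eq_left hz.le]
    exact mul_le_mul_of_nonneg_right (by linarith [(hf z).2]) hz.le
  · rw [if_neg hz.not_gt, max_eq_right hz, mul_zero, sub_zero]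
    exact mul_nonpos_of_nonneg_of_nonpos (hf z).1 hz

end Minimax

section CutNorm
variable {N : ℕ} [NeZero N] {κ : Type*} [Fintype κ] [DecidableEq κ] {M : ℕ}

lemma CutNormLE.mono {h : ZMod N → ℝ} {c c' : ℝ} (hN : CutNormLE κ M h c) (hcc' : c ≤ c') :
    CutNormLE κ M h c' :=
  fun g hg hgi => (hN g hg hgi).trans hcc'

lemma CutNormLE.neg [Nonempty κ] {h : ZMod N → ℝ} {c : ℝ} (hN : CutNormLE κ M h c) :
    CutNormLE κ M (fun z => - h z) c := by
  intro g hg hgi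
  obtain ⟨i₀⟩ := ‹Nonempty κ›
  -- the sign is moved into one of the test functions
  refine le_of_eq_of_le ?_ <| hN (fun i y x => (if i = i₀ then -1 else 1) * g i y x)
    (fun i y x => by split_ifs <;> simpa using hg i y x)
    (fun i y x x' hx => congrArg _ (hgi i y hx))
  congr 1 with p
  rw [prod_mul_distrib, prod_ite_eq' univ i₀]
  simp

lemma CutNormLE.avg_le {h : ZMod N → ℝ} {c : ℝ} (hN : CutNormLE κ M h c) : avg h ≤ c := by
  refine le_of_eq_of_le ?_ <| hN (fun _ _ _ => 1) (fun _ _ _ => by simp) (fun _ _ _ _ _ => rfl)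
  rw [avg_prod, avg_comm]
  simp only [prod_const_one, mul_one, avg_add_right, avg_const]

lemma CutNormLE.abs_avg_le [Nonempty κ] {h : ZMod N → ℝ} {c : ℝ} (hN : CutNormLE κ M h c) :
    |avg h| ≤ c := by
  have hneg := hN.neg.avg_le
  rw [avg_neg] at hneg
  exact abs_le.2 ⟨by linarith, hN.avg_le⟩

/-- The functions bounded by `1` multiplication by which does not increase the cut norm. The dense
model theorem is applied to this algebra of test functions. -/
def cutMultipliers (κ : Type*) [Fintype κ] [DecidableEq κ] (N M : ℕ) [NeZero N] :
    Set (ZMod N → ℝ) :=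
  {φ | (∀ z, |φ z| ≤ 1) ∧
    ∀ (h : ZMod N → ℝ) (c : ℝ), CutNormLE κ M h c → CutNormLE κ M (fun z => h z * φ z) c}

lemma convex_cutMultipliers : Convex ℝ (cutMultipliers κ N M) := by
  intro φ hφ ψ hψ s t hs ht hst
  refine ⟨fun z => ?_, fun h c hc g hg hgi => ?_⟩
  · exact abs_le.2 (convex_Icc (-1 : ℝ) 1 (abs_le.1 (hφ.1 z)) (abs_le.1 (hψ.1 z)) hs ht hst)
  · refine le_of_eq_of_le ?_ (convex_Iic c (hφ.2 h c hc g hg hgi) (hψ.2 h c hc g hg hgi) hs ht hst)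
    simp only [smul_eq_mul, ← avg_const_mul, ← avg_add, Pi.add_apply, Pi.smul_apply]
    congr 1 with p
    ring

lemma isCompact_cutMultipliers : IsCompact (cutMultipliers κ N M) := by
  refine isCompact_Icc (a := (-1 : ZMod N → ℝ)) (b := 1) |>.of_isClosed_subset ?_ fun φ hφ =>
    ⟨fun z => (abs_le.1 (hφ.1 z)).1, fun z => (abs_le.1 (hφ.1 z)).2⟩
  simp only [cutMultipliers, CutNormLE, Set.ofPred_and, Set.ofPred_forall]
  refine IsClosed.inter (isClosed_iInter fun z => isClosed_le (by fun_prop) continuous_const) ?_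
  refine isClosed_iInter fun h => isClosed_iInter fun c => isClosed_iInter fun _ =>
    isClosed_iInter fun g => isClosed_iInter fun _ => isClosed_iInter fun _ => ?_
  exact isClosed_le (by unfold avg; fun_prop) continuous_const

lemma one_mem_cutMultipliers : 1 ∈ cutMultipliers κ N M :=
  ⟨fun z => by simp, fun h c hc => by simpa using hc⟩

lemma mul_mem_cutMultipliers {φ ψ : ZMod N → ℝ} (hφ : φ ∈ cutMultipliers κ N M)
    (hψ : ψ ∈ cutMultipliers κ N M) : φ * ψ ∈ cutMultipliers κ N M := by
  refine ⟨fun z => ?_, fun h c hc => ?_⟩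
  · rw [Pi.mul_apply, abs_mul]
    exact mul_le_one₀ (hφ.1 z) (abs_nonneg _) (hψ.1 z)
  · simpa only [Pi.mul_apply, mul_assoc] using hψ.2 _ _ (hφ.2 h c hc)

lemma pow_mem_cutMultipliers {φ : ZMod N → ℝ} (hφ : φ ∈ cutMultipliers κ N M) (n : ℕ) :
    φ ^ n ∈ cutMultipliers κ N M := by
  induction n with
  | zero => exact (pow_zero φ).symm ▸ one_mem_cutMultipliers
  | succ n ih => exact pow_succ φ n ▸ mul_mem_cutMultipliers ih hφ

variable (M) in
/-- The dual function of `g`: the average of `∏ i, g i y x` over the solutions `(y, x)` of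
`y + M * ∑ i, x i = z`. -/
noncomputable def dualFunction (g : κ → ZMod N → (κ → ZMod N) → ℝ) (z : ZMod N) : ℝ :=
  avg fun x : κ → ZMod N => ∏ i, g i (z - M * ∑ i, x i) x

lemma avg_mul_dualFunction (h : ZMod N → ℝ) (g : κ → ZMod N → (κ → ZMod N) → ℝ) :
    (avg fun z => h z * dualFunction M g z) =
      avg fun p : ZMod N × (κ → ZMod N) => h (p.1 + M * ∑ i, p.2 i) * ∏ i, g i p.1 p.2 := by
  simp only [dualFunction, ← avg_const_mul]
  rw [avg_prod, avg_comm, avg_comm fun y x => h (y + M * ∑ i, x i) * ∏ i, g i y x]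
  congr 1 with x
  rw [← avg_add_right (M * ∑ i, x i)]
  simp only [add_sub_cancel_right]

lemma dualFunction_add_eq_avg (g : κ → ZMod N → (κ → ZMod N) → ℝ) (y : ZMod N)
    (x : κ → ZMod N) :
    dualFunction M g (y + M * ∑ i, x i) =
      avg fun w : κ → ZMod N => ∏ i, g i (y - M * ∑ i, w i) (w + x) := by
  rw [dualFunction, ← avg_add_right x]
  simp only [Pi.add_apply, sum_add_distrib, mul_add, add_sub_add_right_eq_sub]

lemma dualFunction_mem_cutMultipliers {g : κ → ZMod N → (κ → ZMod N) → ℝ}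
    (hg : ∀ i y x, |g i y x| ≤ 1) (hgi : ∀ i y, DependsOn (g i y) {i}ᶜ) :
    dualFunction M g ∈ cutMultipliers κ N M := by
  refine ⟨fun z => abs_avg_le fun x => ?_, fun h c hc g' hg' hgi' => ?_⟩
  · rw [abs_prod]
    exact prod_le_one (fun _ _ => abs_nonneg _) fun i _ => hg _ _ _
  · have hexpand : (avg fun p : ZMod N × (κ → ZMod N) => h (p.1 + M * ∑ i, p.2 i) *
        dualFunction M g (p.1 + M * ∑ i, p.2 i) * ∏ i, g' i p.1 p.2) =
        avg fun w : κ → ZMod N => avg fun p : ZMod N × (κ → ZMod N) =>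
          h (p.1 + M * ∑ i, p.2 i) *
            ∏ i, (g i (p.1 - M * ∑ i, w i) (w + p.2) * g' i p.1 p.2) := by
      rw [avg_comm]
      simp only [dualFunction_add_eq_avg, ← avg_const_mul, ← avg_mul_const, prod_mul_distrib,
        mul_assoc]
    refine hexpand.trans_le (RelativeSzemeredi.avg_le fun w => ?_)
    refine hc (fun i y x => g i (y - M * ∑ i, w i) (w + x) * g' i y x) (fun i y x => ?_)
      (fun i y x x' hx => ?_)
    · rw [abs_mul]
      exact mul_le_one₀ (hg _ _ _) (abs_nonneg _) (hg' _ _ _)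
    · refine congrArg₂ _ (hgi i _ fun j hj => ?_) (hgi' i y hx)
      rw [Pi.add_apply, Pi.add_apply, hx j hj]

theorem exists_dense_model {ε : ℝ} (hε : 0 < ε) :
    ∃ c : ℝ, 0 < c ∧ ∀ (κ : Type*) [Fintype κ] [DecidableEq κ] [Nonempty κ] (M N : ℕ) [NeZero N]
      (ν f : ZMod N → ℝ), (∀ z, 0 ≤ f z ∧ f z ≤ ν z) → CutNormLE κ M (fun z => ν z - 1) c →
        ∃ f' : ZMod N → ℝ, (∀ z, 0 ≤ f' z ∧ f' z ≤ 1) ∧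
          CutNormLE κ M (fun z => f z - f' z) ε := by
  obtain ⟨c, hc, hposPart⟩ := exists_forall_avg_sub_one_mul_posPart_le hε
  refine ⟨c, hc, fun κ _ _ _ M N _ ν f hf hν => ?_⟩
  obtain ⟨f', hf', hmodel⟩ := exists_model_of_avg_mul_posPart_le
    (convex_cutMultipliers (κ := κ) (M := M)) isCompact_cutMultipliers ⟨1, one_mem_cutMultipliers⟩
    hf fun φ hφ => hposPart (ZMod N) ν φ (fun z => (hf z).1.trans (hf z).2) hφ.1 fun n =>
      ((pow_mem_cutMultipliers hφ n).2 _ _ hν).abs_avg_le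
  refine ⟨f', hf', fun g hg hgi => ?_⟩
  exact (avg_mul_dualFunction _ g).symm.trans_le <|
    hmodel _ (dualFunction_mem_cutMultipliers hg hgi)

end CutNorm

/-! ### Strong linear forms estimates -/

section CoordAvg
variable {ι X : Type*} [DecidableEq ι] {s : ι}

lemma dependsOn_mul_comp_update {j : ι} (hj : j ≠ s) {g g' : (ι → X) → ℝ}
    (hg : DependsOn g {j}ᶜ) (hg' : DependsOn g' {j}ᶜ) (p : X) :
    DependsOn (fun x => g x * g' (Function.update x s p)) {j}ᶜ :=
  dependsOn_compl_singleton fun x t => by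
    rw [apply_update_of_dependsOn hg, Function.update_comm hj, apply_update_of_dependsOn hg']

variable [Fintype X]

/-- The average of `F` over the coordinate `s`, that is, the conditional expectation of `F` with
respect to the other coordinates. -/
noncomputable def coordAvg (s : ι) (F : (ι → X) → ℝ) (x : ι → X) : ℝ :=
  avg fun t => F (Function.update x s t)

lemma dependsOn_coordAvg (s : ι) (F : (ι → X) → ℝ) : DependsOn (coordAvg s F) {s}ᶜ :=
  dependsOn_compl_singleton fun x t => by simp only [coordAvg, Function.update_idem]

lemma abs_coordAvg_le {F G : (ι → X) → ℝ} (hFG : ∀ x, |F x| ≤ G x) (x : ι → X) :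
    |coordAvg s F x| ≤ coordAvg s G x :=
  (abs_avg_le_avg_abs _).trans (avg_mono fun _ => hFG _)

variable [Fintype ι] [Nonempty X]

lemma avg_mul_coordAvg {K : (ι → X) → ℝ} (hK : DependsOn K {s}ᶜ) (F : (ι → X) → ℝ) :
    (avg fun x => K x * coordAvg s F x) = avg fun x => K x * F x := by
  rw [avg_eq_avg_update s fun x => K x * F x]
  simp only [apply_update_of_dependsOn hK, avg_const_mul, coordAvg]

lemma avg_mul_coordAvg_mul_coordAvg {K : (ι → X) → ℝ} (hK : DependsOn K {s}ᶜ)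
    (F G : (ι → X) → ℝ) :
    (avg fun x => K x * (coordAvg s F x * coordAvg s G x)) =
      avg fun q : X × (ι → X) => K q.2 * (F q.2 * G (Function.update q.2 s q.1)) := by
  rw [avg_prod, avg_comm, avg_eq_avg_update s fun x => avg fun p =>
    K x * (F x * G (Function.update x s p))]
  simp only [coordAvg, apply_update_of_dependsOn hK, Function.update_idem, avg_const_mul,
    avg_mul_const]

lemma avg_eq_avg_apply_right (s : ι) {H : X × (ι → X) × (ι → X) → ℝ}
    (hH : ∀ p x₀, DependsOn (fun x₁ => H (p, x₀, x₁)) {s}ᶜ) :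
    avg H = avg fun q : (ι → X) × (ι → X) => H (q.2 s, q.1, q.2) := by
  rw [avg_prod, avg_comm, avg_prod (fun q : (ι → X) × (ι → X) => H (q.2 s, q.1, q.2)), avg_prod]
  congr 1 with x₀
  rw [avg_eq_avg_update s fun x₁ => H (x₁ s, x₀, x₁)]
  simp only [apply_update_of_dependsOn (hH _ x₀), Function.update_self]

end CoordAvg

section FormFactor
variable {k N : ℕ}

/-- The factor with index `j` of a product over the linear forms in which the forms in `S` carry the
function `h` and the other ones carry the test functions `u`. -/
def formFactor (S : Finset (Fin k)) (h : ZMod N → ℝ) (u : Fin k → (Fin k → ZMod N) → ℝ)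
    (j : Fin k) (x : Fin k → ZMod N) : ℝ :=
  if j ∈ S then h (linearForm j x) else u j x

variable {S : Finset (Fin k)} {u : Fin k → (Fin k → ZMod N) → ℝ}

lemma dependsOn_formFactor (S : Finset (Fin k)) (h : ZMod N → ℝ)
    (hu : ∀ j, DependsOn (u j) {j}ᶜ) (j : Fin k) : DependsOn (formFactor S h u j) {j}ᶜ :=
  dependsOn_compl_singleton fun x t => by
    simp only [formFactor, apply_update_of_dependsOn (dependsOn_comp_linearForm j h),
      apply_update_of_dependsOn (hu j)]

lemma abs_formFactor_le {h ν : ZMod N → ℝ} (hh : ∀ z, |h z| ≤ ν z) (hu : ∀ j x, |u j x| ≤ 1)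
    (j : Fin k) (x : Fin k → ZMod N) : |formFactor S h u j x| ≤ formFactor S ν 1 j x := by
  unfold formFactor
  split_ifs
  · exact hh _
  · exact hu j x

/-- The weight bounding the factor with index `j` in two copies of a product over the linear forms
that differ in the coordinate `s`; the coordinate of the second copy is `p`. -/
def doubledWeight (ν : ZMod N → ℝ) (s : Fin k) (S₁ S₂ : Finset (Fin k)) (j : Fin k) (p : ZMod N)
    (x : Fin k → ZMod N) : ℝ :=
  formFactor S₁ ν 1 j x * formFactor S₂ ν 1 j (Function.update x s p)

lemma dependsOn_doubledWeight (ν : ZMod N → ℝ) {s j : Fin k} (hj : j ≠ s)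
    (S₁ S₂ : Finset (Fin k)) (p : ZMod N) : DependsOn (doubledWeight ν s S₁ S₂ j p) {j}ᶜ := by
  have hone (i : Fin k) : DependsOn ((1 : Fin k → (Fin k → ZMod N) → ℝ) i) {i}ᶜ :=
    fun _ _ _ => rfl
  exact dependsOn_mul_comp_update hj (dependsOn_formFactor S₁ ν hone j)
    (dependsOn_formFactor S₂ ν hone j) p

/-- The sets `V` of doubled coordinates for which the factor `ν (linearForm j (V.piecewise x₁ x₀))`
occurs in a cube product of `doubledWeight ν s S₁ S₂ j`. -/
def doubledCopies (s : Fin k) (S₁ S₂ T : Finset (Fin k)) (j : Fin k) : Finset (Finset (Fin k)) :=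
  {V ∈ (insert s T).powerset | (s ∉ V ∧ j ∈ S₁) ∨ (s ∈ V ∧ j ∈ S₂)}

lemma notMem_of_mem_doubledCopies {s j : Fin k} {S₁ S₂ T V : Finset (Fin k)} (hjs : j ≠ s)
    (hjT : j ∉ T) (hV : V ∈ doubledCopies s S₁ S₂ T j) : j ∉ V := by
  intro hjV
  obtain hj | hj := mem_insert.1 (mem_powerset.1 (mem_filter.1 hV).1 hjV)
  exacts [hjs hj, hjT hj]

lemma cubeProd_doubledWeight (ν : ZMod N → ℝ) {s : Fin k} (S₁ S₂ : Finset (Fin k))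
    {T : Finset (Fin k)} (hs : s ∉ T) (j : Fin k) (x₀ x₁ : Fin k → ZMod N) :
    cubeProd T (doubledWeight ν s S₁ S₂ j (x₁ s)) x₀ x₁ =
      ∏ V ∈ doubledCopies s S₁ S₂ T j, ν (linearForm j (V.piecewise x₁ x₀)) := by
  simp only [cubeProd, doubledWeight]
  rw [doubledCopies, prod_filter, prod_powerset_insert hs, prod_mul_distrib]
  congr 1 <;> refine prod_congr rfl fun U hU => ?_
  · simp [formFactor, notMem_mono (mem_powerset.1 hU) hs]
  · simp [formFactor, piecewise_insert]

variable [NeZero N] {ν : ZMod N → ℝ} {η : ℝ}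

lemma abs_avg_cubeProd_doubledWeight_sub_one_le (h : kLinearFormsCondition k N ν η) {s j : Fin k}
    (hjs : j ≠ s) (S₁ S₂ : Finset (Fin k)) {T : Finset (Fin k)} (hsT : s ∉ T) (hjT : j ∉ T) :
    |(avg fun q : ZMod N × (Fin k → ZMod N) × (Fin k → ZMod N) =>
      cubeProd T (doubledWeight ν s S₁ S₂ j q.1) q.2.1 q.2.2) - 1| ≤ η := by
  rw [avg_eq_avg_apply_right s fun p x₀ =>
    dependsOn_cubeProd_right hsT (doubledWeight ν s S₁ S₂ j p) x₀]
  simp only [cubeProd_doubledWeight ν S₁ S₂ hsT]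
  have hlfc := abs_avg_prod_linearForm_sub_one_le h ({j} ×ˢ doubledCopies s S₁ S₂ T j) (by
    rintro ⟨i, V⟩ hiV
    obtain ⟨hi, hV⟩ := mem_product.1 hiV
    obtain rfl := mem_singleton.1 hi
    exact notMem_of_mem_doubledCopies hjs hjT hV)
  simpa only [prod_product, prod_singleton] using hlfc

lemma abs_avg_cubeProd_sub_one_mul_prod_doubledWeight_le (h : kLinearFormsCondition k N ν η)
    (s : Fin k) (S₁ S₂ : Finset (Fin k)) :
    |avg fun q : ZMod N × (Fin k → ZMod N) × (Fin k → ZMod N) =>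
      cubeProd (univ.erase s) (fun x => ν (linearForm s x) - 1) q.2.1 q.2.2 *
        ∏ j ∈ univ.erase s, cubeProd ((univ.erase s).erase j) (doubledWeight ν s S₁ S₂ j q.1)
          q.2.1 q.2.2| ≤ 2 ^ 2 ^ (k - 1) * η := by
  set J : Finset (Fin k) := univ.erase s with hJ
  have hsJ : s ∉ J := notMem_erase s univ
  have hsJe (j : Fin k) : s ∉ J.erase j := notMem_mono (erase_subset j J) hsJ
  rw [avg_eq_avg_apply_right s fun p x₀ => dependsOn_compl_singleton fun x₁ t => by
    simp only [apply_update_of_dependsOn (dependsOn_cubeProd_right hsJ _ x₀),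
      apply_update_of_dependsOn (dependsOn_cubeProd_right (hsJe _) _ x₀)]]
  let A : Finset (Fin k × Finset (Fin k)) := {s} ×ˢ J.powerset
  let B : Finset (Fin k × Finset (Fin k)) :=
    {p | p.1 ∈ J ∧ p.2 ∈ doubledCopies s S₁ S₂ (J.erase p.1) p.1}
  have hA : #A = 2 ^ (k - 1) := by
    rw [card_product, card_singleton, one_mul, card_powerset, hJ, card_erase_of_mem (mem_univ s),
      card_univ, Fintype.card_fin]
  have hAB : Disjoint A B := disjoint_left.2 fun p hpA hpB =>
    hsJ (mem_singleton.1 (mem_product.1 hpA).1 ▸ (mem_filter.1 hpB).2.1)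
  have hnotMem : ∀ p ∈ A ∪ B, p.1 ∉ p.2 := by
    intro p hp
    obtain hpA | hpB := mem_union.1 hp
    · obtain ⟨hps, hpJ⟩ := mem_product.1 hpA
      exact mem_singleton.1 hps ▸ notMem_mono (mem_powerset.1 hpJ) hsJ
    · obtain ⟨-, hpJ, hp⟩ := mem_filter.1 hpB
      exact notMem_of_mem_doubledCopies (ne_of_mem_erase hpJ) (notMem_erase _ J) hp
  have hlfc := abs_avg_prod_linearForm_sub_one_mul_prod_le h (A := A) (B := B)
    ⟨(s, ∅), by simp [A]⟩ hAB hnotMem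
  rw [hA] at hlfc
  convert hlfc using 4 with q
  rw [prod_product, prod_singleton, cubeProd,
    prod_finset_product B J (fun j => doubledCopies s S₁ S₂ (J.erase j) j) (by simp [B])]
  simp only [cubeProd_doubledWeight ν S₁ S₂ (hsJe _)]

/-- `StrongLinearForms k ν τ` says that `ν (linearForm s x) - 1` correlates at most `τ` with
products of two averages over the coordinate `s` of functions dominated by products of `ν` over the
other forms. -/
def StrongLinearForms (k : ℕ) (ν : ZMod N → ℝ) (τ : ℝ) : Prop :=
  ∀ (s : Fin k) (S₁ S₂ : Finset (Fin k)) (A B : Fin k → (Fin k → ZMod N) → ℝ),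
    (∀ j x, |A j x| ≤ formFactor S₁ ν 1 j x) → (∀ j x, |B j x| ≤ formFactor S₂ ν 1 j x) →
    (∀ j, DependsOn (A j) {j}ᶜ) → (∀ j, DependsOn (B j) {j}ᶜ) →
    |avg fun x => (ν (linearForm s x) - 1) *
      (coordAvg s (fun x => ∏ j ∈ univ.erase s, A j x) x *
        coordAvg s (fun x => ∏ j ∈ univ.erase s, B j x) x)| ≤ τ

lemma strongLinearForms_of_le {τ : ℝ} (hτ : 0 ≤ τ) (h : kLinearFormsCondition k N ν η)
    (hη : η ≤ 1) (hητ : 2 ^ (2 ^ (k - 1) - 1) * (2 ^ 2 ^ (k - 1) * η) ≤ τ ^ 2 ^ (k - 1)) :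
    StrongLinearForms k ν τ := by
  intro s S₁ S₂ A B hA hB hAi hBi
  have hcard : #(univ.erase s) = k - 1 := by
    rw [card_erase_of_mem (mem_univ s), card_univ, Fintype.card_fin]
  have hgcs := gowers_cauchy_schwarz (univ.erase s) (doubledWeight ν s S₁ S₂) (C := 2)
    (fun j hj p => dependsOn_doubledWeight ν (ne_of_mem_erase hj) S₁ S₂ p)
    (fun j hj T hT => by
      have hlfc := abs_avg_cubeProd_doubledWeight_sub_one_le h (ne_of_mem_erase hj) S₁ S₂
        (fun hs => notMem_erase s univ (mem_of_mem_erase (hT hs)))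
        (fun hjT => notMem_erase j _ (hT hjT))
      linarith [(abs_le.1 hlfc).2])
    (fun _ x => ν (linearForm s x) - 1) (fun j p x => A j x * B j (Function.update x s p))
    (fun j _ p x => by
      rw [abs_mul]
      exact mul_le_mul (hA j x) (hB j _) (abs_nonneg _) ((abs_nonneg _).trans (hA j x)))
    (fun j hj p => dependsOn_mul_comp_update (ne_of_mem_erase hj) (hAi j) (hBi j) p)
  rw [avg_mul_coordAvg_mul_coordAvg (dependsOn_comp_linearForm s fun z => ν z - 1)]
  simp only [prod_mul_distrib, hcard] at hgcs
  refine le_of_pow_le_pow_left₀ (by positivity) hτ (hgcs.trans (le_trans ?_ hητ))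
  gcongr
  exact abs_avg_cubeProd_sub_one_mul_prod_doubledWeight_le h s S₁ S₂

lemma exists_forall_strongLinearForms (k : ℕ) {τ : ℝ} (hτ : 0 < τ) :
    ∃ ρ : ℝ, 0 < ρ ∧ ∀ (N : ℕ) [NeZero N] (ν : ZMod N → ℝ) (η : ℝ), η ≤ ρ →
      kLinearFormsCondition k N ν η → StrongLinearForms k ν τ := by
  refine ⟨min 1 (τ ^ 2 ^ (k - 1) / (2 ^ (2 ^ (k - 1) - 1) * 2 ^ 2 ^ (k - 1))), by positivity,
    fun N _ ν η hη h => strongLinearForms_of_le hτ.le h (hη.trans (min_le_left _ _)) ?_⟩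
  rw [← mul_assoc]
  exact (le_div_iff₀' (by positivity)).1 (hη.trans (min_le_right _ _))

end FormFactor

/-! ### The relative counting lemma -/

section Densification
variable {Ω : Type*} [Fintype Ω]

lemma abs_sub_max_min_le {g v : ℝ} (hg : |g| ≤ v) : |g - max (-1) (min 1 g)| ≤ |v - 1| := by
  have hv := le_abs_self (v - 1)
  obtain ⟨hg₁, hg₂⟩ := abs_le.1 hg
  obtain h | h := le_total 1 g
  · rw [min_eq_left h, max_eq_right (by norm_num), abs_of_nonneg (by linarith)]
    linarith
  · rw [min_eq_right h]
    obtain h' | h' := le_total (-1) g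
    · rw [max_eq_right h', sub_self, abs_zero]
      exact abs_nonneg _
    · rw [max_eq_left h', abs_of_nonpos (by linarith)]
      linarith

/-- Off the truncation the square is controlled by the deviation of the majorant from `1`. -/
lemma sub_sq_le_of_abs_le {g g' v : ℝ} (hg : |g| ≤ v) (hg' : |g'| ≤ 1) :
    (g - g') ^ 2 ≤ 2 * ((max (-1) (min 1 g) - g') / 2 * (g - g')) +
      ((v - 1) ^ 2 + 2 * |v - 1|) := by
  have hdiff : |g - g'| ≤ |v - 1| + 2 := by
    linarith [abs_sub g g', le_abs_self (v - 1)]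
  have htruncate : (g - max (-1) (min 1 g)) * (g - g') ≤ |v - 1| * (|v - 1| + 2) := by
    refine (le_abs_self _).trans ?_
    rw [abs_mul]
    exact mul_le_mul (abs_sub_max_min_le hg) hdiff (abs_nonneg _) (abs_nonneg _)
  rw [← sq_abs (v - 1)]
  linarith

lemma avg_sub_sq_le_of_abs_le [Nonempty Ω] {V G G' : Ω → ℝ} {θ : ℝ} (hθ : 0 ≤ θ)
    (hG : ∀ x, |G x| ≤ V x) (hG' : ∀ x, |G' x| ≤ 1) (hV : (avg fun x => (V x - 1) ^ 2) ≤ θ)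
    (hV' : (avg fun x => (V x - 1) ^ 2) ≤ θ ^ 2)
    (hGG' : (avg fun x => (max (-1) (min 1 (G x)) - G' x) / 2 * (G x - G' x)) ≤ θ) :
    (avg fun x => (G x - G' x) ^ 2) ≤ 5 * θ := by
  have hV₁ : (avg fun x => |V x - 1|) ≤ θ := by
    refine le_of_pow_le_pow_left₀ two_ne_zero hθ ((avg_sq_le _).trans ?_)
    simpa only [sq_abs] using hV'
  have hsq := avg_mono fun x => sub_sq_le_of_abs_le (hG x) (hG' x)
  rw [avg_add, avg_const_mul, avg_add, avg_const_mul] at hsq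
  linarith

lemma avg_mul_sub_sq_le {w G G' : Ω → ℝ} {θ : ℝ}
    (h₁ : |avg fun x => (w x - 1) * (G x * G x)| ≤ θ)
    (h₂ : |avg fun x => (w x - 1) * (G x * G' x)| ≤ θ)
    (h₃ : |avg fun x => (w x - 1) * (G' x * G' x)| ≤ θ) :
    (avg fun x => w x * (G x - G' x) ^ 2) ≤ (avg fun x => (G x - G' x) ^ 2) + 4 * θ := by
  have hexpand : (avg fun x => w x * (G x - G' x) ^ 2) =
      (avg fun x => (w x - 1) * (G x * G x)) - 2 * (avg fun x => (w x - 1) * (G x * G' x)) +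
        (avg fun x => (w x - 1) * (G' x * G' x)) + avg fun x => (G x - G' x) ^ 2 := by
    rw [← avg_const_mul, ← avg_sub, ← avg_add, ← avg_add]
    congr 1 with x
    ring
  linarith [(abs_le.1 h₁).2, (abs_le.1 h₂).1, (abs_le.1 h₃).2]

variable {ι X : Type*} [Fintype ι] [DecidableEq ι] [Fintype X] [Nonempty X] {s : ι}

lemma avg_coordAvg (s : ι) (F : (ι → X) → ℝ) : avg (coordAvg s F) = avg F :=
  (avg_eq_avg_update s F).symm

lemma avg_coordAvg_mul_self (s : ι) (F : (ι → X) → ℝ) :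
    (avg fun x => coordAvg s F x * coordAvg s F x) =
      avg fun q : (ι → X) × (ι → X) => F q.1 * F (Function.update q.1 s (q.2 s)) := by
  have hmul := avg_mul_coordAvg_mul_coordAvg (s := s) (K := fun _ => 1) (dependsOn_const 1 |>.mono
    (Set.empty_subset _)) F F
  simp only [one_mul] at hmul
  rw [hmul, ← avg_eq_avg_apply_right s
    (H := fun q => F q.2.1 * F (Function.update q.2.1 s q.1)) fun _ _ _ _ _ => rfl]
  simp only [avg_prod, avg_const]

/-- Averaging over the coordinate `s` makes the majorant `V` essentially bounded, so the difference
of the averages can be tested against its own truncation. -/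
lemma avg_coordAvg_sub_coordAvg_sq_le {V W W' : (ι → X) → ℝ} {θ : ℝ} (hθ : 0 ≤ θ)
    (hW : ∀ x, |W x| ≤ V x) (hW' : ∀ x, |W' x| ≤ 1)
    (hV : (avg fun x => (coordAvg s V x - 1) ^ 2) ≤ θ)
    (hV' : (avg fun x => (coordAvg s V x - 1) ^ 2) ≤ θ ^ 2)
    (hWW' : ∀ g : (ι → X) → ℝ, (∀ x, |g x| ≤ 1) → DependsOn g {s}ᶜ →
      |(avg fun x => g x * W x) - avg fun x => g x * W' x| ≤ θ) :
    (avg fun x => (coordAvg s W x - coordAvg s W' x) ^ 2) ≤ 5 * θ := by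
  have hG' (x : ι → X) : |coordAvg s W' x| ≤ 1 := abs_avg_le fun _ => hW' _
  set g : (ι → X) → ℝ := fun x =>
    (max (-1) (min 1 (coordAvg s W x)) - coordAvg s W' x) / 2 with hg
  have hgs : DependsOn g {s}ᶜ := dependsOn_compl_singleton fun x t => by
    simp only [hg, apply_update_of_dependsOn (dependsOn_coordAvg s _)]
  have hg₁ (x : ι → X) : |g x| ≤ 1 := by
    have hle : max (-1) (min 1 (coordAvg s W x)) ≤ 1 := max_le (by norm_num) (min_le_left _ _)
    have hge : -1 ≤ max (-1) (min 1 (coordAvg s W x)) := le_max_left _ _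
    obtain ⟨hG'₁, hG'₂⟩ := abs_le.1 (hG' x)
    exact abs_le.2 ⟨by simp only [hg]; linarith, by simp only [hg]; linarith⟩
  refine avg_sub_sq_le_of_abs_le hθ (abs_coordAvg_le hW) hG' hV hV' ?_
  simp only [mul_sub, avg_sub]
  rw [avg_mul_coordAvg hgs, avg_mul_coordAvg hgs]
  exact (le_abs_self _).trans (hWW' g hg₁ hgs)

lemma abs_avg_mul_sub_avg_mul_le {w a a' W W' : (ι → X) → ℝ} {B τ : ℝ} (hτ : 0 ≤ τ)
    (ha : DependsOn a {s}ᶜ) (haw : ∀ x, |a x| ≤ w x) (hw : avg w ≤ B)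
    (hD : B * (avg fun x => w x * (coordAvg s W x - coordAvg s W' x) ^ 2) ≤ τ ^ 2)
    (hrest : |avg fun x => (a x - a' x) * W' x| ≤ τ) :
    |(avg fun x => a x * W x) - avg fun x => a' x * W' x| ≤ 2 * τ := by
  have hw₀ (x : ι → X) : 0 ≤ w x := (abs_nonneg _).trans (haw x)
  have hmain : |avg fun x => a x * (coordAvg s W x - coordAvg s W' x)| ≤ τ := by
    refine abs_le_of_sq_le_sq ((avg_mul_sq_le_of_abs_le w a _ haw).trans (le_trans ?_ hD)) hτ
    exact mul_le_mul_of_nonneg_right hw (avg_nonneg fun x => mul_nonneg (hw₀ x) (sq_nonneg _))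
  have hsplit : (avg fun x => a x * W x) - (avg fun x => a' x * W' x) =
      (avg fun x => a x * (coordAvg s W x - coordAvg s W' x)) +
        avg fun x => (a x - a' x) * W' x := by
    simp only [mul_sub, sub_mul, avg_sub, avg_mul_coordAvg ha]
    ring
  rw [hsplit, two_mul]
  exact (abs_add_le _ _).trans (add_le_add hmain hrest)

end Densification

section Counting
variable {k N : ℕ}

lemma prod_formFactor_insert {s : Fin k} {S : Finset (Fin k)} (h : ZMod N → ℝ)
    (u : Fin k → (Fin k → ZMod N) → ℝ) (x : Fin k → ZMod N) :
    ∏ j, formFactor (insert s S) h u j x =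
      h (linearForm s x) * ∏ j ∈ univ.erase s, formFactor S h u j x := by
  rw [← mul_prod_erase univ _ (mem_univ s)]
  congr 1
  · simp [formFactor]
  · refine prod_congr rfl fun j hj => ?_
    simp [formFactor, ne_of_mem_erase hj]

lemma prod_formFactor_update {s : Fin k} {S : Finset (Fin k)} (hs : s ∉ S) (h : ZMod N → ℝ)
    (u : Fin k → (Fin k → ZMod N) → ℝ) (g : (Fin k → ZMod N) → ℝ) (x : Fin k → ZMod N) :
    ∏ j, formFactor S h (Function.update u s g) j x =
      g x * ∏ j ∈ univ.erase s, formFactor S h u j x := by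
  rw [← mul_prod_erase univ _ (mem_univ s)]
  congr 1
  · simp [formFactor, hs]
  · refine prod_congr rfl fun j hj => ?_
    simp [formFactor, ne_of_mem_erase hj]

lemma prod_erase_formFactor_one {s : Fin k} {S : Finset (Fin k)} (hs : s ∉ S) (ν : ZMod N → ℝ)
    (x : Fin k → ZMod N) :
    ∏ j ∈ univ.erase s, formFactor S ν 1 j x = ∏ j ∈ S, ν (linearForm j x) := by
  simp only [formFactor, Pi.one_apply]
  rw [prod_ite_mem, inter_eq_right.2]
  exact fun j hj => mem_erase.2 ⟨ne_of_mem_of_not_mem hj hs, mem_univ j⟩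

variable [NeZero N] {ν : ZMod N → ℝ} {η : ℝ}

lemma abs_avg_prod_comp_linearForm_sub_one_le (h : kLinearFormsCondition k N ν η)
    (S : Finset (Fin k)) :
    |(avg fun x : Fin k → ZMod N => ∏ j ∈ S, ν (linearForm j x)) - 1| ≤ η := by
  have hlfc := abs_avg_prod_linearForm_sub_one_le h (S ×ˢ {∅}) (by simp)
  rw [avg_prod] at hlfc
  simpa [prod_product, avg_const] using hlfc

lemma avg_coordAvg_prod_sub_one_sq_le (h : kLinearFormsCondition k N ν η) {s : Fin k}
    {S : Finset (Fin k)} (hs : s ∉ S) :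
    (avg fun x => (coordAvg s (fun x => ∏ j ∈ S, ν (linearForm j x)) x - 1) ^ 2) ≤ 3 * η := by
  set W : (Fin k → ZMod N) → ℝ := fun x => ∏ j ∈ S, ν (linearForm j x) with hW
  have hmean : |avg W - 1| ≤ η := abs_avg_prod_comp_linearForm_sub_one_le h S
  have hsecond : (avg fun x => coordAvg s W x * coordAvg s W x) - 1 ≤ η := by
    have hlfc := abs_avg_prod_linearForm_sub_one_le h (S ×ˢ {∅, {s}}) (by
      rintro ⟨j, V⟩ hjV
      obtain ⟨hj, hV⟩ := mem_product.1 hjV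
      obtain rfl | rfl : V = ∅ ∨ V = {s} := by simpa using hV
      exacts [notMem_empty j, notMem_singleton.2 (ne_of_mem_of_not_mem hj hs)])
    rw [avg_coordAvg_mul_self]
    refine le_of_eq_of_le ?_ ((le_abs_self _).trans hlfc)
    congr 2 with q
    rw [prod_product, hW, ← prod_mul_distrib]
    refine prod_congr rfl fun j _ => ?_
    rw [prod_pair (singleton_ne_empty s).symm]
    simp [piecewise_singleton]
  have hexpand : (avg fun x => (coordAvg s W x - 1) ^ 2) =
      (avg fun x => coordAvg s W x * coordAvg s W x) - 2 * avg W + 1 := by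
    rw [← avg_coordAvg s W, ← avg_const_mul, ← avg_sub, ← avg_const (α := Fin k → ZMod N) 1,
      ← avg_add]
    congr 1 with x
    rw [avg_const]
    ring
  linarith [(abs_le.1 hmean).1]

/-- `CountingLE S f f' τ` says that replacing `f` by `f'` in the forms in `S` changes the averages
over the linear forms by at most `τ`, whatever the bounded test functions on the other forms. -/
def CountingLE (S : Finset (Fin k)) (f f' : ZMod N → ℝ) (τ : ℝ) : Prop :=
  ∀ u : Fin k → (Fin k → ZMod N) → ℝ, (∀ j x, |u j x| ≤ 1) → (∀ j, DependsOn (u j) {j}ᶜ) →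
    |(avg fun x => ∏ j, formFactor S f u j x) - avg fun x => ∏ j, formFactor S f' u j x| ≤ τ

lemma CountingLE.abs_avg_mul_prod_sub_le {s : Fin k} {S : Finset (Fin k)} (hs : s ∉ S)
    {f f' : ZMod N → ℝ} {τ : ℝ} (h : CountingLE S f f' τ) {u : Fin k → (Fin k → ZMod N) → ℝ}
    (hu : ∀ j x, |u j x| ≤ 1) (hui : ∀ j, DependsOn (u j) {j}ᶜ) {g : (Fin k → ZMod N) → ℝ}
    (hg : ∀ x, |g x| ≤ 1) (hgs : DependsOn g {s}ᶜ) :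
    |(avg fun x => g x * ∏ j ∈ univ.erase s, formFactor S f u j x) -
      avg fun x => g x * ∏ j ∈ univ.erase s, formFactor S f' u j x| ≤ τ := by
  have hcount := h (Function.update u s g)
    ((Function.forall_update_iff u fun _ v => ∀ x, |v x| ≤ 1).2 ⟨hg, fun j _ => hu j⟩)
    ((Function.forall_update_iff u fun j v => DependsOn v {j}ᶜ).2 ⟨hgs, fun j _ => hui j⟩)
  simpa only [prod_formFactor_update hs] using hcount

lemma abs_avg_sub_mul_prod_le {r : ℕ} (hr : 1 ≤ r) (s : Fin (r + 1)) {f f' : ZMod N → ℝ} {c : ℝ}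
    (hN : CutNormLE (Fin r) r.factorial (fun z => f z - f' z) c)
    {v : Fin (r + 1) → (Fin (r + 1) → ZMod N) → ℝ} (hv : ∀ j x, |v j x| ≤ 1)
    (hvi : ∀ j, DependsOn (v j) {j}ᶜ) :
    |avg fun x => (f (linearForm s x) - f' (linearForm s x)) * ∏ j ∈ univ.erase s, v j x| ≤ c := by
  have : Nonempty (Fin r) := ⟨⟨0, hr⟩⟩
  have hle := avg_mul_prod_le_of_cutNormLE hr s hN v hv hvi
  have hge := avg_mul_prod_le_of_cutNormLE hr s hN.neg v hv hvi
  simp only [neg_mul, avg_neg] at hge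
  exact abs_le.2 ⟨by linarith, hle⟩

/-- **Densification**: averaged over the coordinate unseen by the form `s`, the product of the other
factors is essentially bounded, so that it can be compared with its dense counterpart by testing
against bounded functions. -/
lemma CountingLE.insert {r : ℕ} (hr : 1 ≤ r) {s : Fin (r + 1)} {S : Finset (Fin (r + 1))}
    (hs : s ∉ S) {f f' : ZMod N → ℝ} {τ θ : ℝ} (hτ : 0 ≤ τ) (hθ : 0 ≤ θ) (hθτ : 18 * θ ≤ τ ^ 2)
    (hf : ∀ z, 0 ≤ f z ∧ f z ≤ ν z) (hf' : ∀ z, 0 ≤ f' z ∧ f' z ≤ 1)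
    (h : kLinearFormsCondition (r + 1) N ν η) (hη₁ : η ≤ 1) (hη₂ : 3 * η ≤ θ)
    (hη₃ : 3 * η ≤ θ ^ 2) (hν : StrongLinearForms (r + 1) ν θ)
    (hN : CutNormLE (Fin r) r.factorial (fun z => f z - f' z) τ) (hS : CountingLE S f f' θ) :
    CountingLE (insert s S) f f' (2 * τ) := by
  intro u hu hui
  have hfν (z : ZMod N) : |f z| ≤ ν z := (abs_of_nonneg (hf z).1).trans_le (hf z).2
  have hf'1 (z : ZMod N) : |f' z| ≤ 1 := (abs_of_nonneg (hf' z).1).trans_le (hf' z).2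
  have hfu := abs_formFactor_le (S := S) hfν hu
  have hf'u (j x) : |formFactor S f' u j x| ≤ 1 := by
    simpa [formFactor] using abs_formFactor_le (S := S) hf'1 hu j x
  have hf'u' (j x) : |formFactor S f' u j x| ≤ formFactor ∅ ν 1 j x := by
    simpa [formFactor] using hf'u j x
  have hfi := dependsOn_formFactor S f hui
  have hf'i := dependsOn_formFactor S f' hui
  have hsq := avg_coordAvg_prod_sub_one_sq_le h hs
  have hD := avg_coordAvg_sub_coordAvg_sq_le (s := s) hθ
    (W := fun x => ∏ j ∈ univ.erase s, formFactor S f u j x)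
    (W' := fun x => ∏ j ∈ univ.erase s, formFactor S f' u j x)
    (fun x => by
      rw [abs_prod, ← prod_erase_formFactor_one hs]
      exact prod_le_prod (fun _ _ => abs_nonneg _) fun j _ => hfu j x)
    (fun x => by
      rw [abs_prod]
      exact prod_le_one (fun _ _ => abs_nonneg _) fun j _ => hf'u j x)
    (hsq.trans hη₂) (hsq.trans hη₃)
    (fun g hg hgs => hS.abs_avg_mul_prod_sub_le hs hu hui hg hgs)
  have hνD := avg_mul_sub_sq_le (hν s S S _ _ hfu hfu hfi hfi) (hν s S ∅ _ _ hfu hf'u' hfi hf'i)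
    (hν s ∅ ∅ _ _ hf'u' hf'u' hf'i hf'i)
  have hmean := abs_avg_prod_comp_linearForm_sub_one_le h {s}
  simp only [prod_singleton] at hmean
  simp only [prod_formFactor_insert]
  exact abs_avg_mul_sub_avg_mul_le hτ (dependsOn_comp_linearForm s f) (fun x => hfν _)
    (B := 2) (by linarith [(abs_le.1 hmean).2]) (by linarith)
    (abs_avg_sub_mul_prod_le hr s hN hf'u hf'i)

theorem exists_forall_countingLE {r : ℕ} (hr : 1 ≤ r) (S : Finset (Fin (r + 1))) {τ : ℝ}
    (hτ : 0 < τ) :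
    ∃ ρ : ℝ, 0 < ρ ∧ ∀ (N : ℕ) [NeZero N] (ν f f' : ZMod N → ℝ) (η : ℝ), η ≤ ρ →
      (∀ z, 0 ≤ f z ∧ f z ≤ ν z) → (∀ z, 0 ≤ f' z ∧ f' z ≤ 1) →
      kLinearFormsCondition (r + 1) N ν η →
      CutNormLE (Fin r) r.factorial (fun z => f z - f' z) ρ → CountingLE S f f' τ := by
  induction S using Finset.induction_on generalizing τ with
  | empty =>
    refine ⟨1, one_pos, fun N _ ν f f' η _ _ _ _ _ u _ _ => ?_⟩
    simpa [formFactor] using hτ.le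
  | insert s S hs ih =>
    set θ : ℝ := (τ / 2) ^ 2 / 18 with hθ
    have hθ₀ : 0 < θ := by positivity
    obtain ⟨ρ₁, hρ₁, hcount⟩ := ih hθ₀
    obtain ⟨ρ₂, hρ₂, hstrong⟩ := exists_forall_strongLinearForms (r + 1) hθ₀
    refine ⟨min (min ρ₁ ρ₂) (min (min 1 (τ / 2)) (min (θ / 3) (θ ^ 2 / 3))), by positivity,
      fun N _ ν f f' η hη hf hf' h hN => ?_⟩
    simp only [le_min_iff] at hη
    obtain ⟨⟨hη₁, hη₂⟩, ⟨hη₃, -⟩, hη₄, hη₅⟩ := hη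
    rw [← mul_div_cancel₀ τ two_ne_zero]
    exact CountingLE.insert hr hs (by positivity) hθ₀.le (by linarith) hf hf' h hη₃ (by linarith)
      (by linarith) (hstrong N ν η hη₂ h)
      (hN.mono ((min_le_right _ _).trans ((min_le_left _ _).trans (min_le_right _ _))))
      (hcount N ν f f' η hη₁ hf hf' h (hN.mono ((min_le_left _ _).trans (min_le_left _ _))))

lemma CountingLE.abs_progressionAvg_sub_le (hk : 2 ≤ k) {f f' : ZMod N → ℝ} {τ : ℝ}
    (h : CountingLE (univ : Finset (Fin k)) f f' τ) :
    |progressionAvg k f - progressionAvg k f'| ≤ τ := by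
  simpa [formFactor, avg_prod_linearForm hk] using h 0 (by simp) fun _ _ _ _ => rfl

end Counting

end RelativeSzemeredi

open RelativeSzemeredi

/-- **Relative Szemerédi theorem.** For every `k ≥ 3` and `δ > 0` there exist `c > 0`,
`η > 0` and `N₀` such that for all `N ≥ N₀`: if `ν : ZMod N → ℝ≥0` satisfies the
`k`-linear forms condition within `η` and `0 ≤ f ≤ ν` pointwise with `E[f] ≥ δ`, then
`E[f(x) f(x+d) ⋯ f(x+(k-1)d) | x, d ∈ ZMod N] ≥ c`. -/
theorem relative_szemeredi (k : ℕ) (hk : 3 ≤ k) (δ : ℝ) (hδ : 0 < δ) :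
    ∃ c : ℝ, 0 < c ∧ ∃ η : ℝ, 0 < η ∧ ∃ N₀ : ℕ, ∀ N : ℕ, N₀ ≤ N → ∀ [NeZero N],
      ∀ ν : ZMod N → ℝ, (∀ x, 0 ≤ ν x) → kLinearFormsCondition k N ν η →
      ∀ f : ZMod N → ℝ, (∀ x, 0 ≤ f x ∧ f x ≤ ν x) → δ ≤ avg f →
      c ≤ avg (fun p : ZMod N × ZMod N =>
        ∏ i ∈ Finset.range k, f (p.1 + (i : ZMod N) * p.2)) := by
  obtain ⟨r, rfl⟩ := Nat.exists_eq_add_of_le' (show 1 ≤ k by lia)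
  have hr : 2 ≤ r := by lia
  have : Nonempty (Fin r) := ⟨⟨0, by lia⟩⟩
  obtain ⟨c₀, hc₀, hdense⟩ := szemeredi (k := r + 1) (by lia) (half_pos hδ)
  obtain ⟨ρ, hρ, hcount⟩ := exists_forall_countingLE (show 1 ≤ r by lia) univ (half_pos hc₀)
  obtain ⟨c₁, hc₁, hmodel⟩ := exists_dense_model (lt_min hρ (half_pos hδ))
  obtain ⟨ρ', hρ', hcut⟩ := exists_forall_cutNormLE_sub_one hr hc₁
  refine ⟨c₀ / 2, half_pos hc₀, min ρ ρ', lt_min hρ hρ', 0, fun N _ _ ν _ hν f hf hδf => ?_⟩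
  obtain ⟨f', hf', hff'⟩ :=
    hmodel (Fin r) r.factorial N ν f hf (hcut N ν _ (min_le_right _ _) hν)
  have hδf' : δ / 2 ≤ avg f' := by
    have hmean := (hff'.mono (min_le_right _ _)).avg_le
    rw [avg_sub] at hmean
    linarith
  have hclose := (hcount N ν f f' _ (min_le_left _ _) hf hf' hν
    (hff'.mono (min_le_left _ _))).abs_progressionAvg_sub_le (by lia)
  change c₀ / 2 ≤ progressionAvg (r + 1) f
  linarith [hdense N f' hf' hδf', (abs_le.1 hclose).1]
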